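/- arXiv:0907.5230 — 2 statements merged into one kernel-verified Lean document; each statement's English description precedes it below -/
import Mathlib

section
/- For every θ ∈ (0,1) there exists a constant K(θ) > 0, depending only on θ and on the nonlinearity g (and not on the domain Ω or on the flow u), with the following property: if the explosion problem admits a positive classical solution at some parameter λ₁ > 0, then for every λ₀ ∈ (0, θ λ₁] there exists a nonnegative classical solution φ₀ of the explosion problem at parameter λ₀ satisfying 0 ≤ φ₀(x) ≤ K(θ) for all x ∈ Ω. -/
open Set MeasureTheory
open scoped RealInnerProductSpace

noncomputable section

/-- The Laplacian of a real-valued function on Euclidean space, computed as the sum of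
the second partial derivatives in the coordinate directions. -/
def lapl {n : ℕ} (φ : EuclideanSpace ℝ (Fin n) → ℝ) (x : EuclideanSpace ℝ (Fin n)) : ℝ :=
  ∑ i : Fin n, fderiv ℝ (fun y => fderiv ℝ φ y (EuclideanSpace.single i 1)) x
    (EuclideanSpace.single i 1)

/-- The divergence of a vector field on Euclidean space. -/
def dvg {n : ℕ} (u : EuclideanSpace ℝ (Fin n) → EuclideanSpace ℝ (Fin n))
    (x : EuclideanSpace ℝ (Fin n)) : ℝ :=
  ∑ i : Fin n, fderiv ℝ (fun y => u y i) x (EuclideanSpace.single i 1)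

/-- A classical solution of the explosion problem `-Δφ + ⟨u, ∇φ⟩ = λ g(φ)` in `Ω`,
vanishing on `∂Ω`: `C²` in `Ω`, continuous on the closure of `Ω`. -/
def IsClassicalSol {n : ℕ} (Ω : Set (EuclideanSpace ℝ (Fin n)))
    (u : EuclideanSpace ℝ (Fin n) → EuclideanSpace ℝ (Fin n)) (g : ℝ → ℝ) (lam : ℝ)
    (φ : EuclideanSpace ℝ (Fin n) → ℝ) : Prop :=
  (∀ x ∈ Ω, ContDiffAt ℝ 2 φ x) ∧ ContinuousOn φ (closure Ω) ∧
  (∀ x ∈ Ω, -lapl φ x + ⟪u x, gradient φ x⟫ = lam * g (φ x)) ∧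
  (∀ x ∈ frontier Ω, φ x = 0)

/-- A nonnegative classical solution. -/
def IsNonnegSol {n : ℕ} (Ω : Set (EuclideanSpace ℝ (Fin n)))
    (u : EuclideanSpace ℝ (Fin n) → EuclideanSpace ℝ (Fin n)) (g : ℝ → ℝ) (lam : ℝ)
    (φ : EuclideanSpace ℝ (Fin n) → ℝ) : Prop :=
  IsClassicalSol Ω u g lam φ ∧ ∀ x ∈ Ω, 0 ≤ φ x

/-- A minimal nonnegative classical solution: one that lies below every nonnegative
classical solution at the same parameter. -/
def IsMinimalSol {n : ℕ} (Ω : Set (EuclideanSpace ℝ (Fin n)))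
    (u : EuclideanSpace ℝ (Fin n) → EuclideanSpace ℝ (Fin n)) (g : ℝ → ℝ) (lam : ℝ)
    (φ : EuclideanSpace ℝ (Fin n) → ℝ) : Prop :=
  IsNonnegSol Ω u g lam φ ∧ ∀ v, IsNonnegSol Ω u g lam v → ∀ x ∈ Ω, φ x ≤ v x


section helpers
open Filter Topology
set_option linter.all false
set_option maxSynthPendingDepth 3
set_option autoImplicit false




section core
variable {V : Type*} [NormedAddCommGroup V] [InnerProductSpace ℝ V] [FiniteDimensional ℝ V]
  [MeasurableSpace V] [BorelSpace V]

def JJ (V : Type*) [NormedAddCommGroup V] [InnerProductSpace ℝ V] : V →L[ℝ] (V →L[ℝ] ℝ) :=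
  LinearMap.mkContinuous₂ (innerₗ V) 1 (by
    intro x y; simpa using abs_real_inner_le_norm x y)

lemma JJ_apply (x y : V) : JJ V x y = ⟪x, y⟫ := rfl

lemma JJ_norm_le (x : V) : ‖JJ V x‖ ≤ ‖x‖ := by
  refine ContinuousLinearMap.opNorm_le_bound _ (norm_nonneg _) (fun y => ?_)
  rw [JJ_apply]; exact norm_inner_le_norm x y

lemma JJ_norm : ‖JJ V‖ ≤ 1 := by
  refine ContinuousLinearMap.opNorm_le_bound _ zero_le_one (fun y => ?_)
  simpa using JJ_norm_le y

/-- heat kernel -/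
def hG (t : ℝ) (z : V) : ℝ :=
  (4 * Real.pi * t) ^ (-((Module.finrank ℝ V : ℝ) / 2)) * Real.exp (-‖z‖ ^ 2 / (4 * t))

/-- dominating kernel -/
def hQ (t : ℝ) (z : V) : ℝ :=
  (4 * Real.pi * t) ^ (-((Module.finrank ℝ V : ℝ) / 2)) * Real.exp (-‖z‖ ^ 2 / (8 * t))

def hD (t : ℝ) (z : V) : V →L[ℝ] ℝ :=
  (-(1 / (2 * t)) * hG t z) • JJ V z

def hH (t : ℝ) (z : V) : V →L[ℝ] (V →L[ℝ] ℝ) :=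
  (-(1 / (2 * t))) • ((hD t z).smulRight (JJ V z) + hG t z • JJ V)

lemma hG_nonneg {t : ℝ} (ht : 0 < t) (z : V) : 0 ≤ hG t z := by
  unfold hG; positivity

lemma hQ_nonneg {t : ℝ} (ht : 0 < t) (z : V) : 0 ≤ hQ t z := by
  unfold hQ; positivity

lemma hG_eq {t : ℝ} (ht : 0 < t) (z : V) :
    hG t z = hQ t z * Real.exp (-(‖z‖ ^ 2 / (8 * t))) := by
  unfold hG hQ
  rw [mul_assoc (_ ^ _), ← Real.exp_add]
  congr 2
  field_simp
  ring

lemma int_exp (b : ℝ) (hb : 0 < b) : Integrable (fun z : V => Real.exp (-b * ‖z‖ ^ 2)) := by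
  by_contra h
  have h1 := integral_undef h
  rw [GaussianFourier.integral_rexp_neg_mul_sq_norm hb] at h1
  have : 0 < (Real.pi / b) ^ ((Module.finrank ℝ (V) : ℝ) / 2) := by positivity
  linarith

lemma hG_int {t : ℝ} (ht : 0 < t) : Integrable (hG (V := V) t) := by
  unfold hG
  refine Integrable.const_mul ?_ _
  convert int_exp (V := V) (1 / (4 * t)) (by positivity) using 3
  ring

lemma hQ_int {t : ℝ} (ht : 0 < t) : Integrable (hQ (V := V) t) := by
  unfold hQ
  refine Integrable.const_mul ?_ _
  convert int_exp (V := V) (1 / (8 * t)) (by positivity) using 3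
  ring

lemma hG_integral {t : ℝ} (ht : 0 < t) : ∫ z : V, hG t z = 1 := by
  unfold hG
  rw [integral_const_mul]
  have := GaussianFourier.integral_rexp_neg_mul_sq_norm (V := V) (b := 1 / (4 * t)) (by positivity)
  have h2 : (fun z : V => Real.exp (-‖z‖ ^ 2 / (4 * t))) = fun z => Real.exp (-(1 / (4 * t)) * ‖z‖ ^ 2) := by
    ext z; congr 1; ring
  rw [h2, this]
  have h3 : Real.pi / (1 / (4 * t)) = 4 * Real.pi * t := by field_simp
  rw [h3, ← Real.rpow_add (by positivity)]
  simp

def cQ (V : Type*) [NormedAddCommGroup V] [InnerProductSpace ℝ V] : ℝ := 2 ^ ((Module.finrank ℝ V : ℝ) / 2)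

lemma cQ_pos : 0 < cQ V := by unfold cQ; positivity

lemma hQ_integral {t : ℝ} (ht : 0 < t) : ∫ z : V, hQ t z = cQ V := by
  unfold hQ cQ
  rw [integral_const_mul]
  have := GaussianFourier.integral_rexp_neg_mul_sq_norm (V := V) (b := 1 / (8 * t)) (by positivity)
  have h2 : (fun z : V => Real.exp (-‖z‖ ^ 2 / (8 * t))) = fun z => Real.exp (-(1 / (8 * t)) * ‖z‖ ^ 2) := by
    ext z; congr 1; ring
  rw [h2, this]
  have h3 : Real.pi / (1 / (8 * t)) = 2 * (4 * Real.pi * t) := by field_simp; ring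
  rw [h3, Real.mul_rpow (x := 2) (y := 4 * Real.pi * t) (by positivity) (by positivity), mul_left_comm (_ ^ _),
    ← Real.rpow_add (by positivity)]
  simp

/-- `hG` bounded by `hQ`. -/
lemma hG_le {t : ℝ} (ht : 0 < t) (z : V) : hG t z ≤ hQ t z := by
  rw [hG_eq ht]
  refine mul_le_of_le_one_right (hQ_nonneg ht z) ?_
  rw [Real.exp_le_one_iff]; have : 0 ≤ ‖z‖ ^ 2 / (8 * t) := by positivity
  linarith

lemma aux_exp {c X : ℝ} (hX : 0 ≤ X) (hc : 0 ≤ c) {p : ℝ} (h : p ≤ c * (1 + X + X ^ 2 / 2)) :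
    p * Real.exp (-X) ≤ c := by
  have h1 : 1 + X + X ^ 2 / 2 ≤ Real.exp X := by
    exact Real.quadratic_le_exp_of_nonneg hX
  rw [Real.exp_neg, ← div_eq_mul_inv, div_le_iff₀ (Real.exp_pos X)]
  exact h.trans (mul_le_mul_of_nonneg_left h1 hc)

lemma hD_le {t : ℝ} (ht : 0 < t) (z : V) : ‖hD t z‖ ≤ (1 / Real.sqrt t) * hQ t z := by
  unfold hD
  rw [norm_smul, Real.norm_eq_abs, abs_mul, abs_neg, abs_of_pos (by positivity : (0:ℝ) < 1 / (2 * t)),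
    abs_of_nonneg (hG_nonneg ht z)]
  set s := Real.sqrt t with hs
  have hs0 : 0 < s := Real.sqrt_pos.2 ht
  have hts : t = s ^ 2 := (Real.sq_sqrt ht.le).symm
  calc 1 / (2 * t) * hG t z * ‖JJ V z‖ ≤ 1 / (2 * t) * hG t z * ‖z‖ := by
        refine mul_le_mul_of_nonneg_left (JJ_norm_le z) ?_
        have := hG_nonneg ht z; positivity
    _ = (1 / s) * hQ t z * ((‖z‖ / (2 * s)) * Real.exp (-(‖z‖ ^ 2 / (8 * t)))) := by
        rw [hG_eq ht]; rw [hts]; field_simp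
    _ ≤ (1 / s) * hQ t z * 1 := by
        refine mul_le_mul_of_nonneg_left ?_ (mul_nonneg (by positivity) (hQ_nonneg ht z))
        refine aux_exp (by positivity) zero_le_one ?_
        have : ‖z‖ ^ 2 / (8 * t) = (‖z‖ / (2 * s)) ^ 2 / 2 := by rw [hts]; field_simp; ring
        rw [this]
        set r := ‖z‖ / (2 * s)
        nlinarith [sq_nonneg (r - 1), sq_nonneg (r ^ 2)]
    _ = _ := by ring

lemma hH_le' {t : ℝ} (ht : 0 < t) (z : V) :
    ‖hH t z‖ ≤ (1 / t) * ((‖z‖ ^ 2 / (4 * t) + 1 / 2) * hG t z) := by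
  unfold hH
  rw [norm_smul, Real.norm_eq_abs, abs_neg, abs_of_pos (by positivity : (0:ℝ) < 1 / (2 * t))]
  have h1 : ‖(hD t z).smulRight (JJ V z)‖ ≤ (1 / (2 * t) * hG t z * ‖z‖) * ‖z‖ := by
    rw [ContinuousLinearMap.norm_smulRight_apply]
    refine mul_le_mul ?_ (JJ_norm_le z) (norm_nonneg _) ?_
    · unfold hD
      rw [norm_smul, Real.norm_eq_abs, abs_mul, abs_neg,
        abs_of_pos (by positivity : (0:ℝ) < 1 / (2 * t)), abs_of_nonneg (hG_nonneg ht z)]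
      refine mul_le_mul_of_nonneg_left (JJ_norm_le z) ?_
      have := hG_nonneg ht z; positivity
    · have := hG_nonneg ht z; positivity
  have h2 : ‖hG t z • JJ V‖ ≤ hG t z := by
    rw [norm_smul, Real.norm_eq_abs, abs_of_nonneg (hG_nonneg ht z)]
    exact mul_le_of_le_one_right (hG_nonneg ht z) JJ_norm
  calc _ ≤ 1 / (2 * t) * ((1 / (2 * t) * hG t z * ‖z‖) * ‖z‖ + hG t z) := by
        gcongr; exact (norm_add_le _ _).trans (add_le_add h1 h2)
    _ = _ := by field_simp; ring

lemma hH_le {t : ℝ} (ht : 0 < t) (z : V) : ‖hH t z‖ ≤ (2 / t) * hQ t z := by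
  refine (hH_le' ht z).trans ?_
  rw [hG_eq ht]
  calc _ = (1 / t) * hQ t z * ((‖z‖ ^ 2 / (4 * t) + 1 / 2) * Real.exp (-(‖z‖ ^ 2 / (8 * t)))) := by ring
    _ ≤ (1 / t) * hQ t z * 2 := by
        refine mul_le_mul_of_nonneg_left ?_ (mul_nonneg (by positivity) (hQ_nonneg ht z))
        refine aux_exp (by positivity) zero_le_two ?_
        have : ‖z‖ ^ 2 / (4 * t) = 2 * (‖z‖ ^ 2 / (8 * t)) := by field_simp; ring
        rw [this]
        set r := ‖z‖ ^ 2 / (8 * t)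
        nlinarith [sq_nonneg r]
    _ = _ := by ring

lemma sqrt_aux {t a : ℝ} (ht : 0 < t) (ha : 0 ≤ a) :
    Real.sqrt a ≤ t ^ (1/4 : ℝ) * (1 + 8 * (a ^ 2 / (8 * t))) := by
  set s := t ^ (1/4 : ℝ) with hs
  have hs0 : 0 < s := by positivity
  have hts : t = s ^ 4 := by
    rw [hs, ← Real.rpow_natCast, ← Real.rpow_mul ht.le]; norm_num
  have h1 : 8 * (a ^ 2 / (8 * t)) = (a / s ^ 2) ^ 2 := by rw [hts]; field_simp
  rw [h1]
  have : Real.sqrt a = s * Real.sqrt (a / s ^ 2) := by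
    rw [Real.sqrt_div' _ (by positivity), Real.sqrt_sq hs0.le]; field_simp
  rw [this]
  gcongr
  rw [Real.sqrt_le_left (by positivity)]
  have : 0 ≤ a / s ^ 2 := by positivity
  set r := a / s ^ 2
  nlinarith [sq_nonneg (r - 1), sq_nonneg (r^2), sq_nonneg r]

lemma hH_holder {t : ℝ} (ht : 0 < t) (z : V) :
    ‖hH t z‖ * Real.sqrt ‖z‖ ≤ (32 * t ^ (-(3/4) : ℝ)) * hQ t z := by
  calc _ ≤ ((1 / t) * ((‖z‖ ^ 2 / (4 * t) + 1 / 2) * hG t z)) *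
        (t ^ (1/4 : ℝ) * (1 + 8 * (‖z‖ ^ 2 / (8 * t)))) := by
        refine mul_le_mul (hH_le' ht z) (sqrt_aux ht (norm_nonneg z)) (Real.sqrt_nonneg _) ?_
        have := hG_nonneg ht z; positivity
    _ = (t ^ (-(3/4) : ℝ) * hQ t z) * (((2 * (‖z‖ ^ 2 / (8 * t)) + 1 / 2) *
        (1 + 8 * (‖z‖ ^ 2 / (8 * t)))) * Real.exp (-(‖z‖ ^ 2 / (8 * t)))) := by
        have : t ^ (-(3/4) : ℝ) = t ^ (1/4 : ℝ) * (1 / t) := by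
          rw [show (-(3/4) : ℝ) = 1/4 - 1 by norm_num, Real.rpow_sub ht]; simp; rfl
        rw [this, hG_eq ht]
        have : ‖z‖ ^ 2 / (4 * t) = 2 * (‖z‖ ^ 2 / (8 * t)) := by field_simp; ring
        rw [this]
        ring
    _ ≤ (t ^ (-(3/4) : ℝ) * hQ t z) * 32 := by
        refine mul_le_mul_of_nonneg_left ?_ (mul_nonneg (by positivity) (hQ_nonneg ht z))
        refine aux_exp (by positivity) (by norm_num) ?_
        have : 0 ≤ ‖z‖ ^ 2 / (8 * t) := by positivity
        set r := ‖z‖ ^ 2 / (8 * t)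
        nlinarith [sq_nonneg r]
    _ = _ := by ring

lemma hG_holder {t : ℝ} (ht : 0 < t) (z : V) :
    hG t z * Real.sqrt ‖z‖ ≤ (8 * t ^ (1/4 : ℝ)) * hQ t z := by
  calc _ ≤ hG t z * (t ^ (1/4 : ℝ) * (1 + 8 * (‖z‖ ^ 2 / (8 * t)))) := by
        refine mul_le_mul_of_nonneg_left (sqrt_aux ht (norm_nonneg z)) (hG_nonneg ht z)
    _ = (t ^ (1/4 : ℝ) * hQ t z) * ((1 + 8 * (‖z‖ ^ 2 / (8 * t))) *
          Real.exp (-(‖z‖ ^ 2 / (8 * t)))) := by rw [hG_eq ht]; ring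
    _ ≤ (t ^ (1/4 : ℝ) * hQ t z) * 8 := by
        refine mul_le_mul_of_nonneg_left ?_ (mul_nonneg (by positivity) (hQ_nonneg ht z))
        refine aux_exp (by positivity) (by norm_num) ?_
        have : 0 ≤ ‖z‖ ^ 2 / (8 * t) := by positivity
        set r := ‖z‖ ^ 2 / (8 * t)
        nlinarith [sq_nonneg r]
    _ = _ := by ring

lemma hG_hasFDerivAt (t : ℝ) (z : V) : HasFDerivAt (hG t) (hD t z) z := by
  unfold hD hG
  have h1 : HasFDerivAt (fun z : V => ‖z‖ ^ 2) ((2:ℝ) • JJ V z) z := by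
    have := (hasStrictFDerivAt_norm_sq z).hasFDerivAt
    convert this using 1
    ext y; simp [JJ_apply]
  have h2 := (((h1.const_mul (-(1/(4*t)))).exp).const_mul ((4 * Real.pi * t) ^ (-((Module.finrank ℝ V : ℝ) / 2))))
  have e1 : ∀ y : V, -(1 / (4 * t)) * ‖y‖ ^ 2 = -‖y‖ ^ 2 / (4 * t) := fun y => by ring
  simp only [e1] at h2
  refine h2.congr_fderiv ?_
  ext y; simp [JJ_apply]; ring

lemma hD_hasFDerivAt (t : ℝ) (z : V) : HasFDerivAt (hD t) (hH t z) z := by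
  unfold hD
  have h := ((hG_hasFDerivAt t z).const_mul (-(1/(2*t)))).smul ((JJ V).hasFDerivAt (x := z))
  refine h.congr_fderiv ?_
  unfold hH hD
  ext y w; simp [JJ_apply]; ring

lemma hG_cont (t : ℝ) : Continuous (hG (V := V) t) :=
  continuous_iff_continuousAt.2 fun z => (hG_hasFDerivAt t z).continuousAt
lemma hD_cont (t : ℝ) : Continuous (hD (V := V) t) :=
  continuous_iff_continuousAt.2 fun z => (hD_hasFDerivAt t z).continuousAt
lemma hH_cont (t : ℝ) : Continuous (hH (V := V) t) := by
  unfold hH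
  have h1 : Continuous fun z => (hD t z).smulRight (JJ V z) :=
    (ContinuousLinearMap.smulRightL ℝ (V) (V →L[ℝ] ℝ)).continuous₂.comp
      ((hD_cont (V := V) t).prodMk (JJ V).continuous)
  have h2 := hG_cont (V := V) t
  fun_prop

lemma hQ_le_const {t : ℝ} (ht : 0 < t) (z : V) :
    hQ t z ≤ (4 * Real.pi * t) ^ (-((Module.finrank ℝ V : ℝ) / 2)) := by
  unfold hQ
  refine mul_le_of_le_one_right (by positivity) ?_
  rw [Real.exp_le_one_iff, neg_div]
  have : 0 ≤ ‖z‖ ^ 2 / (8 * t) := by positivity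
  linarith

end core


section core2
variable {V : Type*} [NormedAddCommGroup V] [InnerProductSpace ℝ V] [FiniteDimensional ℝ V]
  [MeasurableSpace V] [BorelSpace V]
variable {F : Type*} [NormedAddCommGroup F] [NormedSpace ℝ F] [FiniteDimensional ℝ F]

def cv (h : V → ℝ) (k : V → F) (x : V) : F := ∫ y, h y • k (x - y)

lemma cv_integrable {h : V → ℝ} (hh : Integrable h) {k : V → F} (hk : Continuous k) {M : ℝ}
    (hM : ∀ z, ‖k z‖ ≤ M) (x : V) : Integrable (fun y => h y • k (x - y)) := by
  refine Integrable.mono' (hh.norm.mul_const M) ?_ ?_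
  · exact hh.aestronglyMeasurable.smul (by fun_prop : Continuous fun y => k (x - y)).aestronglyMeasurable
  · refine ae_of_all _ fun y => ?_
    rw [norm_smul]; exact mul_le_mul_of_nonneg_left (hM _) (norm_nonneg _)

lemma cv_hasFDerivAt {h : V → ℝ} (hh : Integrable h) {k : V → F} {k' : V → V →L[ℝ] F}
    (hk : ∀ z, HasFDerivAt k (k' z) z) (hk' : Continuous k') {M M' : ℝ}
    (hM : ∀ z, ‖k z‖ ≤ M) (hM' : ∀ z, ‖k' z‖ ≤ M') (x : V) :
    HasFDerivAt (cv h k) (cv h k' x) x := by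
  have hkc : Continuous k := continuous_iff_continuousAt.2 fun z => (hk z).continuousAt
  unfold cv
  refine hasFDerivAt_integral_of_dominated_of_fderiv_le (F := fun x y => h y • k (x - y))
    (F' := fun x y => h y • k' (x - y)) (bound := fun y => ‖h y‖ * M') univ_mem
    (Eventually.of_forall fun x' => (cv_integrable hh hkc hM x').aestronglyMeasurable)
    (cv_integrable hh hkc hM x) (cv_integrable hh hk' hM' x).aestronglyMeasurable
    (ae_of_all _ fun y x' _ => ?_) (hh.norm.mul_const M') (ae_of_all _ fun y x' _ => ?_)
  · rw [norm_smul]; exact mul_le_mul_of_nonneg_left (hM' _) (norm_nonneg _)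
  · have h1 : HasFDerivAt (fun x : V => x - y) (ContinuousLinearMap.id ℝ V) x' :=
      (hasFDerivAt_id x').sub_const y
    have := ((hk (x' - y)).comp x' h1).const_smul (h y)
    rw [ContinuousLinearMap.comp_id] at this
    exact this

lemma cv_continuous {h : V → ℝ} (hh : Integrable h) {k : V → F} (hk : Continuous k) {M : ℝ}
    (hM : ∀ z, ‖k z‖ ≤ M) : Continuous (cv h k) := by
  unfold cv
  refine continuous_of_dominated (bound := fun y => ‖h y‖ * M)
    (fun x => (cv_integrable hh hk hM x).aestronglyMeasurable)
    (fun x => ae_of_all _ fun y => ?_) (hh.norm.mul_const M) (ae_of_all _ fun y => by fun_prop)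
  rw [norm_smul]; exact mul_le_mul_of_nonneg_left (hM _) (norm_nonneg _)

lemma cv_bound {h : V → ℝ} {B : ℝ} (hB : ∀ x, |h x| ≤ B) {k : V → F} {q : V → ℝ} {a : ℝ}
    (hq : Integrable q) (hk : ∀ z, ‖k z‖ ≤ a * q z) (x : V) :
    ‖cv h k x‖ ≤ B * (a * ∫ z, q z) := by
  unfold cv
  have hB0 : 0 ≤ B := (abs_nonneg _).trans (hB 0)
  have e : ∫ y, B * (a * q (x - y)) = B * (a * ∫ z, q z) := by
    rw [integral_const_mul, integral_const_mul, integral_sub_left_eq_self q volume x]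
  rw [← e]
  refine norm_integral_le_of_norm_le ?_ (ae_of_all _ fun y => ?_)
  · exact ((hq.comp_sub_left x).const_mul a).const_mul B
  · rw [norm_smul]
    exact mul_le_mul (hB y) (hk _) (norm_nonneg _) hB0

variable (h : V → ℝ)

def kM (V : Type*) [NormedAddCommGroup V] [InnerProductSpace ℝ V] (t : ℝ) : ℝ :=
  (4 * Real.pi * t) ^ (-((Module.finrank ℝ V : ℝ) / 2))

lemma hG_bdd {t : ℝ} (ht : 0 < t) (z : V) : ‖hG t z‖ ≤ kM V t := by
  rw [Real.norm_eq_abs, abs_of_nonneg (hG_nonneg ht z)]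
  exact (hG_le ht z).trans (hQ_le_const ht z)
lemma hD_bdd {t : ℝ} (ht : 0 < t) (z : V) : ‖hD t z‖ ≤ (1 / Real.sqrt t) * kM V t :=
  (hD_le ht z).trans (mul_le_mul_of_nonneg_left (hQ_le_const ht z) (by positivity))
lemma hH_bdd {t : ℝ} (ht : 0 < t) (z : V) : ‖hH t z‖ ≤ (2 / t) * kM V t :=
  (hH_le ht z).trans (mul_le_mul_of_nonneg_left (hQ_le_const ht z) (by positivity))

variable {h}

lemma P0_hasFDerivAt (hh : Integrable h) {t : ℝ} (ht : 0 < t) (x : V) :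
    HasFDerivAt (cv h (hG t)) (cv h (hD t) x) x :=
  cv_hasFDerivAt hh (hG_hasFDerivAt t) (hD_cont t) (hG_bdd ht) (hD_bdd ht) x

lemma P1_hasFDerivAt (hh : Integrable h) {t : ℝ} (ht : 0 < t) (x : V) :
    HasFDerivAt (cv h (hD t)) (cv h (hH t) x) x :=
  cv_hasFDerivAt hh (hD_hasFDerivAt t) (hH_cont t) (hD_bdd ht) (hH_bdd ht) x

lemma P0_bound {B : ℝ} (hB : ∀ x, |h x| ≤ B) {t : ℝ} (ht : 0 < t) (x : V) :
    |cv h (hG t) x| ≤ B := by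
  have := cv_bound hB (k := hG t) (a := 1) (hG_int (V := V) ht) (fun z => by
    rw [Real.norm_eq_abs, abs_of_nonneg (hG_nonneg ht z), one_mul]) x
  simpa [hG_integral ht] using this

lemma P1_bound {B : ℝ} (hB : ∀ x, |h x| ≤ B) {t : ℝ} (ht : 0 < t) (x : V) :
    ‖cv h (hD t) x‖ ≤ B * cQ V * (1 / Real.sqrt t) := by
  have := cv_bound hB (k := hD t) (hQ_int (V := V) ht) (hD_le ht) x
  rw [hQ_integral ht] at this
  linarith

lemma P2_bound {B : ℝ} (hB : ∀ x, |h x| ≤ B) {t : ℝ} (ht : 0 < t) (x : V) :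
    ‖cv h (hH t) x‖ ≤ B * cQ V * (2 / t) := by
  have := cv_bound hB (k := hH t) (hQ_int (V := V) ht) (hH_le ht) x
  rw [hQ_integral ht] at this
  linarith

lemma P1_holder (hh : Integrable h) {B : ℝ} (hB : ∀ x, |h x| ≤ B) {t : ℝ} (ht : 0 < t) (x y : V) :
    ‖cv h (hD t) x - cv h (hD t) y‖ ≤ B * cQ V * 2 * t ^ (-(3/4) : ℝ) * Real.sqrt ‖x - y‖ := by
  have hB0 : 0 ≤ B := (abs_nonneg _).trans (hB 0)
  have hc := cQ_pos (V := V)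
  set d := ‖cv h (hD t) x - cv h (hD t) y‖ with hd
  set A := B * cQ V with hA
  have hA0 : 0 ≤ A := by positivity
  have h1 : d ≤ 2 * A * (1 / Real.sqrt t) := by
    refine (norm_sub_le _ _).trans ?_
    have := P1_bound hB ht x; have := P1_bound hB ht y
    linarith
  have h2 : d ≤ A * (2 / t) * ‖x - y‖ := by
    exact Convex.norm_image_sub_le_of_norm_hasFDerivWithin_le
      (fun z _ => (P1_hasFDerivAt hh ht z).hasFDerivWithinAt)
      (fun z _ => P2_bound hB ht z) convex_univ (mem_univ y) (mem_univ x)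
  set s := t ^ (1/4 : ℝ) with hs
  have hs0 : 0 < s := by positivity
  have hts : t = s ^ 4 := by
    rw [hs, ← Real.rpow_natCast, ← Real.rpow_mul ht.le]; norm_num
  have hs3 : t ^ (-(3/4) : ℝ) = 1 / s ^ 3 := by
    rw [hs, ← Real.rpow_natCast, ← Real.rpow_mul ht.le, Real.rpow_neg ht.le]; norm_num
  have hst : Real.sqrt t = s ^ 2 := by
    rw [hts, show s ^ 4 = (s ^ 2) ^ 2 by ring, Real.sqrt_sq (by positivity)]
  rw [hst] at h1
  rw [hs3]
  have h3 : d ^ 2 ≤ (A * 2 * (1 / s ^ 3) * Real.sqrt ‖x - y‖) ^ 2 := by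
    rw [mul_pow _ (Real.sqrt _), Real.sq_sqrt (norm_nonneg _)]
    calc d ^ 2 = d * d := by ring
      _ ≤ (2 * A * (1 / s ^ 2)) * (A * (2 / t) * ‖x - y‖) :=
        mul_le_mul h1 h2 (norm_nonneg _) (by positivity)
      _ = _ := by rw [hts]; field_simp
  exact (le_abs_self _).trans (abs_le_of_sq_le_sq h3 (by positivity))

lemma hH_int {t : ℝ} (ht : 0 < t) : Integrable (hH (V := V) t) :=
  Integrable.mono' ((hQ_int ht).const_mul _) (hH_cont t).aestronglyMeasurable
    (ae_of_all _ fun z => hH_le ht z)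
lemma hD_int {t : ℝ} (ht : 0 < t) : Integrable (hD (V := V) t) :=
  Integrable.mono' ((hQ_int ht).const_mul _) (hD_cont t).aestronglyMeasurable
    (ae_of_all _ fun z => hD_le ht z)

lemma hH_integral {t : ℝ} (ht : 0 < t) : ∫ z : V, hH t z = 0 := by
  ext v w
  rw [ContinuousLinearMap.integral_apply (hH_int ht), ContinuousLinearMap.integral_apply
    ((hH_int ht).apply_continuousLinearMap v)]
  have hd : ∀ z : V, HasFDerivAt (fun z => hD t z w) ((hH t z).flip w) z := fun z => by
    have := (hD_hasFDerivAt t z).clm_apply (hasFDerivAt_const w z)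
    refine this.congr_fderiv ?_
    ext; simp
  have e : ∀ z, fderiv ℝ (fun z : V => hD t z w) z v = hH t z v w := fun z => by
    rw [(hd z).fderiv]; rfl
  have := integral_mul_fderiv_eq_neg_fderiv_mul_of_integrable (μ := (volume : Measure V))
    (f := fun _ : V => (1:ℝ)) (g := fun z : V => hD t z w) (v := v) (by simp)
    (by simp only [e, one_mul]
        exact ((hH_int ht).apply_continuousLinearMap v).apply_continuousLinearMap w)
    (by simp only [one_mul]; exact (hD_int ht).apply_continuousLinearMap w)
    (fun _ _ => by fun_prop) (fun z _ => (hd z).differentiableAt)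
  simpa [e] using this

lemma cv_const_sub {k : V → F} (hk : Integrable k) {h : V → ℝ} (hh : Integrable h) (hkc : Continuous k)
    {M : ℝ} (hM : ∀ z, ‖k z‖ ≤ M) (x : V) :
    cv h k x - h x • ∫ z, k z = ∫ y, (h y - h x) • k (x - y) := by
  unfold cv
  rw [← integral_sub_left_eq_self k volume x, ← integral_smul, ← integral_sub]
  · simp only [sub_smul]
  · exact cv_integrable hh hkc hM x
  · exact (hk.comp_sub_left x).smul (h x)

lemma cv_holder_bound {k : V → F} (hk : Integrable k) {h : V → ℝ} (hh : Integrable h)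
    (hkc : Continuous k) {M : ℝ} (hM : ∀ z, ‖k z‖ ≤ M) {c : ℝ}
    (hc : ∀ x y, |h x - h y| ≤ c * Real.sqrt ‖x - y‖) {a : ℝ} {q : V → ℝ} (hq : Integrable q)
    (hkq : ∀ z, ‖k z‖ * Real.sqrt ‖z‖ ≤ a * q z) (hc0 : 0 ≤ c) (x : V) :
    ‖cv h k x - h x • ∫ z, k z‖ ≤ c * (a * ∫ z, q z) := by
  rw [cv_const_sub hk hh hkc hM]
  have e : ∫ y, c * (a * q (x - y)) = c * (a * ∫ z, q z) := by
    rw [integral_const_mul, integral_const_mul, integral_sub_left_eq_self q volume x]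
  rw [← e]
  refine norm_integral_le_of_norm_le ?_ (ae_of_all _ fun y => ?_)
  · exact ((hq.comp_sub_left x).const_mul a).const_mul c
  · rw [norm_smul, Real.norm_eq_abs, abs_sub_comm]
    calc _ ≤ c * Real.sqrt ‖x - y‖ * ‖k (x - y)‖ := mul_le_mul_of_nonneg_right (hc x y) (norm_nonneg _)
      _ = c * (‖k (x - y)‖ * Real.sqrt ‖x - y‖) := by ring
      _ ≤ _ := mul_le_mul_of_nonneg_left (hkq _) hc0

lemma P2_holder (hh : Integrable h) {c : ℝ} (hc0 : 0 ≤ c)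
    (hc : ∀ x y, |h x - h y| ≤ c * Real.sqrt ‖x - y‖) {t : ℝ} (ht : 0 < t) (x : V) :
    ‖cv h (hH t) x‖ ≤ c * cQ V * 32 * t ^ (-(3/4) : ℝ) := by
  have := cv_holder_bound (hH_int ht) hh (hH_cont t) (hH_bdd ht) hc (hQ_int ht) (hH_holder ht) hc0 x
  rw [hH_integral ht, smul_zero, sub_zero, hQ_integral ht] at this
  linarith

lemma P0_holder (hh : Integrable h) {c : ℝ} (hc0 : 0 ≤ c)
    (hc : ∀ x y, |h x - h y| ≤ c * Real.sqrt ‖x - y‖) {t : ℝ} (ht : 0 < t) (x : V) :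
    |cv h (hG t) x - h x| ≤ c * cQ V * 8 * t ^ (1/4 : ℝ) := by
  have := cv_holder_bound (hG_int ht) hh (hG_cont t) (hG_bdd ht) hc (hQ_int ht) (q := hQ t)
    (a := 8 * t ^ (1/4 : ℝ)) (fun z => by
      rw [Real.norm_eq_abs, abs_of_nonneg (hG_nonneg ht z)]; exact hG_holder ht z) hc0 x
  rw [hG_integral ht, hQ_integral ht] at this
  simp only [smul_eq_mul, mul_one, Real.norm_eq_abs] at this
  linarith

end core2


section core3
variable {V : Type*} [NormedAddCommGroup V] [InnerProductSpace ℝ V] [FiniteDimensional ℝ V]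
  [MeasurableSpace V] [BorelSpace V]
variable {F : Type*} [NormedAddCommGroup F] [NormedSpace ℝ F] [FiniteDimensional ℝ F]

def RR (m : ℝ) (h : V → ℝ) (k : ℝ → V → F) (x : V) : F :=
  ∫ t in Ioi (0:ℝ), Real.exp (-(m * t)) • cv h (k t) x

def WW (m a : ℝ) : ℝ := ∫ t in Ioi (0:ℝ), Real.exp (-(m * t)) * t ^ a

lemma WW_int {m a : ℝ} (hm : 0 < m) (ha : -1 < a) :
    IntegrableOn (fun t => Real.exp (-(m * t)) * t ^ a) (Ioi (0:ℝ)) := by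
  have := integrableOn_rpow_mul_exp_neg_mul_rpow (p := 1) (s := a) (b := m) ha one_pos hm
  refine this.congr_fun (fun t _ => ?_) measurableSet_Ioi
  simp [mul_comm]

lemma WW_nonneg (m a : ℝ) : 0 ≤ WW m a := by
  refine setIntegral_nonneg measurableSet_Ioi fun t ht => ?_
  have : (0:ℝ) < t := ht
  positivity

lemma WW_tendsto : Tendsto (fun m => WW m (-(1/2))) atTop (𝓝 0) := by
  have h1 : Tendsto (fun m : ℝ => (1 / m) ^ (1/2 : ℝ) * Real.Gamma (1/2)) atTop (𝓝 (0 * Real.Gamma (1/2))) := by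
    refine Tendsto.mul_const _ ?_
    have : Tendsto (fun m : ℝ => 1 / m) atTop (𝓝 0) := by
      simpa using tendsto_inv_atTop_zero (𝕜 := ℝ)
    have h2 := this.rpow_const (p := 1/2) (Or.inr (by norm_num))
    simpa using h2
  rw [zero_mul] at h1
  refine h1.congr' ?_
  filter_upwards [eventually_gt_atTop 0] with m hm
  rw [← Real.integral_rpow_mul_exp_neg_mul_Ioi (by norm_num) hm]
  unfold WW
  refine setIntegral_congr_fun measurableSet_Ioi fun t ht => ?_
  rw [mul_comm]; norm_num

lemma RR_meas (m : ℝ) {h : V → ℝ} (hh : AEStronglyMeasurable h volume) {k : ℝ → V → F}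
    (hk : StronglyMeasurable (Function.uncurry k)) (x : V) :
    AEStronglyMeasurable (fun t => Real.exp (-(m * t)) • cv h (k t) x) (volume.restrict (Ioi (0:ℝ))) := by
  refine AEStronglyMeasurable.smul (by fun_prop) ?_
  unfold cv
  have h1 : AEStronglyMeasurable (fun p : ℝ × V => h p.2 • k p.1 (x - p.2))
      ((volume.restrict (Ioi (0:ℝ))).prod volume) := by
    refine AEStronglyMeasurable.smul hh.comp_snd ?_
    have : StronglyMeasurable (fun p : ℝ × V => (Function.uncurry k) (p.1, x - p.2)) :=
      hk.comp_measurable (by fun_prop)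
    exact this.aestronglyMeasurable
  exact h1.integral_prod_right'

lemma hG_smeas : StronglyMeasurable (Function.uncurry (hG (V := V))) := by
  have : Measurable (Function.uncurry (hG (V := V))) := by
    unfold hG Function.uncurry; fun_prop
  exact this.stronglyMeasurable
lemma hD_smeas : StronglyMeasurable (Function.uncurry (hD (V := V))) := by
  unfold hD Function.uncurry
  have h1 : StronglyMeasurable fun p : ℝ × V => hG p.1 p.2 := hG_smeas
  have h2 : Measurable fun p : ℝ × V => (-(1 / (2 * p.1))) := by fun_prop
  have h3 : Continuous fun p : ℝ × V => JJ V p.2 := by fun_prop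
  exact (h2.stronglyMeasurable.mul h1).smul h3.stronglyMeasurable
lemma hH_smeas : StronglyMeasurable (Function.uncurry (hH (V := V))) := by
  unfold hH Function.uncurry
  have h1 : StronglyMeasurable fun p : ℝ × V => hG p.1 p.2 := hG_smeas
  have h1' : StronglyMeasurable fun p : ℝ × V => hD p.1 p.2 := hD_smeas
  have h2 : Measurable fun p : ℝ × V => (-(1 / (2 * p.1))) := by fun_prop
  have h3 : Continuous fun p : ℝ × V => JJ V p.2 := by fun_prop
  have h4 : StronglyMeasurable fun p : ℝ × V => (hD p.1 p.2).smulRight (JJ V p.2) :=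
    (ContinuousLinearMap.smulRightL ℝ V (V →L[ℝ] ℝ)).continuous₂.comp_stronglyMeasurable
      (h1'.prodMk h3.stronglyMeasurable)
  exact h2.stronglyMeasurable.smul (h4.add (h1.smul stronglyMeasurable_const))

lemma RR_norm_le {m a A : ℝ} (x : V) {h : V → ℝ} {k : ℝ → V → F}
    (hb : ∀ t, 0 < t → ‖cv h (k t) x‖ ≤ A * t ^ a) : ∀ᵐ t ∂(volume.restrict (Ioi (0:ℝ))),
      ‖Real.exp (-(m * t)) • cv h (k t) x‖ ≤ A * (Real.exp (-(m * t)) * t ^ a) := by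
  refine (ae_restrict_iff' measurableSet_Ioi).2 (ae_of_all _ fun t ht => ?_)
  rw [norm_smul, Real.norm_eq_abs, abs_of_pos (Real.exp_pos _)]
  have := mul_le_mul_of_nonneg_left (hb t ht) (Real.exp_pos (-(m * t))).le
  linarith

lemma RR_integrable {m a A : ℝ} (hm : 0 < m) (ha : -1 < a) (x : V) {h : V → ℝ}
    (hh : Integrable h) {k : ℝ → V → F} (hk : StronglyMeasurable (Function.uncurry k))
    (hb : ∀ t, 0 < t → ‖cv h (k t) x‖ ≤ A * t ^ a) :
    IntegrableOn (fun t => Real.exp (-(m * t)) • cv h (k t) x) (Ioi (0:ℝ)) :=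
  Integrable.mono' ((WW_int hm ha).const_mul A) (RR_meas m hh.aestronglyMeasurable hk x)
    (RR_norm_le x hb)

lemma RR_bound {m a A : ℝ} (hm : 0 < m) (ha : -1 < a) (x : V) {h : V → ℝ} {k : ℝ → V → F}
    (hb : ∀ t, 0 < t → ‖cv h (k t) x‖ ≤ A * t ^ a) : ‖RR m h k x‖ ≤ A * WW m a := by
  unfold RR WW
  rw [← integral_const_mul]
  exact norm_integral_le_of_norm_le ((WW_int hm ha).const_mul A) (RR_norm_le x hb)

lemma RR_hasFDerivAt {m a a' A A' : ℝ} (hm : 0 < m) (ha : -1 < a) (ha' : -1 < a') {h : V → ℝ}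
    (hh : Integrable h) {k : ℝ → V → F} {k' : ℝ → V → V →L[ℝ] F}
    (hk : StronglyMeasurable (Function.uncurry k)) (hk' : StronglyMeasurable (Function.uncurry k'))
    (hb : ∀ t, 0 < t → ∀ x, ‖cv h (k t) x‖ ≤ A * t ^ a)
    (hb' : ∀ t, 0 < t → ∀ x, ‖cv h (k' t) x‖ ≤ A' * t ^ a')
    (hd : ∀ t, 0 < t → ∀ x, HasFDerivAt (cv h (k t)) (cv h (k' t) x) x) (x : V) :
    HasFDerivAt (RR m h k) (RR m h k' x) x := by
  unfold RR
  refine hasFDerivAt_integral_of_dominated_of_fderiv_le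
    (F := fun x t => Real.exp (-(m * t)) • cv h (k t) x)
    (F' := fun x t => Real.exp (-(m * t)) • cv h (k' t) x)
    (bound := fun t => A' * (Real.exp (-(m * t)) * t ^ a')) univ_mem
    (Eventually.of_forall fun x' => RR_meas m hh.aestronglyMeasurable hk x')
    (RR_integrable hm ha x hh hk fun t ht => hb t ht x)
    (RR_meas m hh.aestronglyMeasurable hk' x) ?_ ((WW_int hm ha').const_mul A') ?_
  · refine (ae_restrict_iff' measurableSet_Ioi).2 (ae_of_all _ fun t ht x' _ => ?_)
    rw [norm_smul, Real.norm_eq_abs, abs_of_pos (Real.exp_pos _)]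
    have := mul_le_mul_of_nonneg_left (hb' t ht x') (Real.exp_pos (-(m * t))).le
    linarith
  · refine (ae_restrict_iff' measurableSet_Ioi).2 (ae_of_all _ fun t ht x' _ => ?_)
    exact (hd t ht x').const_smul _

lemma RR_continuous {m a A : ℝ} (hm : 0 < m) (ha : -1 < a) {h : V → ℝ}
    (hh : Integrable h) {k : ℝ → V → F}
    (hk : StronglyMeasurable (Function.uncurry k))
    (hb : ∀ t, 0 < t → ∀ x, ‖cv h (k t) x‖ ≤ A * t ^ a)
    (hd : ∀ t, 0 < t → Continuous (cv h (k t))) : Continuous (RR m h k) := by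
  unfold RR
  refine continuous_of_dominated (bound := fun t => A * (Real.exp (-(m * t)) * t ^ a))
    (fun x => RR_meas m hh.aestronglyMeasurable hk x)
    (fun x => RR_norm_le x fun t ht => hb t ht x) ((WW_int hm ha).const_mul A) ?_
  refine (ae_restrict_iff' measurableSet_Ioi).2 (ae_of_all _ fun t ht => ?_)
  exact (hd t ht).const_smul _

/-- Stability under bounded pointwise convergence. -/
lemma RR_tendsto {m a A B : ℝ} (hm : 0 < m) (ha : -1 < a) {h : V → ℝ} {hs : ℕ → V → ℝ}
    {S : Set V} (hS : IsCompact S)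
    (hh : ∀ j, AEStronglyMeasurable (hs j) volume) (hB : ∀ j x, |hs j x| ≤ B)
    (h0 : ∀ j, ∀ x, x ∉ S → hs j x = 0) (hlim : ∀ x, Tendsto (fun j => hs j x) atTop (𝓝 (h x)))
    {k : ℝ → V → F} (hk : StronglyMeasurable (Function.uncurry k))
    (hkc : ∀ t, 0 < t → Continuous (k t)) (hkb : ∀ t, 0 < t → ∃ M, ∀ z, ‖k t z‖ ≤ M)
    (hb : ∀ j t, 0 < t → ∀ x, ‖cv (hs j) (k t) x‖ ≤ A * t ^ a) (x : V) :
    Tendsto (fun j => RR m (hs j) k x) atTop (𝓝 (RR m h k x)) := by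
  unfold RR
  refine tendsto_integral_of_dominated_convergence (fun t => A * (Real.exp (-(m * t)) * t ^ a))
    (fun j => RR_meas m (hh j) hk x) ((WW_int hm ha).const_mul A)
    (fun j => RR_norm_le x fun t ht => hb j t ht x) ?_
  refine (ae_restrict_iff' measurableSet_Ioi).2 (ae_of_all _ fun t ht => ?_)
  refine Tendsto.const_smul ?_ _
  obtain ⟨M, hM⟩ := hkb t ht
  have hM0 : 0 ≤ M := (norm_nonneg _).trans (hM 0)
  unfold cv
  refine tendsto_integral_of_dominated_convergence (S.indicator fun _ => B * M) (fun j => ?_) ?_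
    (fun j => ae_of_all _ fun y => ?_) (ae_of_all _ fun y => (hlim y).smul_const _)
  · have := hkc t ht
    exact (hh j).smul (by fun_prop : Continuous fun y => k t (x - y)).aestronglyMeasurable
  · exact (integrable_indicator_iff hS.measurableSet).2
      (integrableOn_const (hS.measure_lt_top.ne))
  · by_cases hy : y ∈ S
    · rw [indicator_of_mem hy, norm_smul]
      exact mul_le_mul (hB j y) (hM _) (norm_nonneg _) ((abs_nonneg _).trans (hB j y))
    · rw [indicator_of_notMem hy, h0 j y hy]; simp

end core3


section core4
variable {V : Type*} [NormedAddCommGroup V] [InnerProductSpace ℝ V] [FiniteDimensional ℝ V]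
  [MeasurableSpace V] [BorelSpace V]

def Adm (B : ℝ) (h : V → ℝ) : Prop := Integrable h ∧ ∀ x, |h x| ≤ B

def Hol (c : ℝ) (h : V → ℝ) : Prop := 0 ≤ c ∧ ∀ x y, |h x - h y| ≤ c * Real.sqrt ‖x - y‖

def R0 (m : ℝ) (h : V → ℝ) : V → ℝ := RR m h hG
def R1 (m : ℝ) (h : V → ℝ) : V → V →L[ℝ] ℝ := RR m h hD
def R2 (m : ℝ) (h : V → ℝ) : V → V →L[ℝ] V →L[ℝ] ℝ := RR m h hH

variable {m B c : ℝ} {h : V → ℝ}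

lemma p0b (hA : Adm B h) (t : ℝ) (ht : 0 < t) (x : V) : ‖cv h (hG t) x‖ ≤ B * t ^ (0:ℝ) := by
  simpa using P0_bound hA.2 ht x
lemma p1b (hA : Adm B h) (t : ℝ) (ht : 0 < t) (x : V) :
    ‖cv h (hD t) x‖ ≤ (B * cQ V) * t ^ (-(1/2) : ℝ) := by
  have := P1_bound hA.2 ht x
  rwa [Real.sqrt_eq_rpow, one_div (t ^ _), ← Real.rpow_neg ht.le] at this
lemma p2b (hA : Adm B h) (hc : Hol c h) (t : ℝ) (ht : 0 < t) (x : V) :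
    ‖cv h (hH t) x‖ ≤ (c * cQ V * 32) * t ^ (-(3/4) : ℝ) :=
  P2_holder hA.1 hc.1 hc.2 ht x

lemma R0_bound (hm : 0 < m) (hA : Adm B h) (x : V) : |R0 m h x| ≤ B * WW m 0 :=
  RR_bound hm (by norm_num) x fun t ht => p0b hA t ht x

lemma R1_bound (hm : 0 < m) (hA : Adm B h) (x : V) : ‖R1 m h x‖ ≤ B * cQ V * WW m (-(1/2)) :=
  RR_bound hm (by norm_num) x fun t ht => p1b hA t ht x

lemma R0_hasFDerivAt (hm : 0 < m) (hA : Adm B h) (x : V) :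
    HasFDerivAt (R0 m h) (R1 m h x) x :=
  RR_hasFDerivAt hm (by norm_num) (by norm_num) hA.1 hG_smeas hD_smeas (p0b hA) (p1b hA)
    (fun t ht x => P0_hasFDerivAt hA.1 ht x) x

lemma R1_hasFDerivAt (hm : 0 < m) (hA : Adm B h) (hc : Hol c h) (x : V) :
    HasFDerivAt (R1 m h) (R2 m h x) x :=
  RR_hasFDerivAt hm (by norm_num) (by norm_num) hA.1 hD_smeas hH_smeas (p1b hA) (p2b hA hc)
    (fun t ht x => P1_hasFDerivAt hA.1 ht x) x

lemma R2_continuous (hm : 0 < m) (hA : Adm B h) (hc : Hol c h) : Continuous (R2 m h) :=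
  RR_continuous hm (by norm_num) hA.1 hH_smeas (p2b hA hc)
    fun t ht => cv_continuous hA.1 (hH_cont t) (hH_bdd ht)

lemma R1_continuous (hm : 0 < m) (hA : Adm B h) : Continuous (R1 m h) :=
  RR_continuous hm (by norm_num) hA.1 hD_smeas (p1b hA)
    fun t ht => cv_continuous hA.1 (hD_cont t) (hD_bdd ht)

lemma R1_holder (hm : 0 < m) (hA : Adm B h) (x y : V) :
    ‖R1 m h x - R1 m h y‖ ≤ B * cQ V * 2 * WW m (-(3/4)) * Real.sqrt ‖x - y‖ := by
  unfold R1 RR WW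
  have hm1 : (-1 : ℝ) < -(1/2) := by norm_num
  rw [← integral_sub (RR_integrable hm hm1 x hA.1 hD_smeas fun t ht => p1b hA t ht x)
    (RR_integrable hm hm1 y hA.1 hD_smeas fun t ht => p1b hA t ht y)]
  rw [← integral_const_mul, ← integral_mul_const]
  refine norm_integral_le_of_norm_le (((WW_int hm (by norm_num)).const_mul _).mul_const _) ?_
  refine (ae_restrict_iff' measurableSet_Ioi).2 (ae_of_all _ fun t ht => ?_)
  rw [← smul_sub, norm_smul, Real.norm_eq_abs, abs_of_pos (Real.exp_pos _)]
  have := mul_le_mul_of_nonneg_left (P1_holder hA.1 hA.2 ht x y) (Real.exp_pos (-(m * t))).le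
  linarith

lemma contDiff_one_of {f : V → ℝ} {f' : V → V →L[ℝ] ℝ} (hf : ∀ x, HasFDerivAt f (f' x) x)
    (hc : Continuous f') : ContDiff ℝ 1 f := by
  rw [contDiff_one_iff_fderiv]
  refine ⟨fun x => (hf x).differentiableAt, ?_⟩
  have : fderiv ℝ f = f' := funext fun x => (hf x).fderiv
  rwa [this]

lemma contDiff_two_of {f : V → ℝ} {f' : V → V →L[ℝ] ℝ} {f'' : V → V →L[ℝ] V →L[ℝ] ℝ}
    (hf : ∀ x, HasFDerivAt f (f' x) x)
    (hf' : ∀ x, HasFDerivAt f' (f'' x) x) (hc : Continuous f'') : ContDiff ℝ 2 f := by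
  rw [show (2 : WithTop ℕ∞) = 1 + 1 by norm_num, contDiff_succ_iff_fderiv]
  refine ⟨fun x => (hf x).differentiableAt, by simp, ?_⟩
  have : fderiv ℝ f = f' := funext fun x => (hf x).fderiv
  rw [this, contDiff_one_iff_fderiv]
  refine ⟨fun x => (hf' x).differentiableAt, ?_⟩
  have : fderiv ℝ f' = f'' := funext fun x => (hf' x).fderiv
  rwa [this]

lemma R0_contDiff_one (hm : 0 < m) (hA : Adm B h) : ContDiff ℝ 1 (R0 m h) :=
  contDiff_one_of (R0_hasFDerivAt hm hA) (R1_continuous hm hA)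

lemma R0_contDiff_two (hm : 0 < m) (hA : Adm B h) (hc : Hol c h) : ContDiff ℝ 2 (R0 m h) :=
  contDiff_two_of (R0_hasFDerivAt hm hA) (R1_hasFDerivAt hm hA hc) (R2_continuous hm hA hc)

variable {n : ℕ} (e : OrthonormalBasis (Fin n) ℝ V)

lemma hG_hasDerivAt {t : ℝ} (ht : 0 < t) (z : V) :
    HasDerivAt (fun t => hG t z) (∑ i, hH t z (e i) (e i)) t := by
  have e1 : ∑ i, hH t z (e i) (e i) = hG t z * (‖z‖ ^ 2 / (4 * t ^ 2) - n / (2 * t)) := by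
    have h1 : ∀ i, hH t z (e i) (e i) =
        hG t z * ((1 / (4 * t ^ 2)) * (⟪z, e i⟫ * ⟪e i, z⟫) - 1 / (2 * t)) := fun i => by
      simp only [hH, hD, ContinuousLinearMap.smul_apply, ContinuousLinearMap.add_apply,
        ContinuousLinearMap.smulRight_apply, JJ_apply, smul_eq_mul]
      rw [real_inner_self_eq_norm_sq, e.norm_eq_one, real_inner_comm z (e i)]
      field_simp; ring
    simp only [h1]
    rw [← Finset.mul_sum, Finset.sum_sub_distrib, ← Finset.mul_sum, e.sum_inner_mul_inner,
      real_inner_self_eq_norm_sq]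
    simp; left; field_simp
  rw [e1]
  have hn : Module.finrank ℝ V = n := by
    rw [Module.finrank_eq_card_basis e.toBasis]; simp
  unfold hG
  rw [hn]
  have h1 : HasDerivAt (fun t : ℝ => (4 * Real.pi * t) ^ (-((n : ℝ) / 2)))
      ((4 * Real.pi * 1) * (-((n:ℝ) / 2)) * (4 * Real.pi * t) ^ (-((n : ℝ) / 2) - 1)) t :=
    ((hasDerivAt_id t).const_mul (4 * Real.pi)).rpow_const (Or.inl (by simp; positivity))
  have h2 : HasDerivAt (fun t : ℝ => Real.exp (-‖z‖ ^ 2 / (4 * t)))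
      (Real.exp (-‖z‖ ^ 2 / (4 * t)) * (‖z‖ ^ 2 / (4 * t ^ 2))) t := by
    have h3 : HasDerivAt (fun t : ℝ => -‖z‖ ^ 2 / (4 * t)) (‖z‖ ^ 2 / (4 * t ^ 2)) t := by
      have := (hasDerivAt_const t (-‖z‖ ^ 2)).div ((hasDerivAt_id t).const_mul 4) (by simp; positivity)
      refine this.congr_deriv ?_
      simp; field_simp
    exact h3.exp
  refine (h1.mul h2).congr_deriv ?_
  rw [Real.rpow_sub (by positivity), Real.rpow_one]
  field_simp
  ring

lemma kM_anti {s t : ℝ} (hs : 0 < s) (hst : s ≤ t) : kM V t ≤ kM V s := by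
  unfold kM
  refine Real.rpow_le_rpow_of_nonpos (by positivity) (by gcongr) ?_
  have : 0 ≤ (Module.finrank ℝ V : ℝ) / 2 := by positivity
  linarith

lemma tr_le (L : V →L[ℝ] V →L[ℝ] ℝ) : |∑ i, L (e i) (e i)| ≤ n * ‖L‖ := by
  refine (Finset.abs_sum_le_sum_abs _ _).trans ?_
  have : ∀ i ∈ Finset.univ, |L (e i) (e i)| ≤ ‖L‖ := fun i _ => by
    have := L.le_opNorm₂ (e i) (e i)
    simpa [e.norm_eq_one] using this
  refine (Finset.sum_le_sum this).trans ?_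
  simp

def trL : (V →L[ℝ] V →L[ℝ] ℝ) →L[ℝ] ℝ :=
  ∑ i, (ContinuousLinearMap.apply ℝ ℝ (e i)).comp (ContinuousLinearMap.apply ℝ (V →L[ℝ] ℝ) (e i))

lemma trL_apply (L : V →L[ℝ] V →L[ℝ] ℝ) : trL e L = ∑ i, L (e i) (e i) := by
  unfold trL; simp

lemma P0_hasDerivAt (hh : Integrable h) {t : ℝ} (ht : 0 < t) (x : V) :
    HasDerivAt (fun t => cv h (hG t) x) (trL e (cv h (hH t) x)) t := by
  have e1 : trL e (cv h (hH t) x) = ∫ y, h y * ∑ i, hH t (x - y) (e i) (e i) := by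
    unfold cv
    rw [← ContinuousLinearMap.integral_comp_comm _ (cv_integrable hh (hH_cont t) (hH_bdd ht) x)]
    simp [trL_apply]
  rw [e1]
  unfold cv
  simp only [smul_eq_mul]
  have hs : Ioi (t/2) ∈ 𝓝 t := Ioi_mem_nhds (by linarith)
  refine (hasDerivAt_integral_of_dominated_loc_of_deriv_le
    (F := fun t y => h y * hG t (x - y))
    (F' := fun t y => h y * ∑ i, hH t (x - y) (e i) (e i))
    (bound := fun y => ‖h y‖ * (n * ((2 / (t/2)) * kM V (t/2)))) hs ?_ ?_ ?_ ?_
    (hh.norm.mul_const _) ?_).2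
  · filter_upwards [hs] with s hs'
    have : 0 < s := lt_trans (by positivity) hs'
    exact (cv_integrable hh (hG_cont s) (hG_bdd this) x).aestronglyMeasurable
  · exact cv_integrable hh (hG_cont t) (hG_bdd ht) x
  · refine hh.aestronglyMeasurable.mul ?_
    have h1 := hH_cont (V := V) t
    have : Continuous fun y => ∑ i, hH t (x - y) (e i) (e i) := by
      simp only [← trL_apply]; fun_prop
    exact this.aestronglyMeasurable
  · refine ae_of_all _ fun y s hs' => ?_
    have hs0 : 0 < s := lt_trans (by positivity) hs'
    have hs1 : t / 2 ≤ s := le_of_lt hs'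
    rw [norm_mul]
    refine mul_le_mul_of_nonneg_left ?_ (norm_nonneg _)
    refine (tr_le e _).trans ?_
    refine mul_le_mul_of_nonneg_left ?_ (by positivity)
    refine (hH_bdd hs0 _).trans ?_
    refine mul_le_mul ?_ (kM_anti (by positivity) hs1) ?_ (by positivity)
    · gcongr
    · unfold kM; positivity
  · refine ae_of_all _ fun y s hs' => ?_
    have hs0 : 0 < s := lt_trans (by positivity) hs'
    exact (hG_hasDerivAt e hs0 (x - y)).const_mul (h y)

lemma R2_trace (hm : 0 < m) (hA : Adm B h) (hc : Hol c h) (x : V) :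
    trL e (R2 m h x) = m * R0 m h x - h x := by
  have i2 := RR_integrable hm (by norm_num) x hA.1 hH_smeas fun t ht => p2b hA hc t ht x
  have i0 := RR_integrable hm (by norm_num) x hA.1 hG_smeas fun t ht => p0b hA t ht x
  have i2' : IntegrableOn (fun t => trL e (Real.exp (-(m * t)) • cv h (hH t) x)) (Ioi (0:ℝ)) :=
    (trL e).integrable_comp i2
  set f : ℝ → ℝ := fun t => if t ≤ 0 then h x else Real.exp (-(m * t)) * cv h (hG t) x with hf
  have key := integral_Ioi_of_hasDerivAt_of_tendsto (a := (0:ℝ)) (f := f) (m := 0)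
    (f' := fun t => trL e (Real.exp (-(m * t)) • cv h (hH t) x) -
      m * (Real.exp (-(m * t)) • cv h (hG t) x)) ?_ ?_ (i2'.sub (i0.const_mul m)) ?_
  · rw [integral_sub i2' (i0.const_mul m), integral_const_mul,
      ContinuousLinearMap.integral_comp_comm _ i2] at key
    have : f 0 = h x := by simp [hf]
    rw [this] at key
    unfold R2 R0 RR
    linarith
  · have h1 : Tendsto (fun t : ℝ => cv h (hG t) x) (𝓝[>] 0) (𝓝 (h x)) := by
      have h2 : Tendsto (fun t : ℝ => c * cQ V * 8 * t ^ (1/4 : ℝ)) (𝓝[>] 0) (𝓝 0) := by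
        have : Continuous fun t : ℝ => c * cQ V * 8 * t ^ (1/4 : ℝ) :=
          continuous_const.mul (Real.continuous_rpow_const (by norm_num))
        have h3 := (this.tendsto 0).mono_left (nhdsWithin_le_nhds (s := Ioi 0))
        simpa using h3
      rw [tendsto_iff_norm_sub_tendsto_zero]
      refine squeeze_zero' (Eventually.of_forall fun _ => norm_nonneg _) ?_ h2
      filter_upwards [self_mem_nhdsWithin] with t ht
      exact P0_holder hA.1 hc.1 hc.2 ht x
    have h2 : Tendsto (fun t : ℝ => Real.exp (-(m * t)) * cv h (hG t) x) (𝓝[>] 0) (𝓝 (1 * h x)) := by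
      refine Tendsto.mul ?_ h1
      have : Continuous fun t : ℝ => Real.exp (-(m * t)) := by fun_prop
      have h3 := (this.tendsto 0).mono_left (nhdsWithin_le_nhds (s := Ioi 0))
      simpa using h3
    rw [one_mul] at h2
    rw [← continuousWithinAt_Ioi_iff_Ici]
    have : f 0 = h x := by simp [hf]
    unfold ContinuousWithinAt
    rw [this]
    refine h2.congr' ?_
    filter_upwards [self_mem_nhdsWithin] with t ht
    simp [hf, not_le.2 (show (0:ℝ) < t from ht)]
  · intro t ht
    have ht0 : (0:ℝ) < t := ht
    have h1 : HasDerivAt (fun t : ℝ => Real.exp (-(m * t))) (Real.exp (-(m * t)) * (-m)) t := by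
      have := ((hasDerivAt_id t).const_mul m).neg.exp
      simpa using this
    have h2 := h1.mul (P0_hasDerivAt e hA.1 ht0 x)
    have h3 : HasDerivAt f (Real.exp (-(m * t)) * -m * cv h (hG t) x +
        Real.exp (-(m * t)) * trL e (cv h (hH t) x)) t := by
      refine h2.congr_of_eventuallyEq ?_
      filter_upwards [Ioi_mem_nhds ht0] with s hs
      simp [hf, not_le.2 (show (0:ℝ) < s from hs)]
    refine h3.congr_deriv ?_
    simp; ring
  · have h1 : Tendsto (fun t : ℝ => Real.exp (-(m * t)) * B) atTop (𝓝 (0 * B)) := by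
      refine Tendsto.mul_const _ ?_
      refine Real.tendsto_exp_neg_atTop_nhds_zero.comp (tendsto_id.const_mul_atTop hm)
    rw [zero_mul] at h1
    refine squeeze_zero_norm' ?_ h1
    filter_upwards [eventually_gt_atTop 0] with t ht
    simp only [hf, not_le.2 ht, if_false, norm_mul, Real.norm_eq_abs, abs_of_pos (Real.exp_pos _)]
    exact mul_le_mul_of_nonneg_left (P0_bound hA.2 ht x) (Real.exp_pos _).le

end core4


section core5
variable {V : Type*} [NormedAddCommGroup V] [InnerProductSpace ℝ V] [FiniteDimensional ℝ V]
  [MeasurableSpace V] [BorelSpace V]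
variable {F : Type*} [NormedAddCommGroup F] [NormedSpace ℝ F] [FiniteDimensional ℝ F]

variable {m B B' c c' : ℝ} {h h' : V → ℝ}

lemma Adm.nonneg (hA : Adm B h) : 0 ≤ B := (abs_nonneg _).trans (hA.2 0)

lemma Adm.add (hA : Adm B h) (hA' : Adm B' h') : Adm (B + B') (fun y => h y + h' y) :=
  ⟨hA.1.add hA'.1, fun x => (abs_add_le _ _).trans (add_le_add (hA.2 x) (hA'.2 x))⟩
lemma Adm.neg (hA : Adm B h) : Adm B (fun y => - h y) :=
  ⟨hA.1.neg, fun x => by rw [abs_neg]; exact hA.2 x⟩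
lemma Adm.sub (hA : Adm B h) (hA' : Adm B' h') : Adm (B + B') (fun y => h y - h' y) := by
  simpa [sub_eq_add_neg] using hA.add hA'.neg

lemma Adm.sum {ι : Type*} (s : Finset ι) {f : ι → V → ℝ} {b : ι → ℝ}
    (H : ∀ i ∈ s, Adm (b i) (f i)) : Adm (∑ i ∈ s, b i) (fun y => ∑ i ∈ s, f i y) :=
  ⟨integrable_finsetSum _ fun i hi => (H i hi).1, fun x => (Finset.abs_sum_le_sum_abs _ _).trans
    (Finset.sum_le_sum fun i hi => (H i hi).2 x)⟩

lemma adm_of_support {S : Set V} (hS : IsCompact S) (hm : AEStronglyMeasurable h volume)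
    (hb : ∀ x, |h x| ≤ B) (h0 : ∀ x, x ∉ S → h x = 0) : Adm B h := by
  refine ⟨?_, hb⟩
  have h1 : IntegrableOn h S := by
    refine Integrable.mono' (g := fun _ => B) (integrableOn_const hS.measure_lt_top.ne) hm.restrict
      (ae_of_all _ hb)
  exact (integrableOn_iff_integrable_of_support_subset fun x hx => by
    by_contra hxS; exact hx (h0 x hxS)).1 h1

lemma adm_of_cs (hc : Continuous h) (hs : HasCompactSupport h) : ∃ B, Adm B h := by
  obtain ⟨B, hB⟩ := hs.exists_bound_of_continuous hc
  exact ⟨B, hc.integrable_of_hasCompactSupport hs, hB⟩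

lemma RR_add {k : ℝ → V → F} {A A' a : ℝ} (hm : 0 < m) (ha : -1 < a)
    (hi : Integrable h) (hi' : Integrable h')
    (hk : StronglyMeasurable (Function.uncurry k))
    (hkc : ∀ t, 0 < t → Continuous (k t)) (hkb : ∀ t, 0 < t → ∃ M, ∀ z, ‖k t z‖ ≤ M)
    (hb : ∀ t, 0 < t → ∀ x, ‖cv h (k t) x‖ ≤ A * t ^ a)
    (hb' : ∀ t, 0 < t → ∀ x, ‖cv h' (k t) x‖ ≤ A' * t ^ a) (x : V) :
    RR m (fun y => h y + h' y) k x = RR m h k x + RR m h' k x := by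
  unfold RR
  rw [← integral_add (RR_integrable hm ha x hi hk fun t ht => hb t ht x)
    (RR_integrable hm ha x hi' hk fun t ht => hb' t ht x)]
  refine setIntegral_congr_fun measurableSet_Ioi fun t ht => ?_
  obtain ⟨M, hM⟩ := hkb t ht
  rw [← smul_add]
  congr 1
  unfold cv
  rw [← integral_add (cv_integrable hi (hkc t ht) hM x) (cv_integrable hi' (hkc t ht) hM x)]
  simp only [add_smul]

lemma RR_neg {k : ℝ → V → F} (x : V) :
    RR m (fun y => - h y) k x = - RR m h k x := by
  unfold RR cv
  simp only [neg_smul, integral_neg, smul_neg]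

lemma RR_zero {k : ℝ → V → F} (x : V) :
    RR m (fun y => 0) k x = 0 := by
  unfold RR cv
  simp

lemma R0_add (hm : 0 < m) (hA : Adm B h) (hA' : Adm B' h') (x : V) :
    R0 m (fun y => h y + h' y) x = R0 m h x + R0 m h' x :=
  RR_add hm (by norm_num) hA.1 hA'.1 hG_smeas (fun t _ => hG_cont t) (fun t ht => ⟨_, hG_bdd ht⟩)
    (p0b hA) (p0b hA') x
lemma R1_add (hm : 0 < m) (hA : Adm B h) (hA' : Adm B' h') (x : V) :
    R1 m (fun y => h y + h' y) x = R1 m h x + R1 m h' x :=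
  RR_add hm (by norm_num) hA.1 hA'.1 hD_smeas (fun t _ => hD_cont t) (fun t ht => ⟨_, hD_bdd ht⟩)
    (p1b hA) (p1b hA') x
lemma R0_neg (x : V) : R0 m (fun y => - h y) x = - R0 m h x := RR_neg x
lemma R1_neg (x : V) : R1 m (fun y => - h y) x = - R1 m h x := RR_neg x
lemma R0_sub (hm : 0 < m) (hA : Adm B h) (hA' : Adm B' h') (x : V) :
    R0 m (fun y => h y - h' y) x = R0 m h x - R0 m h' x := by
  simp only [sub_eq_add_neg]; rw [R0_add hm hA hA'.neg, R0_neg]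
lemma R1_sub (hm : 0 < m) (hA : Adm B h) (hA' : Adm B' h') (x : V) :
    R1 m (fun y => h y - h' y) x = R1 m h x - R1 m h' x := by
  simp only [sub_eq_add_neg]; rw [R1_add hm hA hA'.neg, R1_neg]
lemma R0_sum (hm : 0 < m) {ι : Type*} (s : Finset ι) {f : ι → V → ℝ} {b : ι → ℝ}
    (H : ∀ i ∈ s, Adm (b i) (f i)) (x : V) :
    R0 m (fun y => ∑ i ∈ s, f i y) x = ∑ i ∈ s, R0 m (f i) x := by
  classical
  induction s using Finset.induction_on with
  | empty => simpa [R0] using RR_zero (m := m) (k := hG) x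
  | insert a s ha ih =>
    simp only [Finset.sum_insert ha]
    rw [R0_add hm (H a (by simp)) (Adm.sum s fun i hi => H i (by simp [hi])),
      ih fun i hi => H i (by simp [hi])]

lemma R0_tendsto (hm : 0 < m) {hs : ℕ → V → ℝ} {S : Set V} (hS : IsCompact S)
    (hh : ∀ j, AEStronglyMeasurable (hs j) volume) (hB : ∀ j x, |hs j x| ≤ B)
    (h0 : ∀ j, ∀ x, x ∉ S → hs j x = 0) (hlim : ∀ x, Tendsto (fun j => hs j x) atTop (𝓝 (h x)))
    (x : V) : Tendsto (fun j => R0 m (hs j) x) atTop (𝓝 (R0 m h x)) :=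
  RR_tendsto hm (a := 0) (A := B) (by norm_num) hS hh hB h0 hlim hG_smeas (fun t _ => hG_cont t)
    (fun t ht => ⟨_, hG_bdd ht⟩)
    (fun j t ht x => p0b (adm_of_support hS (hh j) (hB j) (h0 j)) t ht x) x
lemma R1_tendsto (hm : 0 < m) {hs : ℕ → V → ℝ} {S : Set V} (hS : IsCompact S)
    (hh : ∀ j, AEStronglyMeasurable (hs j) volume) (hB : ∀ j x, |hs j x| ≤ B)
    (h0 : ∀ j, ∀ x, x ∉ S → hs j x = 0) (hlim : ∀ x, Tendsto (fun j => hs j x) atTop (𝓝 (h x)))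
    (x : V) : Tendsto (fun j => R1 m (hs j) x) atTop (𝓝 (R1 m h x)) :=
  RR_tendsto hm (a := -(1/2)) (A := B * cQ V) (by norm_num) hS hh hB h0 hlim hD_smeas
    (fun t _ => hD_cont t) (fun t ht => ⟨_, hD_bdd ht⟩)
    (fun j t ht x => p1b (adm_of_support hS (hh j) (hB j) (h0 j)) t ht x) x

-- integration by parts
lemma R1_eq_R0_fderiv (hm : 0 < m) (hC : ContDiff ℝ 1 h) (hs : HasCompactSupport h) (x v : V) :
    R1 m h x v = R0 m (fun y => fderiv ℝ h y v) x := by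
  obtain ⟨B, hA⟩ := adm_of_cs hC.continuous hs
  have i1 := RR_integrable hm (by norm_num) x hA.1 hD_smeas fun t ht => p1b hA t ht x
  have hdc : Continuous (fderiv ℝ h) := hC.continuous_fderiv (by norm_num)
  have hds : HasCompactSupport (fun y => fderiv ℝ h y v) := hs.fderiv_apply (𝕜 := ℝ) v
  have hdi : Integrable (fun y => fderiv ℝ h y v) :=
    (hdc.clm_apply continuous_const).integrable_of_hasCompactSupport hds
  unfold R1 R0 RR
  rw [ContinuousLinearMap.integral_apply i1]
  refine setIntegral_congr_fun measurableSet_Ioi fun t ht => ?_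
  simp only [ContinuousLinearMap.smul_apply]
  congr 1
  unfold cv
  have ht' : 0 < t := ht
  rw [ContinuousLinearMap.integral_apply (cv_integrable hA.1 (hD_cont t) (hD_bdd ht') x)]
  have hd : ∀ y, HasFDerivAt (fun y => hG t (x - y)) (-(hD t (x - y))) y := fun y => by
    have := (hG_hasFDerivAt t (x - y)).comp y ((hasFDerivAt_id y).const_sub x)
    refine this.congr_fderiv ?_
    ext w; simp
  have hGc := hG_cont (V := V) t
  have hDc := hD_cont (V := V) t
  have e1 : ∀ y, fderiv ℝ (fun y => hG t (x - y)) y v = -(hD t (x - y) v) := fun y => by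
    rw [(hd y).fderiv]; simp
  have := integral_mul_fderiv_eq_neg_fderiv_mul_of_integrable (𝕜 := ℝ) (μ := (volume : Measure V))
    (f := h) (g := fun y => hG t (x - y)) (v := v) ?_ ?_ ?_
    (fun y _ => hC.differentiable (by norm_num) y) (fun y _ => (hd y).differentiableAt)
  · simp only [e1] at this
    simp only [smul_eq_mul, ContinuousLinearMap.smul_apply]
    simp only [mul_neg, integral_neg] at this
    linarith
  · simpa using cv_integrable hdi hGc (hG_bdd ht') x
  · simp only [e1]
    refine Continuous.integrable_of_hasCompactSupport ?_ hs.mul_right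
    have := hC.continuous
    fun_prop
  · simpa using cv_integrable hA.1 hGc (hG_bdd ht') x

-- Holder closure
lemma Hol.add (hc : Hol c h) (hc' : Hol c' h') : Hol (c + c') (fun y => h y + h' y) :=
  ⟨add_nonneg hc.1 hc'.1, fun x y => by
    have := hc.2 x y; have := hc'.2 x y
    calc |h x + h' x - (h y + h' y)| = |(h x - h y) + (h' x - h' y)| := by ring_nf
      _ ≤ _ := (abs_add_le _ _).trans (by linarith)⟩
lemma Hol.neg (hc : Hol c h) : Hol c (fun y => - h y) :=
  ⟨hc.1, fun x y => by
    rw [show - h x - - h y = -(h x - h y) by ring, abs_neg]; exact hc.2 x y⟩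
lemma Hol.sub (hc : Hol c h) (hc' : Hol c' h') : Hol (c + c') (fun y => h y - h' y) := by
  simpa [sub_eq_add_neg] using hc.add hc'.neg
lemma Hol.mul (hc : Hol c h) (hc' : Hol c' h') (hB : ∀ x, |h x| ≤ B) (hB' : ∀ x, |h' x| ≤ B') :
    Hol (B * c' + c * B') (fun y => h y * h' y) := by
  have b0 := (abs_nonneg _).trans (hB 0)
  have b0' := (abs_nonneg _).trans (hB' 0)
  refine ⟨add_nonneg (mul_nonneg b0 hc'.1) (mul_nonneg hc.1 b0'), fun x y => ?_⟩
  calc |h x * h' x - h y * h' y| = |h x * (h' x - h' y) + (h x - h y) * h' y| := by ring_nf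
    _ ≤ |h x| * |h' x - h' y| + |h x - h y| * |h' y| := by
      refine (abs_add_le _ _).trans ?_; rw [abs_mul, abs_mul]
    _ ≤ B * (c' * Real.sqrt ‖x - y‖) + (c * Real.sqrt ‖x - y‖) * B' := by
      gcongr
      · exact hB x
      · exact hc'.2 x y
      · exact mul_nonneg hc.1 (Real.sqrt_nonneg _)
      · exact hc.2 x y
      · exact hB' y
    _ = _ := by ring
lemma hol_zero : Hol 0 (fun _ : V => (0:ℝ)) := ⟨le_rfl, by simp⟩
lemma Hol.sum {ι : Type*} (s : Finset ι) {f : ι → V → ℝ}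
    (H : ∀ i ∈ s, ∃ c, Hol c (f i)) : ∃ c, Hol c (fun y => ∑ i ∈ s, f i y) := by
  classical
  induction s using Finset.induction_on with
  | empty => exact ⟨0, by simpa using hol_zero⟩
  | insert a s ha ih =>
    simp only [Finset.sum_insert ha]
    obtain ⟨c, hc⟩ := H a (by simp)
    obtain ⟨c', hc'⟩ := ih fun i hi => H i (by simp [hi])
    exact ⟨_, hc.add hc'⟩
lemma hol_of_lip {L : ℝ} (hL0 : 0 ≤ L) (hB : ∀ x, |h x| ≤ B) (hL : ∀ x y, |h x - h y| ≤ L * ‖x - y‖) :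
    Hol (2 * B + L) h := by
  have b0 := (abs_nonneg _).trans (hB 0)
  refine ⟨by positivity, fun x y => ?_⟩
  rcases le_total ‖x - y‖ 1 with h1 | h1
  · have : ‖x - y‖ ≤ Real.sqrt ‖x - y‖ := by
      apply Real.le_sqrt_of_sq_le
      nlinarith [norm_nonneg (x - y)]
    calc _ ≤ _ := hL x y
      _ ≤ L * Real.sqrt ‖x - y‖ := by gcongr
      _ ≤ _ := by gcongr; linarith
  · have : 1 ≤ Real.sqrt ‖x - y‖ := Real.one_le_sqrt.2 h1
    calc |h x - h y| ≤ |h x| + |h y| := abs_sub _ _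
      _ ≤ (2 * B) * 1 := by linarith [hB x, hB y]
      _ ≤ (2 * B) * Real.sqrt ‖x - y‖ := by gcongr
      _ ≤ _ := by gcongr; linarith
lemma hol_of_cs (hC : ContDiff ℝ 1 h) (hs : HasCompactSupport h) : ∃ c, Hol c h := by
  obtain ⟨B, hB⟩ := hs.exists_bound_of_continuous hC.continuous
  obtain ⟨L, hL⟩ := ContDiff.lipschitzWith_of_hasCompactSupport hs hC (by norm_num)
  exact ⟨_, hol_of_lip L.2 hB fun x y => by simpa [Real.dist_eq, dist_eq_norm] using hL.dist_le_mul x y⟩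
lemma R0_hol (hm : 0 < m) (hA : Adm B h) :
    Hol (2 * (B * WW m 0) + B * cQ V * WW m (-(1/2))) (R0 m h) := by
  refine hol_of_lip ((norm_nonneg _).trans (R1_bound hm hA 0)) (R0_bound hm hA) fun x y => ?_
  have := Convex.norm_image_sub_le_of_norm_hasFDerivWithin_le (𝕜 := ℝ) (f := R0 m h) (f' := R1 m h)
    (fun x _ => (R0_hasFDerivAt hm hA x).hasFDerivWithinAt) (fun x _ => R1_bound hm hA x)
    convex_univ (mem_univ y) (mem_univ x)
  exact this
lemma R1_hol (hm : 0 < m) (hA : Adm B h) (v : V) :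
    Hol (B * cQ V * 2 * WW m (-(3/4)) * ‖v‖) (fun x => R1 m h x v) := by
  refine ⟨?_, fun x y => ?_⟩
  · have h1 := WW_nonneg m (-(3/4))
    have h2 := cQ_pos (V := V)
    have := hA.nonneg
    positivity
  · calc |R1 m h x v - R1 m h y v| = ‖(R1 m h x - R1 m h y) v‖ := rfl
      _ ≤ ‖R1 m h x - R1 m h y‖ * ‖v‖ := ContinuousLinearMap.le_opNorm _ _
      _ ≤ _ := by
        have := R1_holder hm hA x y
        calc _ ≤ _ := mul_le_mul_of_nonneg_right this (norm_nonneg _)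
          _ = _ := by ring

variable {n : ℕ} (e : OrthonormalBasis (Fin n) ℝ V)

def lap (f : V → ℝ) (x : V) : ℝ := ∑ i, fderiv ℝ (fun y => fderiv ℝ f y (e i)) x (e i)

lemma fderiv_apply_at {f : V → ℝ} {x : V} (hf : ContDiffAt ℝ 2 f x) (v w : V) :
    fderiv ℝ (fun y => fderiv ℝ f y v) x w = fderiv ℝ (fderiv ℝ f) x w v := by
  have : DifferentiableAt ℝ (fderiv ℝ f) x :=
    (hf.fderiv_right (m := 1) (by norm_num)).differentiableAt (by norm_num)
  have h2 := this.hasFDerivAt.clm_apply (hasFDerivAt_const v x)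
  rw [h2.fderiv]; simp

lemma lap_eq {f : V → ℝ} {x : V} (hf : ContDiffAt ℝ 2 f x) :
    lap e f x = trL e (fderiv ℝ (fderiv ℝ f) x) := by
  unfold lap; rw [trL_apply]
  exact Finset.sum_congr rfl fun i _ => fderiv_apply_at hf _ _

lemma R0_fderiv (hm : 0 < m) (hA : Adm B h) : fderiv ℝ (R0 m h) = R1 m h :=
  funext fun x => (R0_hasFDerivAt hm hA x).fderiv

lemma R0_lap (hm : 0 < m) (hA : Adm B h) (hc : Hol c h) (x : V) :
    lap e (R0 m h) x = m * R0 m h x - h x := by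
  rw [lap_eq e (R0_contDiff_two hm hA hc).contDiffAt, R0_fderiv hm hA,
    (R1_hasFDerivAt hm hA hc x).fderiv, R2_trace e hm hA hc]

/-- representation of compactly supported `C²` functions -/
lemma R0_rep (hm : 0 < m) {w : V → ℝ} (hw : ContDiff ℝ 2 w) (hs : HasCompactSupport w) (x : V) :
    w x = R0 m (fun y => m * w y - lap e w y) x := by
  obtain ⟨B, hA⟩ := adm_of_cs hw.continuous hs
  obtain ⟨c, hc⟩ := hol_of_cs (hw.of_le (by norm_num)) hs
  have hd1 : ∀ v, ContDiff ℝ 1 (fun y => fderiv ℝ w y v) := fun v =>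
    (hw.fderiv_right (m := 1) (by norm_num)).clm_apply contDiff_const
  have hs1 : ∀ v, HasCompactSupport (fun y => fderiv ℝ w y v) := fun v => hs.fderiv_apply (𝕜 := ℝ) v
  have hs2 : ∀ v, HasCompactSupport (fun y => fderiv ℝ (fun y => fderiv ℝ w y v) y v) := fun v =>
    (hs1 v).fderiv_apply (𝕜 := ℝ) v
  have hc2 : ∀ v, Continuous (fun y => fderiv ℝ (fun y => fderiv ℝ w y v) y v) := fun v =>
    ((hd1 v).continuous_fderiv (by norm_num)).clm_apply continuous_const
  choose b hb using fun i => adm_of_cs (hc2 (e i)) (hs2 (e i))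
  have e0 : ∀ v, (fun y => R0 m (fun y => fderiv ℝ w y v) y) = fun y => R1 m w y v := fun v =>
    funext fun y => (R1_eq_R0_fderiv hm (hw.of_le (by norm_num)) hs y v).symm
  have e1 : ∀ v, R0 m (fun y => fderiv ℝ (fun y => fderiv ℝ w y v) y v) x = R2 m w x v v := fun v => by
    obtain ⟨B1, hA1⟩ := adm_of_cs (hd1 v).continuous (hs1 v)
    rw [← R1_eq_R0_fderiv hm (hd1 v) (hs1 v), ← (R0_hasFDerivAt hm hA1 x).fderiv]
    have := (R1_hasFDerivAt hm hA hc x).clm_apply (hasFDerivAt_const v x)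
    rw [show R0 m (fun y => fderiv ℝ w y v) = fun y => R1 m w y v from e0 v, this.fderiv]
    simp
  have e2 : R0 m (fun y => lap e w y) x = m * R0 m w x - w x := by
    unfold lap
    rw [R0_sum hm _ fun i _ => hb i, ← R2_trace e hm hA hc, trL_apply]
    exact Finset.sum_congr rfl fun i _ => e1 _
  have e3 : R0 m (fun y => m * w y) x = m * R0 m w x := by
    unfold R0 RR cv
    simp only [mul_smul, integral_smul]
    simp only [smul_eq_mul]
    rw [← integral_const_mul]
    congr 1; ext t
    ring
  have hAm : Adm (|m| * B) (fun y => m * w y) := ⟨hA.1.const_mul m, fun y => by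
    rw [abs_mul]; exact mul_le_mul_of_nonneg_left (hA.2 y) (abs_nonneg _)⟩
  have hAl : Adm (∑ i, b i) (fun y => lap e w y) := Adm.sum Finset.univ fun i _ => hb i
  rw [R0_sub hm hAm hAl]
  linarith
end core5


section core6
variable {V : Type*} [NormedAddCommGroup V] [InnerProductSpace ℝ V] [FiniteDimensional ℝ V]
  [MeasurableSpace V] [BorelSpace V]
variable {F : Type*} [NormedAddCommGroup F] [NormedSpace ℝ F] [FiniteDimensional ℝ F]

variable {m B B' c c' : ℝ} {h h' : V → ℝ}

lemma second_nonneg {f : V → ℝ} (hf : ContDiff ℝ 2 f) {x : V} (hx : ∀ y, f x ≤ f y) (v : V) :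
    0 ≤ fderiv ℝ (fun y => fderiv ℝ f y v) x v := by
  by_contra hneg
  push Not at hneg
  set φ : ℝ → ℝ := fun t => f (x + t • v) with hφ
  have hl : ∀ t : ℝ, HasDerivAt (fun t : ℝ => x + t • v) v t := fun t => by
    simpa using ((hasDerivAt_id t).smul_const v).const_add x
  have h1 : ∀ t, HasDerivAt φ (fderiv ℝ f (x + t • v) v) t := fun t =>
    ((hf.differentiable (by norm_num) _).hasFDerivAt).comp_hasDerivAt t (hl t)
  have hd : ContDiff ℝ 1 (fun y => fderiv ℝ f y v) :=
    (hf.fderiv_right (m := 1) (by norm_num)).clm_apply contDiff_const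
  have h2 : HasDerivAt (deriv φ) (fderiv ℝ (fun y => fderiv ℝ f y v) x v) 0 := by
    have e1 : deriv φ = fun t => (fun y => fderiv ℝ f y v) (x + t • v) := funext fun t => (h1 t).deriv
    rw [e1]
    have := ((hd.differentiable (by norm_num) (x + (0:ℝ) • v)).hasFDerivAt).comp_hasDerivAt 0 (hl 0)
    rw [zero_smul, add_zero] at this
    exact this
  have hmin : IsLocalMin φ 0 := Filter.Eventually.of_forall fun t => by simpa [hφ] using hx _
  have hmax : IsLocalMax φ 0 := by
    refine isLocalMax_of_deriv_deriv_neg (by rw [h2.deriv]; exact hneg) hmin.deriv_eq_zero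
      (h1 0).continuousAt
  have hconst : φ =ᶠ[𝓝 0] fun _ => φ 0 := by
    filter_upwards [hmin, hmax] with t a b using le_antisymm b a
  have h3 : deriv φ =ᶠ[𝓝 0] fun _ => 0 := by
    have := hconst.deriv
    simpa using this
  have h4 := h3.deriv_eq
  rw [h2.deriv] at h4
  simp at h4
  linarith

variable {n : ℕ} (e : OrthonormalBasis (Fin n) ℝ V)

lemma fderiv_normsq (x v : V) : HasFDerivAt (fun y : V => ‖y‖ ^ 2) ((2:ℝ) • JJ V x) x := by
  refine ((hasStrictFDerivAt_norm_sq x).hasFDerivAt).congr_fderiv ?_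
  ext y; simp [JJ_apply]

lemma max_principle {w : V → ℝ} (hw : ContDiff ℝ 2 w) {M C : ℝ} (hM : ∀ x, M ≤ w x)
    {b : V → V} (hb : ∀ x, ‖x‖ * ‖b x‖ ≤ C) (hm : 0 < m)
    (H : ∀ x, 0 ≤ -lap e w x + fderiv ℝ w x (b x) + m * w x) (x : V) : 0 ≤ w x := by
  have hC : 0 ≤ C := le_trans (by positivity) (hb 0)
  have key : ∀ ε : ℝ, 0 < ε → -(ε * ((2 * n + 2 * C) / m)) ≤ w x + ε * ‖x‖ ^ 2 := by
    intro ε hε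
    set z : V → ℝ := fun y => w y + ε * ‖y‖ ^ 2 with hz
    have hzC : ContDiff ℝ 2 z := hw.add (contDiff_const.mul (contDiff_norm_sq ℝ))
    have ht : Tendsto z (cocompact V) atTop := by
      refine tendsto_atTop_add_left_of_le _ M hM ?_
      refine Tendsto.const_mul_atTop hε ?_
      exact (tendsto_pow_atTop (by norm_num)).comp (tendsto_norm_cocompact_atTop (E := V))
    obtain ⟨x0, hx0⟩ := hzC.continuous.exists_forall_le ht
    have hn : ∀ y, HasFDerivAt (fun y : V => ε * ‖y‖ ^ 2) (ε • ((2:ℝ) • JJ V y)) y := fun y =>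
      (fderiv_normsq y y).const_mul ε
    have hwd : ∀ y, HasFDerivAt w (fderiv ℝ w y) y := fun y =>
      (hw.differentiable (by norm_num) y).hasFDerivAt
    have hzd : ∀ y, fderiv ℝ z y = fderiv ℝ w y + ε • ((2:ℝ) • JJ V y) := fun y =>
      ((hwd y).add (hn y)).fderiv
    have h0 : fderiv ℝ z x0 = 0 := IsLocalMin.fderiv_eq_zero (Filter.Eventually.of_forall hx0)
    have h1 : fderiv ℝ w x0 (b x0) ≤ 2 * ε * C := by
      rw [hzd] at h0
      have : fderiv ℝ w x0 (b x0) = - (ε * (2 * ⟪x0, b x0⟫)) := by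
        have := congrArg (fun L => L (b x0)) h0
        simp [JJ_apply] at this
        linarith
      rw [this]
      have h3 : -⟪x0, b x0⟫ ≤ C := (neg_le_abs _).trans ((abs_real_inner_le_norm _ _).trans (hb x0))
      nlinarith
    have h2 : -(2 * n * ε) ≤ lap e w x0 := by
      have hdw : ∀ v, DifferentiableAt ℝ (fun y => fderiv ℝ w y v) x0 := fun v =>
        ((hw.fderiv_right (m := 1) (by norm_num)).clm_apply contDiff_const).differentiable
          (by norm_num) x0
      have h3 : ∀ i, -(2 * ε) ≤ fderiv ℝ (fun y => fderiv ℝ w y (e i)) x0 (e i) := fun i => by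
        have h4 := second_nonneg hzC hx0 (e i)
        have h5 : (fun y => fderiv ℝ z y (e i)) = fun y => fderiv ℝ w y (e i) + (ε * 2) * JJ V (e i) y := by
          ext y; rw [hzd]; simp [JJ_apply, real_inner_comm]; ring
        rw [h5] at h4
        have h6 := ((hdw (e i)).hasFDerivAt.add (((JJ V (e i)).hasFDerivAt (x := x0)).const_mul (ε * 2)))
        have h7 : fderiv ℝ (fun y => fderiv ℝ w y (e i) + (ε * 2) * JJ V (e i) y) x0 = _ := h6.fderiv
        rw [h7] at h4
        simp [JJ_apply] at h4
        linarith
      unfold lap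
      calc _ = ∑ i : Fin n, -(2 * ε) := by simp; ring
        _ ≤ _ := Finset.sum_le_sum fun i _ => h3 i
    have h3 := H x0
    have h4 : -(ε * (2 * n + 2 * C)) ≤ m * w x0 := by nlinarith
    have h5 : -(ε * ((2 * n + 2 * C) / m)) ≤ w x0 := by
      have : -(ε * ((2 * n + 2 * C) / m)) = -(ε * (2 * n + 2 * C)) / m := by field_simp
      rw [this, div_le_iff₀ hm]; linarith
    have h6 := hx0 x
    simp only [hz] at h6
    have : 0 ≤ ε * ‖x0‖ ^ 2 := by positivity
    linarith
  have t1 : Tendsto (fun ε : ℝ => w x + ε * ‖x‖ ^ 2) (𝓝[>] 0) (𝓝 (w x + 0 * ‖x‖ ^ 2)) :=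
    (Continuous.tendsto (by fun_prop) 0).mono_left nhdsWithin_le_nhds
  have t2 : Tendsto (fun ε : ℝ => -(ε * ((2 * n + 2 * C) / m))) (𝓝[>] 0) (𝓝 (-(0 * ((2 * n + 2 * C) / m)))) :=
    (Continuous.tendsto (by fun_prop) 0).mono_left nhdsWithin_le_nhds
  have := le_of_tendsto_of_tendsto t2 t1 (eventually_nhdsWithin_of_forall fun ε hε => key ε hε)
  simpa using this

open BoundedContinuousFunction in
lemma lin_solve {b : V → V} (hb : ContDiff ℝ 1 b) (hbs : HasCompactSupport b) {Cb : ℝ}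
    (hCb : ∀ x, ‖b x‖ ≤ Cb) (hm : 0 < m) (hsm : cQ V * WW m (-(1/2)) * Cb ≤ 1 / 2)
    {f : V → ℝ} (hA : Adm B f) (hc : Hol c f) :
    ∃ v : V → ℝ, ContDiff ℝ 2 v ∧ (∃ M, ∀ x, |v x| ≤ M) ∧
      ∀ x, -lap e v x + fderiv ℝ v x (b x) + m * v x = f x := by
  have hCb0 : 0 ≤ Cb := (norm_nonneg _).trans (hCb 0)
  have hq := (cQ_pos (V := V)).le
  have hW := WW_nonneg m (-(1/2))
  set S := tsupport b with hS
  have hSc : IsCompact S := hbs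
  have hadm : ∀ p : V →ᵇ ℝ, Adm ‖p‖ (S.indicator p) := fun p => by
    refine adm_of_support hSc ?_ (fun x => ?_) fun x hx => indicator_of_notMem hx _
    · exact (p.continuous.measurable.indicator hSc.measurableSet).aestronglyMeasurable
    · by_cases hx : x ∈ S
      · rw [indicator_of_mem hx]; exact p.norm_coe_le_norm x
      · rw [indicator_of_notMem hx]; simp
  have hA1 : ∀ p : V →ᵇ ℝ, Adm (B + ‖p‖) (fun y => f y - S.indicator p y) := fun p => hA.sub (hadm p)
  have happ : ∀ {B' : ℝ} {k : V → ℝ} (hk : Adm B' k) (x : V),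
      |R1 m k x (b x)| ≤ B' * (cQ V * WW m (-(1/2)) * Cb) := fun {B' k} hk x => by
    calc |R1 m k x (b x)| ≤ ‖R1 m k x‖ * ‖b x‖ := (R1 m k x).le_opNorm _
      _ ≤ (B' * cQ V * WW m (-(1/2))) * Cb := by
        gcongr
        · exact mul_nonneg (mul_nonneg hk.nonneg hq) hW
        · exact R1_bound hm hk x
        · exact hCb x
      _ = _ := by ring
  let T : (V →ᵇ ℝ) → (V →ᵇ ℝ) := fun p =>
    BoundedContinuousFunction.ofNormedAddCommGroup
      (fun x => R1 m (fun y => f y - S.indicator p y) x (b x))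
      ((R1_continuous hm (hA1 p)).clm_apply hb.continuous) _ (happ (hA1 p))
  have hTa : ∀ p x, T p x = R1 m (fun y => f y - S.indicator p y) x (b x) := fun p x => rfl
  have hT : ContractingWith (1/2) T := by
    refine ⟨by rw [← NNReal.coe_lt_coe]; norm_num, LipschitzWith.of_dist_le_mul fun p q => ?_⟩
    rw [dist_le (by positivity)]
    intro x
    have e1 : T p x - T q x = R1 m (fun y => S.indicator (q - p) y) x (b x) := by
      rw [hTa, hTa, ← ContinuousLinearMap.sub_apply, ← R1_sub hm (hA1 p) (hA1 q)]
      congr 2; ext y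
      by_cases hy : y ∈ S
      · simp [indicator_of_mem hy]
      · simp [indicator_of_notMem hy]
    rw [Real.dist_eq, e1]
    refine (happ (hadm (q - p)) x).trans ?_
    rw [dist_comm, dist_eq_norm]
    have := mul_le_mul_of_nonneg_left hsm (norm_nonneg (q - p))
    simp at this ⊢
    linarith
  obtain ⟨p, hp⟩ : ∃ p, T p = p := ⟨_, hT.fixedPoint_isFixedPt⟩
  have hp1 : ∀ x, p x = R1 m (fun y => f y - S.indicator p y) x (b x) := fun x => by
    rw [← hTa, hp]
  have hp0 : S.indicator p = p := by
    ext x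
    by_cases hx : x ∈ S
    · rw [indicator_of_mem hx]
    · rw [indicator_of_notMem hx, hp1, image_eq_zero_of_notMem_tsupport hx]; simp
  set k : V → ℝ := fun y => f y - p y with hk
  have hkA : Adm (B + ‖p‖) k := by have := hA1 p; rwa [hp0] at this
  rw [hp0] at hp1
  have hexp : ∀ x, p x = ∑ i, ⟪e i, b x⟫ * R1 m k x (e i) := fun x => by
    rw [hp1 x]
    conv_lhs => rw [← e.sum_repr' (b x)]
    rw [map_sum]; simp [hk]
  have hpH : ∃ c, Hol c (fun x => p x) := by
    simp only [hexp]
    refine Hol.sum _ fun i _ => ?_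
    have hbi : ContDiff ℝ 1 (fun x => ⟪e i, b x⟫) := contDiff_const.inner ℝ hb
    have hbis : HasCompactSupport (fun x => ⟪e i, b x⟫) :=
      hbs.comp_left (g := fun z => ⟪e i, z⟫) (by simp)
    obtain ⟨c1, hc1⟩ := hol_of_cs hbi hbis
    refine ⟨_, hc1.mul (R1_hol hm hkA (e i)) (B := Cb) (B' := (B + ‖p‖) * cQ V * WW m (-(1/2)))
      (fun x => ?_) fun x => ?_⟩
    · exact (abs_real_inner_le_norm _ _).trans (by simpa using hCb x)
    · have := (R1 m k x).le_opNorm (e i)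
      simp at this
      exact this.trans (R1_bound hm hkA x)
  obtain ⟨c1, hc1⟩ := hpH
  have hkH : Hol (c + c1) k := hc.sub hc1
  refine ⟨R0 m k, R0_contDiff_two hm hkA hkH, ⟨_, R0_bound hm hkA⟩, fun x => ?_⟩
  rw [R0_lap e hm hkA hkH, R0_fderiv hm hkA, ← hp1 x]
  simp only [hk]; ring
end core6


section core7
variable {V : Type*} [NormedAddCommGroup V] [InnerProductSpace ℝ V] [FiniteDimensional ℝ V]
  [MeasurableSpace V] [BorelSpace V]
variable {F : Type*} [NormedAddCommGroup F] [NormedSpace ℝ F] [FiniteDimensional ℝ F]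

variable {n : ℕ} (e : OrthonormalBasis (Fin n) ℝ V)

lemma fderiv_expand (L : V →L[ℝ] ℝ) (z : V) : L z = ∑ i, ⟪e i, z⟫ * L (e i) := by
  conv_lhs => rw [← e.sum_repr' z]
  rw [map_sum]; simp

lemma lap_congr {f g : V → ℝ} {x : V} (hfg : f =ᶠ[𝓝 x] g) : lap e f x = lap e g x := by
  unfold lap
  refine Finset.sum_congr rfl fun i _ => ?_
  have : (fun y => fderiv ℝ f y (e i)) =ᶠ[𝓝 x] fun y => fderiv ℝ g y (e i) := by
    filter_upwards [hfg.fderiv (𝕜 := ℝ)] with y hy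
    rw [hy]
  rw [this.fderiv_eq]

lemma lap_const (a : ℝ) (x : V) : lap e (fun _ => a) x = 0 := by
  unfold lap; simp

lemma cd_fderiv_apply {f : V → ℝ} {x : V} {k l : WithTop ℕ∞} (hf : ContDiffAt ℝ l f x)
    (hk : k + 1 ≤ l) (v : V) : ContDiffAt ℝ k (fun y => fderiv ℝ f y v) x :=
  (hf.fderiv_right hk).clm_apply contDiffAt_const

lemma lap_sub {f g : V → ℝ} {x : V} (hf : ContDiffAt ℝ 2 f x) (hg : ContDiffAt ℝ 2 g x) :
    lap e (fun y => f y - g y) x = lap e f x - lap e g x := by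
  unfold lap
  rw [← Finset.sum_sub_distrib]
  refine Finset.sum_congr rfl fun i _ => ?_
  have h1 : ∀ᶠ y in 𝓝 x, fderiv ℝ (fun y => f y - g y) y (e i) = fderiv ℝ f y (e i) - fderiv ℝ g y (e i) := by
    filter_upwards [hf.eventually (by simp), hg.eventually (by simp)] with y h1 h2
    rw [fderiv_fun_sub (h1.differentiableAt (by simp)) (h2.differentiableAt (by simp))]
    simp
  have d1 := (cd_fderiv_apply (k := 1) hf (by norm_num) (e i)).differentiableAt (by simp)
  have d2 := (cd_fderiv_apply (k := 1) hg (by norm_num) (e i)).differentiableAt (by simp)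
  rw [Filter.EventuallyEq.fderiv_eq h1, fderiv_fun_sub d1 d2]
  simp

lemma lap_mul {f g : V → ℝ} {x : V} (hf : ContDiffAt ℝ 2 f x) (hg : ContDiffAt ℝ 2 g x) :
    lap e (fun y => f y * g y) x = f x * lap e g x + g x * lap e f x
      + 2 * ∑ i, fderiv ℝ f x (e i) * fderiv ℝ g x (e i) := by
  unfold lap
  rw [Finset.mul_sum, Finset.mul_sum, Finset.mul_sum, ← Finset.sum_add_distrib, ← Finset.sum_add_distrib]
  refine Finset.sum_congr rfl fun i _ => ?_
  have h1 : ∀ᶠ y in 𝓝 x, fderiv ℝ (fun y => f y * g y) y (e i) =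
      f y * fderiv ℝ g y (e i) + g y * fderiv ℝ f y (e i) := by
    filter_upwards [hf.eventually (by simp), hg.eventually (by simp)] with y h1 h2
    rw [fderiv_fun_mul (h1.differentiableAt (by simp)) (h2.differentiableAt (by simp))]
    simp
  have d1 := (cd_fderiv_apply (k := 1) hf (by norm_num) (e i)).differentiableAt (by simp)
  have d2 := (cd_fderiv_apply (k := 1) hg (by norm_num) (e i)).differentiableAt (by simp)
  have f1 := hf.differentiableAt (by simp)
  have g1 := hg.differentiableAt (by simp)
  rw [Filter.EventuallyEq.fderiv_eq h1, fderiv_fun_add (f1.fun_mul d2) (g1.fun_mul d1), fderiv_fun_mul f1 d2,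
    fderiv_fun_mul g1 d1]
  simp
  ring

lemma cd_of_ts {f : V → ℝ} {k : WithTop ℕ∞} (hf : ∀ x ∈ tsupport f, ContDiffAt ℝ k f x) :
    ContDiff ℝ k f := contDiff_iff_contDiffAt.2 fun x => by
  by_cases hx : x ∈ tsupport f
  · exact hf x hx
  · exact (contDiffAt_const (c := (0:ℝ))).congr_of_eventuallyEq (notMem_tsupport_iff_eventuallyEq.1 hx)

def vX (u : V → V) (ζ : V → ℝ) (i : Fin n) (y : V) : ℝ :=
  ζ y * ⟪e i, u y⟫ + 2 * fderiv ℝ ζ y (e i)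

def va (u : V → V) (ζ : V → ℝ) (y : V) : ℝ :=
  ∑ i, fderiv ℝ (vX e u ζ i) y (e i) - lap e ζ y

def vF (u : V → V) (ζ v f : V → ℝ) (y : V) : ℝ := ζ y * (f y + v y) + va e u ζ y * v y

def VRep (u : V → V) (ζ v f : V → ℝ) : Prop :=
  ∀ x, ζ x * v x = R0 1 (vF e u ζ v f) x - ∑ i, R1 1 (fun y => v y * vX e u ζ i y) x (e i)

structure Tst (Ω : Set V) (u : V → V) (ζ : V → ℝ) : Prop where
  cd : ContDiff ℝ 3 ζ
  cs : HasCompactSupport ζ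
  sub : tsupport ζ ⊆ Ω
  cu : ∀ x ∈ Ω, ContDiffAt ℝ 1 u x

variable {Ω : Set V} {u : V → V} {ζ v f : V → ℝ}

lemma fderiv_out {x : V} (hx : x ∉ tsupport ζ) : fderiv ℝ ζ x = 0 := by
  by_contra h0
  exact hx (support_fderiv_subset ℝ h0)

lemma lap_out {x : V} (hx : x ∉ tsupport ζ) : lap e ζ x = 0 := by
  rw [lap_congr e (notMem_tsupport_iff_eventuallyEq.1 hx)]
  exact lap_const e 0 x

lemma vX_out {x : V} (hx : x ∉ tsupport ζ) (i : Fin n) : vX e u ζ i x = 0 := by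
  unfold vX; rw [fderiv_out hx, image_eq_zero_of_notMem_tsupport hx]; simp

lemma vX_ts (i : Fin n) : tsupport (vX e u ζ i) ⊆ tsupport ζ := by
  refine closure_minimal ?_ (isClosed_tsupport _)
  intro x hx
  by_contra h
  exact hx (vX_out e h i)

lemma vX_cs (T : Tst Ω u ζ) (i : Fin n) : HasCompactSupport (vX e u ζ i) :=
  HasCompactSupport.of_support_subset_isCompact T.cs ((subset_tsupport _).trans (vX_ts e i))

lemma vX_cd (T : Tst Ω u ζ) (i : Fin n) : ContDiff ℝ 1 (vX e u ζ i) := by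
  refine cd_of_ts fun x hx => ?_
  have hx' := T.sub (vX_ts e i hx)
  unfold vX
  have h1 := T.cu x hx'
  have h2 := T.cd.contDiffAt (x := x)
  refine ContDiffAt.add (ContDiffAt.mul (h2.of_le (by norm_num)) (contDiffAt_const.inner ℝ h1)) ?_
  exact contDiffAt_const.mul (cd_fderiv_apply h2 (by norm_num) _)

lemma va_out {x : V} (hx : x ∉ tsupport ζ) : va e u ζ x = 0 := by
  unfold va
  rw [lap_out e hx, Finset.sum_eq_zero, sub_zero]
  intro i _
  rw [fderiv_out fun h => hx (vX_ts e i h)]; simp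

lemma lap_cd1 (hζ : ContDiff ℝ 3 ζ) : ContDiff ℝ 1 (lap e ζ) := by
  unfold lap
  refine ContDiff.sum fun i _ => ?_
  have h1 : ContDiff ℝ 2 (fun y => fderiv ℝ ζ y (e i)) :=
    (hζ.fderiv_right (m := 2) (by norm_num)).clm_apply contDiff_const
  exact (h1.fderiv_right (m := 1) (by norm_num)).clm_apply contDiff_const

lemma va_cont (T : Tst Ω u ζ) : Continuous (va e u ζ) := by
  unfold va
  refine Continuous.sub (continuous_finset_sum _ fun i _ => ?_) (lap_cd1 e T.cd).continuous
  exact ((vX_cd e T i).continuous_fderiv (by norm_num)).clm_apply continuous_const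

lemma va_cs (T : Tst Ω u ζ) : HasCompactSupport (va e u ζ) :=
  HasCompactSupport.intro T.cs fun x hx => va_out e hx

lemma vF_out {x : V} (hx : x ∉ tsupport ζ) : vF e u ζ v f x = 0 := by
  unfold vF; rw [va_out e hx, image_eq_zero_of_notMem_tsupport hx]; simp

/-- product of compactly supported function with locally regular one -/
lemma cd_mul_ts {k : WithTop ℕ∞} {X v : V → ℝ} {S : Set V} (hX : ContDiff ℝ k X)
    (hS : tsupport X ⊆ S) (hv : ∀ x ∈ S, ContDiffAt ℝ k v x) : ContDiff ℝ k (fun y => v y * X y) := by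
  refine cd_of_ts fun x hx => ?_
  have hx' : x ∈ tsupport X := tsupport_mul_subset_right hx
  exact (hv x (hS hx')).mul hX.contDiffAt

lemma vXv_deriv (T : Tst Ω u ζ) {x : V} (hv : DifferentiableAt ℝ v x) (i : Fin n) :
    fderiv ℝ (fun y => v y * vX e u ζ i y) x (e i) =
      vX e u ζ i x * fderiv ℝ v x (e i) + v x * fderiv ℝ (vX e u ζ i) x (e i) := by
  rw [fderiv_fun_mul hv ((vX_cd e T i).differentiable (by norm_num) x)]
  simp; ring

lemma vX_sum (L : V →L[ℝ] ℝ) (x : V) : ∑ i, vX e u ζ i x * L (e i) =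
    ζ x * L (u x) + 2 * ∑ i, fderiv ℝ ζ x (e i) * L (e i) := by
  rw [fderiv_expand e L (u x), Finset.mul_sum, Finset.mul_sum, ← Finset.sum_add_distrib]
  refine Finset.sum_congr rfl fun i _ => ?_
  unfold vX; ring

/-- Lemma A -/
lemma rep_classical (T : Tst Ω u ζ) (hv : ∀ x ∈ tsupport ζ, ContDiffAt ℝ 2 v x)
    (hf : ∀ x ∈ tsupport ζ, -lap e v x + fderiv ℝ v x (u x) = f x) : VRep e u ζ v f := by
  intro x
  have hwC : ContDiff ℝ 2 (fun y => ζ y * v y) := by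
    have := cd_mul_ts (T.cd.of_le (by norm_num) : ContDiff ℝ 2 ζ) subset_rfl hv
    simpa only [mul_comm] using this
  have hws : HasCompactSupport (fun y => ζ y * v y) := T.cs.mul_right
  have hX : ∀ i, ContDiff ℝ 1 (fun y => v y * vX e u ζ i y) := fun i =>
    cd_mul_ts (vX_cd e T i) (vX_ts e i) fun x hx => (hv x hx).of_le (by norm_num)
  have hXs : ∀ i, HasCompactSupport (fun y => v y * vX e u ζ i y) := fun i => (vX_cs e T i).mul_left
  have h1 := R0_rep e (one_pos : (0:ℝ) < 1) hwC hws x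
  have hid : vF e u ζ v f = fun y => (1 * (ζ y * v y) - lap e (fun y => ζ y * v y) y) +
      ∑ i, fderiv ℝ (fun y => v y * vX e u ζ i y) y (e i) := by
    ext y
    by_cases hy : y ∈ tsupport ζ
    · rw [lap_mul e (T.cd.contDiffAt.of_le (by norm_num)) (hv y hy)]
      simp_rw [vXv_deriv e T ((hv y hy).differentiableAt (by norm_num))]
      rw [Finset.sum_add_distrib, vX_sum, ← Finset.mul_sum]
      unfold vF va
      rw [← hf y hy]
      ring
    · have hy' : y ∉ tsupport (fun y => ζ y * v y) := fun h => hy (tsupport_mul_subset_left h)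
      rw [vF_out e hy, lap_out e hy', image_eq_zero_of_notMem_tsupport hy]
      rw [Finset.sum_eq_zero]
      · simp
      · intro i _
        rw [fderiv_out fun h => hy (vX_ts e i (tsupport_mul_subset_right h))]; simp
  have hcw : Continuous (fun y => 1 * (ζ y * v y) - lap e (fun y => ζ y * v y) y) := by
    refine (continuous_const.mul hwC.continuous).sub ?_
    unfold lap
    refine continuous_finset_sum _ fun i _ => ?_
    have := (hwC.fderiv_right (m := 1) (by norm_num)).clm_apply (contDiff_const (c := e i))
    exact (this.continuous_fderiv (by norm_num)).clm_apply continuous_const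
  have hsw : HasCompactSupport (fun y => 1 * (ζ y * v y) - lap e (fun y => ζ y * v y) y) :=
    HasCompactSupport.intro T.cs fun y hy => by
      have hy' : y ∉ tsupport (fun y => ζ y * v y) := fun h => hy (tsupport_mul_subset_left h)
      rw [lap_out e hy', image_eq_zero_of_notMem_tsupport hy]; simp
  obtain ⟨B1, hB1⟩ := adm_of_cs hcw hsw
  have hc2 : ∀ i, Continuous (fun y => fderiv ℝ (fun y => v y * vX e u ζ i y) y (e i)) := fun i =>
    ((hX i).continuous_fderiv (by norm_num)).clm_apply continuous_const
  choose b hb using fun i => adm_of_cs (hc2 i) ((hXs i).fderiv_apply (𝕜 := ℝ) (e i))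
  rw [hid, R0_add one_pos hB1 (Adm.sum Finset.univ fun i _ => hb i), ← h1,
    R0_sum one_pos _ fun i _ => hb i]
  simp_rw [fun i => R1_eq_R0_fderiv (one_pos : (0:ℝ) < 1) (hX i) (hXs i) x (e i)]
  simp

lemma vF_adm (T : Tst Ω u ζ) (M : ℝ) : ∃ B, ∀ v f : V → ℝ, AEStronglyMeasurable v volume →
    AEStronglyMeasurable f volume → (∀ x ∈ tsupport ζ, |v x| ≤ M) → (∀ x ∈ tsupport ζ, |f x| ≤ M) →
    Adm B (vF e u ζ v f) ∧ ∀ i, Adm B (fun y => v y * vX e u ζ i y) := by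
  obtain ⟨B0, h0⟩ := T.cs.exists_bound_of_continuous T.cd.continuous
  obtain ⟨B1, h1⟩ := (va_cs e T).exists_bound_of_continuous (va_cont e T)
  choose b hb using fun i => (vX_cs e T i).exists_bound_of_continuous (vX_cd e T i).continuous
  have hb0 : ∀ i, 0 ≤ b i := fun i => (norm_nonneg _).trans (hb i 0)
  have hB0 := (norm_nonneg _).trans (h0 0)
  have hB1 := (norm_nonneg _).trans (h1 0)
  refine ⟨B0 * (|M| + |M|) + B1 * |M| + |M| * ∑ i, b i, fun v f hv hf hvM hfM => ⟨?_, fun i => ?_⟩⟩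
  · refine adm_of_support T.cs ?_ (fun x => ?_) fun x hx => vF_out e hx
    · exact (T.cd.continuous.aestronglyMeasurable.mul (hf.add hv)).add
        ((va_cont e T).aestronglyMeasurable.mul hv)
    · have hs := mul_nonneg (abs_nonneg M) (Finset.sum_nonneg fun i (_ : i ∈ Finset.univ) => hb0 i)
      by_cases hx : x ∈ tsupport ζ
      · unfold vF
        have a1 := (hvM x hx).trans (le_abs_self M)
        have a2 := (hfM x hx).trans (le_abs_self M)
        have a3 : |ζ x * (f x + v x)| ≤ B0 * (|M| + |M|) := by
          rw [abs_mul]; gcongr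
          · exact h0 x
          · exact (abs_add_le _ _).trans (by gcongr)
        have a4 : |va e u ζ x * v x| ≤ B1 * |M| := by
          rw [abs_mul]; gcongr
          exact h1 x
        exact (abs_add_le _ _).trans (by linarith)
      · rw [vF_out e hx, abs_zero]; positivity
  · refine adm_of_support T.cs ?_ (fun x => ?_) fun x hx => by rw [vX_out e hx, mul_zero]
    · exact hv.mul (vX_cd e T i).continuous.aestronglyMeasurable
    · have hs := Finset.single_le_sum (fun i _ => hb0 i) (Finset.mem_univ i)
      have hs' : 0 ≤ ∑ i, b i := (hb0 i).trans hs
      by_cases hx : x ∈ tsupport ζ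
      · have a1 := (hvM x hx).trans (le_abs_self M)
        have : |v x * vX e u ζ i x| ≤ |M| * ∑ i, b i := by
          rw [abs_mul]; gcongr
          exact (hb i x).trans hs
        have : 0 ≤ B0 * (|M| + |M|) + B1 * |M| := by positivity
        linarith
      · rw [vX_out e hx, mul_zero, abs_zero]; positivity

/-- Lemma B -/
lemma rep_limit (T : Tst Ω u ζ) {M : ℝ} {vs fs : ℕ → V → ℝ}
    (hv : ∀ j, AEStronglyMeasurable (vs j) volume) (hf : ∀ j, AEStronglyMeasurable (fs j) volume)
    (hvM : ∀ j, ∀ x ∈ tsupport ζ, |vs j x| ≤ M) (hfM : ∀ j, ∀ x ∈ tsupport ζ, |fs j x| ≤ M)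
    (hvl : ∀ x ∈ tsupport ζ, Tendsto (fun j => vs j x) atTop (𝓝 (v x)))
    (hfl : ∀ x ∈ tsupport ζ, Tendsto (fun j => fs j x) atTop (𝓝 (f x)))
    (hR : ∀ᶠ j in atTop, VRep e u ζ (vs j) (fs j)) : VRep e u ζ v f := by
  intro x
  obtain ⟨B, hB⟩ := vF_adm e T M
  have hA := fun j => hB (vs j) (fs j) (hv j) (hf j) (hvM j) (hfM j)
  have t0 : Tendsto (fun j => R0 1 (vF e u ζ (vs j) (fs j)) x) atTop (𝓝 (R0 1 (vF e u ζ v f) x)) := by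
    refine R0_tendsto one_pos (B := B) T.cs (fun j => (hA j).1.1.aestronglyMeasurable)
      (fun j => (hA j).1.2) (fun j y hy => vF_out e hy) (fun y => ?_) x
    by_cases hy : y ∈ tsupport ζ
    · unfold vF
      exact (((hfl y hy).add (hvl y hy)).const_mul _).add ((hvl y hy).const_mul _)
    · simp only [vF_out e hy]; exact tendsto_const_nhds
  have t1 : ∀ i, Tendsto (fun j => R1 1 (fun y => vs j y * vX e u ζ i y) x (e i)) atTop
      (𝓝 (R1 1 (fun y => v y * vX e u ζ i y) x (e i))) := fun i => by
    have := R1_tendsto one_pos (m := 1) (B := B) (h := fun y => v y * vX e u ζ i y) T.cs (fun j => ((hA j).2 i).1.aestronglyMeasurable)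
      (fun j => ((hA j).2 i).2) (fun j y hy => by rw [vX_out e hy, mul_zero]) (fun y => ?_) x
    · exact ((ContinuousLinearMap.apply ℝ ℝ (e i)).continuous.tendsto _).comp this
    · by_cases hy : y ∈ tsupport ζ
      · exact (hvl y hy).mul_const _
      · simp only [vX_out e hy, mul_zero]; exact tendsto_const_nhds
  have t2 : Tendsto (fun j => ζ x * vs j x) atTop (𝓝 (ζ x * v x)) := by
    by_cases hx : x ∈ tsupport ζ
    · exact (hvl x hx).const_mul _
    · simp only [image_eq_zero_of_notMem_tsupport hx, zero_mul]; exact tendsto_const_nhds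
  refine tendsto_nhds_unique t2 ?_
  refine (t0.sub (tendsto_finsetSum _ fun i _ => t1 i)).congr' ?_
  filter_upwards [hR] with j hj
  exact (hj x).symm

/-- Lemma C -/
lemma rep_hol (T : Tst Ω u ζ) (M : ℝ) : ∃ c, ∀ v f : V → ℝ, AEStronglyMeasurable v volume →
    AEStronglyMeasurable f volume → (∀ x ∈ tsupport ζ, |v x| ≤ M) → (∀ x ∈ tsupport ζ, |f x| ≤ M) →
    VRep e u ζ v f → Hol c (fun x => ζ x * v x) := by
  obtain ⟨B, hB⟩ := vF_adm e T M
  refine ⟨(2 * (B * WW 1 0) + B * cQ V * WW 1 (-(1/2))) + ∑ i : Fin n, B * cQ V * 2 * WW 1 (-(3/4)),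
    fun v f hv hf hvM hfM hR => ?_⟩
  have hA := hB v f hv hf hvM hfM
  have h0 := R0_hol one_pos hA.1
  have h1 : ∀ i, Hol (B * cQ V * 2 * WW 1 (-(3/4))) (fun x => R1 1 (fun y => v y * vX e u ζ i y) x (e i)) :=
    fun i => by simpa using R1_hol one_pos (hA.2 i) (e i)
  have h2 : Hol (∑ i : Fin n, B * cQ V * 2 * WW 1 (-(3/4)))
      (fun x => ∑ i, R1 1 (fun y => v y * vX e u ζ i y) x (e i)) := by
    refine ⟨Finset.sum_nonneg fun i _ => (h1 i).1, fun x y => ?_⟩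
    rw [← Finset.sum_sub_distrib, Finset.sum_mul]
    exact (Finset.abs_sum_le_sum_abs _ _).trans (Finset.sum_le_sum fun i _ => (h1 i).2 x y)
  have := h0.sub h2
  simpa only [hR _] using this
end core7


section core8
variable {V : Type*} [NormedAddCommGroup V] [InnerProductSpace ℝ V] [FiniteDimensional ℝ V]
  [MeasurableSpace V] [BorelSpace V]
variable {F : Type*} [NormedAddCommGroup F] [NormedSpace ℝ F] [FiniteDimensional ℝ F]

variable {n : ℕ} (e : OrthonormalBasis (Fin n) ℝ V)
variable {Ω : Set V} {u : V → V} {ζ v f : V → ℝ}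

open scoped Manifold ContDiff in
lemma cutoff {K : Set V} (hK : IsCompact K) (hΩ : IsOpen Ω) (hKΩ : K ⊆ Ω)
    (cu : ∀ x ∈ Ω, ContDiffAt ℝ 1 u x) :
    ∃ ζ : V → ℝ, Tst Ω u ζ ∧ (∀ x ∈ K, ζ =ᶠ[𝓝 x] fun _ => 1) ∧ ∀ x, |ζ x| ≤ 1 := by
  obtain ⟨L, hL, hKL, hLΩ⟩ := exists_compact_between hK hΩ hKΩ
  obtain ⟨f, h1, h0, hI⟩ := exists_contMDiffMap_one_nhds_of_subset_interior (n := 3) 𝓘(ℝ, V)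
    hK.isClosed hKL
  have hts : tsupport f ⊆ L := closure_minimal (fun x hx => by
    by_contra h; exact hx (h0 x h)) hL.isClosed
  refine ⟨f, ⟨f.contMDiff.contDiff, ?_, hts.trans hLΩ, cu⟩, fun x hx => ?_, fun x => ?_⟩
  · exact HasCompactSupport.of_support_subset_isCompact hL ((subset_tsupport _).trans hts)
  · exact (eventually_nhdsSet_iff_forall.1 h1) x hx
  · rw [abs_le]; constructor <;> linarith [(hI x).1, (hI x).2]

lemma bootstrap (hΩ : IsOpen Ω) (cu : ∀ x ∈ Ω, ContDiffAt ℝ 1 u x) {G : ℝ → ℝ} (hG : ContDiff ℝ 1 G)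
    (hvm : AEStronglyMeasurable v volume) {M : ℝ} (hvM : ∀ x ∈ Ω, |v x| ≤ M)
    (hR : ∀ ζ, Tst Ω u ζ → VRep e u ζ v (fun y => G (v y))) (x : V) (hx : x ∈ Ω) :
    ContDiffAt ℝ 2 v x ∧ -lap e v x + fderiv ℝ v x (u x) = G (v x) := by
  have o1 : (0:ℝ) < 1 := one_pos
  set f : V → ℝ := fun y => G (v y) with hf
  have hfm : AEStronglyMeasurable f volume := hG.continuous.comp_aestronglyMeasurable hvm
  obtain ⟨M1, hM1⟩ := (isCompact_Icc (a := -M) (b := M)).exists_bound_of_continuousOn hG.continuous.continuousOn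
  have hfM : ∀ x ∈ Ω, |f x| ≤ M1 := fun x hx => hM1 _ (abs_le.1 (hvM x hx))
  set N := max M M1
  have hvN : ∀ x ∈ Ω, |v x| ≤ N := fun x hx => (hvM x hx).trans (le_max_left _ _)
  have hfN : ∀ x ∈ Ω, |f x| ≤ N := fun x hx => (hfM x hx).trans (le_max_right _ _)
  have hadm : ∀ ζ, Tst Ω u ζ → ∃ B, Adm B (vF e u ζ v f) ∧ ∀ i, Adm B (fun y => v y * vX e u ζ i y) := by
    intro ζ T
    obtain ⟨B, hB⟩ := vF_adm e T N
    exact ⟨B, hB v f hvm hfm (fun x hx => hvN x (T.sub hx)) fun x hx => hfN x (T.sub hx)⟩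
  -- step 1
  have s1 : ∀ ζ, Tst Ω u ζ → ∃ c, Hol c (fun x => ζ x * v x) := by
    intro ζ T
    obtain ⟨c, hc⟩ := rep_hol e T N
    exact ⟨c, hc v f hvm hfm (fun x hx => hvN x (T.sub hx)) (fun x hx => hfN x (T.sub hx)) (hR ζ T)⟩
  have s1b : ∀ ζ, Tst Ω u ζ → ∃ B, ∀ x, |ζ x * v x| ≤ B := by
    intro ζ T
    obtain ⟨B0, h0⟩ := T.cs.exists_bound_of_continuous T.cd.continuous
    refine ⟨B0 * |N|, fun x => ?_⟩
    have hB0 := (norm_nonneg _).trans (h0 0)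
    by_cases hx : x ∈ tsupport ζ
    · rw [abs_mul]
      exact mul_le_mul (h0 x) ((hvN x (T.sub hx)).trans (le_abs_self N)) (abs_nonneg _) hB0
    · rw [image_eq_zero_of_notMem_tsupport hx]; simp; positivity
  -- step 2
  have s2 : ∀ ζ, Tst Ω u ζ → ContDiff ℝ 1 (fun x => ζ x * v x) := by
    intro ζ T
    obtain ⟨B, hB0, hB1⟩ := hadm ζ T
    obtain ⟨ζ', T', h1, -⟩ := cutoff (u := u) T.cs hΩ T.sub cu
    obtain ⟨c', hc'⟩ := s1 ζ' T'
    obtain ⟨b', hb'⟩ := s1b ζ' T'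
    have hX : ∀ i, ∃ c, Hol c (fun y => v y * vX e u ζ i y) := by
      intro i
      obtain ⟨cX, hcX⟩ := hol_of_cs (vX_cd e T i) (vX_cs e T i)
      obtain ⟨bX, hbX⟩ := (vX_cs e T i).exists_bound_of_continuous (vX_cd e T i).continuous
      have h2 := hc'.mul hcX hb' hbX
      refine ⟨_, (?_ : Hol (b' * cX + c' * bX) _)⟩
      convert h2 using 2 with y
      by_cases hy : y ∈ tsupport ζ
      · rw [(h1 y hy).eq_of_nhds, one_mul]
      · rw [vX_out e hy]; simp
    have heq : (fun x => ζ x * v x) = fun x => R0 1 (vF e u ζ v f) x - ∑ i, R1 1 (fun y => v y * vX e u ζ i y) x (e i) :=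
      funext (hR ζ T)
    rw [heq]
    refine (R0_contDiff_one o1 hB0).sub (ContDiff.sum fun i _ => ?_)
    obtain ⟨c, hc⟩ := hX i
    have h3 := (R0_contDiff_two o1 (hB1 i) hc).fderiv_right (m := 1) (by norm_num)
    rw [R0_fderiv o1 (hB1 i)] at h3
    exact h3.clm_apply contDiff_const
  have hpt : ∀ y ∈ Ω, ∃ ζ, Tst Ω u ζ ∧ ζ =ᶠ[𝓝 y] fun _ => 1 := fun y hy => by
    obtain ⟨ζ, T, h1, -⟩ := cutoff (u := u) (isCompact_singleton (x := y)) hΩ (by simpa using hy) cu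
    exact ⟨ζ, T, h1 y rfl⟩
  have hloc : ∀ {y : V} {ζ : V → ℝ}, ζ =ᶠ[𝓝 y] (fun _ => 1) → (fun x => ζ x * v x) =ᶠ[𝓝 y] v := by
    intro y ζ h1
    filter_upwards [h1] with z hz
    rw [hz, one_mul]
  have v1 : ∀ y ∈ Ω, ContDiffAt ℝ 1 v y := fun y hy => by
    obtain ⟨ζ, T, h1⟩ := hpt y hy
    exact (s2 ζ T).contDiffAt.congr_of_eventuallyEq (hloc h1).symm
  -- step 3
  set H : (V → ℝ) → V → ℝ := fun ζ y => vF e u ζ v f y - ∑ i, fderiv ℝ (fun y => v y * vX e u ζ i y) y (e i) with hH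
  have s3 : ∀ ζ, Tst Ω u ζ → (∃ B, Adm B (H ζ)) ∧ (fun x => ζ x * v x) = R0 1 (H ζ) := by
    intro ζ T
    obtain ⟨B, hB0, hB1⟩ := hadm ζ T
    have hX : ∀ i, ContDiff ℝ 1 (fun y => v y * vX e u ζ i y) := fun i =>
      cd_mul_ts (vX_cd e T i) (vX_ts e i) fun x hx => v1 x (T.sub hx)
    have hXs : ∀ i, HasCompactSupport (fun y => v y * vX e u ζ i y) := fun i => (vX_cs e T i).mul_left
    have hc2 : ∀ i, Continuous (fun y => fderiv ℝ (fun y => v y * vX e u ζ i y) y (e i)) := fun i =>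
      ((hX i).continuous_fderiv (by norm_num)).clm_apply continuous_const
    choose b hb using fun i => adm_of_cs (hc2 i) ((hXs i).fderiv_apply (𝕜 := ℝ) (e i))
    have hsum := Adm.sum Finset.univ fun i _ => hb i
    refine ⟨⟨_, hB0.sub hsum⟩, ?_⟩
    ext x
    rw [hR ζ T x]
    simp only [hH]
    rw [R0_sub o1 hB0 hsum, R0_sum o1 _ fun i _ => hb i]
    congr 1
    exact Finset.sum_congr rfl fun i _ => R1_eq_R0_fderiv o1 (hX i) (hXs i) x (e i)
  have hHe : ∀ ζ, Tst Ω u ζ → ∀ y ∈ tsupport ζ, H ζ y = ζ y * (f y + v y) - v y * lap e ζ y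
      - ∑ i, vX e u ζ i y * fderiv ℝ v y (e i) := by
    intro ζ T y hy
    simp only [hH]
    simp_rw [vXv_deriv e T ((v1 y (T.sub hy)).differentiableAt (by norm_num))]
    rw [Finset.sum_add_distrib, ← Finset.mul_sum]
    unfold vF va
    ring
  have hHo : ∀ ζ, Tst Ω u ζ → ∀ y ∉ tsupport ζ, H ζ y = 0 := by
    intro ζ T y hy
    simp only [hH]
    rw [vF_out e hy, Finset.sum_eq_zero, sub_zero]
    intro i _
    rw [fderiv_out fun h => hy (vX_ts e i (tsupport_mul_subset_right h))]; simp
  -- step 4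
  have s4 : ∀ ζ, Tst Ω u ζ → ∃ c, Hol c (H ζ) := by
    intro ζ T
    obtain ⟨ζ', T', h1, -⟩ := cutoff (u := u) T.cs hΩ T.sub cu
    obtain ⟨⟨B', hB'⟩, heq'⟩ := s3 ζ' T'
    have c0 := s2 ζ' T'
    have k1 : ContDiff ℝ 1 (fun y => ζ y * (G (ζ' y * v y) + ζ' y * v y)) :=
      (T.cd.of_le (by norm_num)).mul ((hG.comp c0).add c0)
    obtain ⟨c1, hc1⟩ := hol_of_cs k1 T.cs.mul_right
    have k2 : ContDiff ℝ 1 (fun y => (ζ' y * v y) * lap e ζ y) := c0.mul (lap_cd1 e T.cd)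
    obtain ⟨c2, hc2⟩ := hol_of_cs k2 (HasCompactSupport.intro T.cs fun y hy => by rw [lap_out e hy, mul_zero])
    have k3 : ∃ c, Hol c (fun y => ∑ i, vX e u ζ i y * R1 1 (H ζ') y (e i)) := by
      refine Hol.sum _ fun i _ => ?_
      obtain ⟨cX, hcX⟩ := hol_of_cs (vX_cd e T i) (vX_cs e T i)
      obtain ⟨bX, hbX⟩ := (vX_cs e T i).exists_bound_of_continuous (vX_cd e T i).continuous
      refine ⟨_, hcX.mul (R1_hol o1 hB' (e i)) hbX (B' := B' * cQ V * WW 1 (-(1/2))) fun y => ?_⟩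
      have := (R1 1 (H ζ') y).le_opNorm (e i)
      simp at this
      exact this.trans (R1_bound o1 hB' y)
    obtain ⟨c3, hc3⟩ := k3
    refine ⟨_, (?_ : Hol (c1 + c2 + c3) _)⟩
    convert (hc1.sub hc2).sub hc3 using 2 with y
    by_cases hy : y ∈ tsupport ζ
    · have e1 : ζ' y = 1 := (h1 y hy).eq_of_nhds
      have e2 : fderiv ℝ v y = R1 1 (H ζ') y := by
        rw [← (hloc (h1 y hy)).fderiv_eq, heq', R0_fderiv o1 hB']
      rw [hHe ζ T y hy, e2, e1, one_mul]
    · rw [hHo ζ T y hy, image_eq_zero_of_notMem_tsupport hy, lap_out e hy]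
      simp [vX_out e hy]
  -- conclusion
  obtain ⟨ζ, T, h1⟩ := hpt x hx
  obtain ⟨⟨B, hB⟩, heq⟩ := s3 ζ T
  obtain ⟨c, hc⟩ := s4 ζ T
  have hev : R0 1 (H ζ) =ᶠ[𝓝 x] v := by rw [← heq]; exact hloc h1
  refine ⟨(R0_contDiff_two o1 hB hc).contDiffAt.congr_of_eventuallyEq hev.symm, ?_⟩
  have hxt : x ∈ tsupport ζ := subset_tsupport _ (by simp [Function.mem_support, h1.eq_of_nhds])
  rw [← lap_congr e hev, R0_lap e o1 hB hc, hHe ζ T x hxt, vX_sum, lap_congr e h1, lap_const, h1.fderiv_eq,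
    h1.eq_of_nhds, hev.eq_of_nhds]
  simp [hf]; ring
end core8


section core9
variable {V : Type*} [NormedAddCommGroup V] [InnerProductSpace ℝ V] [FiniteDimensional ℝ V]
  [MeasurableSpace V] [BorelSpace V]
variable {F : Type*} [NormedAddCommGroup F] [NormedSpace ℝ F] [FiniteDimensional ℝ F]

variable {n : ℕ} (e : OrthonormalBasis (Fin n) ℝ V)
variable {m : ℝ}

def TT (b : V → V) (m : ℝ) (v : V → ℝ) (x : V) : ℝ := -lap e v x + fderiv ℝ v x (b x) + m * v x

lemma TT_sub {b : V → V} {v w : V → ℝ} (hv : ContDiff ℝ 2 v) (hw : ContDiff ℝ 2 w) (x : V) :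
    TT e b m (fun y => v y - w y) x = TT e b m v x - TT e b m w x := by
  unfold TT
  rw [lap_sub e hv.contDiffAt hw.contDiffAt, fderiv_fun_sub (hv.differentiable (by norm_num) x)
    (hw.differentiable (by norm_num) x)]
  simp; ring

lemma cmpr {b : V → V} {C Mv Mw : ℝ} (hb : ∀ x, ‖x‖ * ‖b x‖ ≤ C) (hm : 0 < m) {v w : V → ℝ}
    (hv : ContDiff ℝ 2 v) (hw : ContDiff ℝ 2 w) (hvM : ∀ x, |v x| ≤ Mv) (hwM : ∀ x, |w x| ≤ Mw)
    (H : ∀ x, TT e b m v x ≤ TT e b m w x) (x : V) : v x ≤ w x := by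
  have := max_principle e (w := fun y => w y - v y) (M := -Mw - Mv) (hw.sub hv) (fun x => ?_) hb hm
    (fun x => ?_) x
  · linarith
  · linarith [abs_le.1 (hvM x), abs_le.1 (hwM x)]
  · have := TT_sub e (b := b) (m := m) hw hv x
    unfold TT at this
    rw [this]
    have := H x
    unfold TT at this
    linarith

lemma mono_iter {b : V → V} (hb : ContDiff ℝ 1 b) (hbs : HasCompactSupport b) {Cb : ℝ}
    (hCb : ∀ x, ‖b x‖ ≤ Cb) (hm : 0 < m) (hsm : cQ V * WW m (-(1/2)) * Cb ≤ 1 / 2)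
    {χ : V → ℝ} (hχ : ContDiff ℝ 1 χ) (hχs : HasCompactSupport χ) (hχ0 : ∀ x, 0 ≤ χ x)
    {G : ℝ → ℝ} (hG : ContDiff ℝ 1 G) (hGm : MonotoneOn G (Ici 0)) (hG0 : 0 ≤ G 0)
    {η : V → ℝ} (hη : ContDiff ℝ 2 η) {Mη : ℝ} (hηM : ∀ x, η x ≤ Mη) (hη0 : ∀ x, 0 ≤ η x)
    (hsup : ∀ x, χ x * (m * η x + G (η x)) ≤ TT e b m η x) :
    ∃ v : ℕ → V → ℝ, (∀ j, ContDiff ℝ 2 (v j)) ∧ (∀ j x, 0 ≤ v j x) ∧ (∀ j x, v j x ≤ v (j+1) x) ∧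
      (∀ j x, v j x ≤ η x) ∧ ∀ j x, TT e b m (v (j+1)) x = χ x * (m * v j x + G (v j x)) := by
  obtain ⟨C, hC⟩ : ∃ C, ∀ x, ‖x‖ * ‖b x‖ ≤ C := by
    have h1 : Continuous fun x => ‖x‖ * ‖b x‖ := by have := hb.continuous; fun_prop
    obtain ⟨C, hC⟩ := (hbs.norm.mul_left (f := fun x => ‖x‖)).exists_bound_of_continuous h1
    exact ⟨C, fun x => (le_abs_self _).trans (hC x)⟩
  let P : (V → ℝ) → Prop := fun v => ContDiff ℝ 2 v ∧ (∀ x, 0 ≤ v x) ∧ ∀ x, v x ≤ η x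
  have hηa : ∀ x, |η x| ≤ Mη := fun x => by rw [abs_of_nonneg (hη0 x)]; exact hηM x
  have hstep : ∀ v : {v // P v}, ∃ w : {v // P v}, ∀ x, TT e b m w.1 x = χ x * (m * v.1 x + G (v.1 x)) := by
    rintro ⟨v, hv, hv0, hv1⟩
    have hfC : ContDiff ℝ 1 (fun x => χ x * (m * v x + G (v x))) := by
      have hv' : ContDiff ℝ 1 v := hv.of_le (by norm_num)
      exact hχ.mul ((contDiff_const.mul hv').add (hG.comp hv'))
    have hfs : HasCompactSupport (fun x => χ x * (m * v x + G (v x))) := hχs.mul_right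
    obtain ⟨B, hB⟩ := adm_of_cs hfC.continuous hfs
    obtain ⟨c, hc⟩ := hol_of_cs hfC hfs
    obtain ⟨w, hw, ⟨Mw, hwM⟩, hwe⟩ := lin_solve e hb hbs hCb hm hsm hB hc
    have hpos : ∀ x, 0 ≤ χ x * (m * v x + G (v x)) := fun x => by
      have := hGm (mem_Ici.2 le_rfl) (mem_Ici.2 (hv0 x)) (hv0 x)
      exact mul_nonneg (hχ0 x) (add_nonneg (mul_nonneg hm.le (hv0 x)) (hG0.trans this))
    refine ⟨⟨w, hw, ?_, ?_⟩, hwe⟩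
    · exact max_principle e hw (fun x => (abs_le.1 (hwM x)).1) hC hm fun x => by rw [hwe]; exact hpos x
    · refine cmpr e hC hm hw hη hwM hηa fun x => ?_
      refine le_trans (le_of_eq (hwe x)) (le_trans ?_ (hsup x))
      refine mul_le_mul_of_nonneg_left (add_le_add (mul_le_mul_of_nonneg_left (hv1 x) hm.le) ?_) (hχ0 x)
      exact hGm (mem_Ici.2 (hv0 x)) (mem_Ici.2 (hη0 x)) (hv1 x)
  choose S hS using hstep
  let v0 : {v // P v} := ⟨fun _ => 0, contDiff_const, fun _ => le_rfl, hη0⟩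
  let vv : ℕ → {v // P v} := fun j => Nat.rec v0 (fun _ w => S w) j
  have hvv : ∀ j, vv (j+1) = S (vv j) := fun j => rfl
  have hbd : ∀ j x, |(vv j).1 x| ≤ Mη := fun j x => by
    rw [abs_of_nonneg ((vv j).2.2.1 x)]; exact ((vv j).2.2.2 x).trans (hηM x)
  have hT : ∀ j x, TT e b m (vv (j+1)).1 x = χ x * (m * (vv j).1 x + G ((vv j).1 x)) := fun j x => by
    rw [hvv]; exact hS _ x
  refine ⟨fun j => (vv j).1, fun j => (vv j).2.1, fun j => (vv j).2.2.1, fun j => ?_,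
    fun j => (vv j).2.2.2, hT⟩
  induction j with
  | zero => exact fun x => (vv 1).2.2.1 x
  | succ j ih =>
    refine cmpr e (v := (vv (j+1)).1) (w := (vv (j+2)).1) hC hm (vv (j+1)).2.1 (vv (j+2)).2.1 (hbd (j+1)) (hbd (j+2)) fun x => ?_
    rw [hT j, show TT e b m (vv (j+2)).1 x = _ from hT (j+1) x]
    refine mul_le_mul_of_nonneg_left (add_le_add (mul_le_mul_of_nonneg_left (ih x) hm.le) ?_) (hχ0 x)
    exact hGm (mem_Ici.2 ((vv j).2.2.1 x)) (mem_Ici.2 ((vv (j+1)).2.2.1 x)) (ih x)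

/-- data of barrier -/
structure Bar (Ω : Set V) (u : V → V) (G : ℝ → ℝ) (P : V → ℝ) : Prop where
  op : IsOpen Ω
  bd : Bornology.IsBounded Ω
  cu : ∀ x ∈ Ω, ContDiffAt ℝ 1 u x
  cG : ContDiff ℝ 1 G
  mG : MonotoneOn G (Ici 0)
  zG : 0 ≤ G 0
  cP : Continuous P
  oP : ∀ x, x ∉ Ω → P x = 0
  pP : ∀ x ∈ Ω, 0 < P x
  dP : ∀ x ∈ Ω, ContDiffAt ℝ 2 P x
  sP : ∀ x ∈ Ω, G (P x) ≤ -lap e P x + fderiv ℝ P x (u x)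

variable {e} {Ω : Set V} {u : V → V} {G : ℝ → ℝ} {P : V → ℝ}

lemma Bar.nonneg (h : Bar e Ω u G P) (x : V) : 0 ≤ P x := by
  by_cases hx : x ∈ Ω
  · exact (h.pP x hx).le
  · rw [h.oP x hx]

lemma Bar.mem (h : Bar e Ω u G P) {a : ℝ} (ha : 0 < a) {x : V} (hx : a ≤ P x) : x ∈ Ω := by
  by_contra hn
  rw [h.oP x hn] at hx; linarith

lemma Bar.cpt (h : Bar e Ω u G P) {a : ℝ} (ha : 0 < a) : IsCompact {x | a ≤ P x} :=
  Metric.isCompact_of_isClosed_isBounded (isClosed_le continuous_const h.cP)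
    (h.bd.subset fun x hx => h.mem ha hx)

lemma Bar.out (h : Bar e Ω u G P) {a : ℝ} {x : V} (hx : ¬ a ≤ P x) : ∀ᶠ y in 𝓝 x, P y < a :=
  h.cP.continuousAt.eventually_lt continuousAt_const (not_le.1 hx)

lemma Bar.comp (h : Bar e Ω u G P) {a c : ℝ} (ha : 0 < a) {H : ℝ → ℝ} (hH : ContDiff ℝ 2 H)
    (hc : ∀ s, s < a → H s = c) : ContDiff ℝ 2 (fun x => H (P x)) := by
  refine contDiff_iff_contDiffAt.2 fun x => ?_
  by_cases hx : a ≤ P x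
  · exact hH.contDiffAt.comp x (h.dP x (h.mem ha hx))
  · refine (contDiffAt_const (c := c)).congr_of_eventuallyEq ?_
    filter_upwards [h.out hx] with y hy using hc _ hy

def st (a δ s : ℝ) : ℝ := Real.smoothTransition ((s - a) / δ)
lemma st_cd (a δ : ℝ) : ContDiff ℝ 2 (st a δ) := by
  unfold st
  exact Real.smoothTransition.contDiff.comp ((contDiff_id.sub contDiff_const).div_const δ)
lemma st_zero {a δ s : ℝ} (hδ : 0 < δ) (hs : s ≤ a) : st a δ s = 0 :=
  Real.smoothTransition.zero_of_nonpos (div_nonpos_of_nonpos_of_nonneg (by linarith) hδ.le)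
lemma st_one {a δ s : ℝ} (hδ : 0 < δ) (hs : a + δ ≤ s) : st a δ s = 1 :=
  Real.smoothTransition.one_of_one_le (by rw [le_div_iff₀ hδ]; linarith)
lemma st_nonneg (a δ s : ℝ) : 0 ≤ st a δ s := Real.smoothTransition.nonneg _
lemma st_le_one (a δ s : ℝ) : st a δ s ≤ 1 := Real.smoothTransition.le_one _

lemma delta_problem (h : Bar e Ω u G P) {δ : ℝ} (hδ : 0 < δ) :
    ∃ φ : V → ℝ, AEStronglyMeasurable φ volume ∧ (∀ x, 0 ≤ φ x) ∧ (∀ x, φ x ≤ max δ (P x)) ∧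
      ∀ ζ, Tst Ω u ζ → (∀ x ∈ tsupport ζ, 3 * δ < P x) → VRep e u ζ φ (fun y => G (φ y)) := by
  set η : V → ℝ := fun x => δ + (P x - δ) * st δ δ (P x) with hηd
  set χ₁ : V → ℝ := fun x => st δ δ (P x) with hχ₁
  set χ₂ : V → ℝ := fun x => st (2 * δ) δ (P x) with hχ₂
  set b : V → V := fun x => χ₁ x • u x with hbd
  have hη : ContDiff ℝ 2 η := by
    refine h.comp (a := δ) (c := δ) hδ (H := fun s => δ + (s - δ) * st δ δ s) ?_ fun s hs => ?_
    · exact contDiff_const.add ((contDiff_id.sub contDiff_const).mul (st_cd _ _))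
    · rw [st_zero hδ hs.le]; simp
  have hχ₁C : ContDiff ℝ 2 χ₁ := h.comp hδ (st_cd _ _) (c := 0) fun s hs => st_zero hδ hs.le
  have hχ₂C : ContDiff ℝ 2 χ₂ := h.comp (a := 2 * δ) (by positivity) (st_cd _ _) (c := 0)
    fun s hs => st_zero hδ hs.le
  have hχ₂s : HasCompactSupport χ₂ := HasCompactSupport.intro (h.cpt (a := 2 * δ) (by positivity))
    fun x hx => st_zero hδ (not_le.1 hx).le
  have hbout : ∀ x, ¬ δ ≤ P x → b x = 0 := fun x hx => by
    simp only [hbd, hχ₁]; rw [st_zero hδ (not_le.1 hx).le, zero_smul]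
  have hbC : ContDiff ℝ 1 b := by
    refine contDiff_iff_contDiffAt.2 fun x => ?_
    by_cases hx : δ ≤ P x
    · exact (hχ₁C.contDiffAt.of_le (by norm_num)).smul (h.cu x (h.mem hδ hx))
    · refine (contDiffAt_const (c := 0)).congr_of_eventuallyEq ?_
      filter_upwards [h.out hx] with y hy using hbout y (not_le.2 hy)
  have hbs : HasCompactSupport b := HasCompactSupport.intro (h.cpt hδ) hbout
  obtain ⟨Cb, hCb⟩ := hbs.exists_bound_of_continuous hbC.continuous
  have hPb : ∃ M, ∀ x, P x ≤ M := by
    have : HasCompactSupport P := HasCompactSupport.intro h.bd.isCompact_closure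
      fun x hx => h.oP x fun hx' => hx (subset_closure hx')
    obtain ⟨M, hM⟩ := this.exists_bound_of_continuous h.cP
    exact ⟨M, fun x => (le_abs_self _).trans (hM x)⟩
  obtain ⟨M, hM⟩ := hPb
  have hηmax : ∀ x, η x ≤ max δ (P x) := fun x => by
    simp only [hηd]
    rcases le_total (P x) δ with h1 | h1
    · rw [st_zero hδ h1]; simp
    · have := st_le_one δ δ (P x)
      refine le_trans ?_ (le_max_right _ _)
      nlinarith
  have hηδ : ∀ x, δ ≤ η x := fun x => by
    simp only [hηd]
    rcases le_total (P x) δ with h1 | h1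
    · rw [st_zero hδ h1]; simp
    · have := st_nonneg δ δ (P x)
      nlinarith
  have hηP : ∀ x, 2 * δ ≤ P x → η x = P x := fun x hx => by
    simp only [hηd]; rw [st_one hδ (by linarith)]; ring
  have hA : ∃ A, ∀ x, |(-lap e η x + fderiv ℝ η x (b x))| ≤ A := by
    have hc : Continuous fun x => -lap e η x + fderiv ℝ η x (b x) := by
      refine Continuous.add (Continuous.neg ?_) ?_
      · unfold lap
        refine continuous_finset_sum _ fun i _ => ?_
        have := (hη.fderiv_right (m := 1) (by norm_num)).clm_apply (contDiff_const (c := e i))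
        exact (this.continuous_fderiv (by norm_num)).clm_apply continuous_const
      · exact (hη.continuous_fderiv (by norm_num)).clm_apply hbC.continuous
    refine HasCompactSupport.exists_bound_of_continuous (HasCompactSupport.intro (h.cpt hδ) fun x hx => ?_) hc
    have : η =ᶠ[𝓝 x] fun _ => δ := by
      filter_upwards [h.out hx] with y hy
      simp only [hηd]; rw [st_zero hδ hy.le]; simp
    rw [lap_congr e this, lap_const, this.fderiv_eq]; simp
  obtain ⟨A, hA⟩ := hA
  obtain ⟨m, hm, hmA, hsm⟩ : ∃ m : ℝ, 0 < m ∧ A ≤ m * δ ∧ cQ V * WW m (-(1/2)) * Cb ≤ 1 / 2 := by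
    have t1 : Tendsto (fun m => cQ V * WW m (-(1/2)) * Cb) atTop (𝓝 (cQ V * 0 * Cb)) :=
      (WW_tendsto.const_mul _).mul_const _
    rw [mul_zero, zero_mul] at t1
    obtain ⟨m, h1, h2, h3⟩ := ((t1.eventually (eventually_le_nhds (by norm_num : (0:ℝ) < 1/2))).and
      ((eventually_gt_atTop 0).and (eventually_ge_atTop (A / δ)))).exists
    exact ⟨m, h2, by rwa [div_le_iff₀ hδ] at h3, h1⟩
  have hsup : ∀ x, χ₂ x * (m * η x + G (η x)) ≤ TT e b m η x := by
    intro x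
    unfold TT
    by_cases hx : 2 * δ < P x
    · have hxΩ : x ∈ Ω := h.mem (a := 2 * δ) (by positivity) hx.le
      have hev : η =ᶠ[𝓝 x] P := by
        filter_upwards [continuousAt_const.eventually_lt h.cP.continuousAt hx] with y hy using hηP y hy.le
      have hb1 : b x = u x := by
        simp only [hbd, hχ₁]; rw [st_one hδ (by linarith), one_smul]
      rw [lap_congr e hev, hev.fderiv_eq, hev.eq_of_nhds, hb1]
      have h1 := h.sP x hxΩ
      have h2 := h.mG (mem_Ici.2 le_rfl) (mem_Ici.2 (h.nonneg x)) (h.nonneg x)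
      have h3 : 0 ≤ m * P x + G (P x) := add_nonneg (mul_nonneg hm.le (h.nonneg x)) (h.zG.trans h2)
      have h4 : χ₂ x ≤ 1 := st_le_one _ _ _
      nlinarith
    · have : χ₂ x = 0 := st_zero hδ (not_lt.1 hx)
      rw [this, zero_mul]
      have := (abs_le.1 (hA x)).1
      nlinarith [hηδ x]
  obtain ⟨v, hvC, hv0, hvm, hvη, hvT⟩ := mono_iter e hbC hbs hCb hm hsm (hχ₂C.of_le (by norm_num)) hχ₂s
    (fun x => st_nonneg _ _ _) h.cG h.mG h.zG hη (Mη := max δ M)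
    (fun x => (hηmax x).trans (max_le_max le_rfl (hM x))) (fun x => hδ.le.trans (hηδ x)) hsup
  have hmono : ∀ x, Monotone fun j => v j x := fun x => monotone_nat_of_le_succ fun j => hvm j x
  have hbdd : ∀ x, BddAbove (range fun j => v j x) := fun x => ⟨η x, by rintro _ ⟨j, rfl⟩; exact hvη j x⟩
  set φ : V → ℝ := fun x => ⨆ j, v j x with hφ
  have hlim : ∀ x, Tendsto (fun j => v j x) atTop (𝓝 (φ x)) := fun x =>
    tendsto_atTop_ciSup (hmono x) (hbdd x)
  have hφη : ∀ x, φ x ≤ η x := fun x => ciSup_le fun j => hvη j x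
  refine ⟨φ, ?_, fun x => (hv0 0 x).trans (le_ciSup (hbdd x) 0), fun x => (hφη x).trans (hηmax x), ?_⟩
  · exact aestronglyMeasurable_of_tendsto_ae atTop (fun j => (hvC j).continuous.aestronglyMeasurable)
      (ae_of_all _ hlim)
  · intro ζ T hζ
    set fs : ℕ → V → ℝ := fun j x => G (v j x) + m * (v j x - v (j+1) x) with hfs
    set D := max δ M with hD
    have hvD : ∀ j x, v j x ≤ D := fun j x => (hvη j x).trans ((hηmax x).trans (max_le_max le_rfl (hM x)))
    have hGD : ∀ j x, |G (v j x)| ≤ G D := fun j x => by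
      have h1 := h.mG (mem_Ici.2 le_rfl) (mem_Ici.2 (hv0 j x)) (hv0 j x)
      rw [abs_of_nonneg (h.zG.trans h1)]
      exact h.mG (mem_Ici.2 (hv0 j x)) (mem_Ici.2 ((hv0 j x).trans (hvD j x))) (hvD j x)
    have hD0 : 0 ≤ D := hδ.le.trans (le_max_left _ _)
    have hGD0 : 0 ≤ G D := (abs_nonneg _).trans (hGD 0 0)
    refine rep_limit e T (M := D + (G D + m * D)) (vs := fun j => v (j+1)) (fs := fs) (fun j => (hvC _).continuous.aestronglyMeasurable)
      (fun j => ?_) (fun j x _ => ?_) (fun j x _ => ?_) (fun x _ => (tendsto_add_atTop_iff_nat 1).2 (hlim x)) (fun x _ => ?_)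
      (Filter.Eventually.of_forall fun j => ?_)
    · have h1 := (hvC j).continuous
      have h2 := (hvC (j+1)).continuous
      have h3 := h.cG.continuous
      exact Continuous.aestronglyMeasurable (by fun_prop)
    · rw [abs_of_nonneg (hv0 _ x)]
      have := hvD (j+1) x
      have : 0 ≤ m * D := by positivity
      linarith
    · simp only [hfs]
      have h1 : |m * (v j x - v (j+1) x)| ≤ m * D := by
        rw [abs_mul, abs_of_pos hm]
        refine mul_le_mul_of_nonneg_left ?_ hm.le
        rw [abs_le]; constructor <;> linarith [hv0 j x, hv0 (j+1) x, hvD j x, hvD (j+1) x]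
      exact (abs_add_le _ _).trans (by linarith [hGD j x])
    · have h1 := ((h.cG.continuous.tendsto _).comp (hlim x)).add
        (((hlim x).sub ((tendsto_add_atTop_iff_nat 1).2 (hlim x))).const_mul m)
      simpa using h1
    · refine rep_classical e T (fun x _ => (hvC _).contDiffAt) fun x hx => ?_
      have h1 := hvT j x
      have hx3 := hζ x hx
      have hb1 : b x = u x := by
        simp only [hbd, hχ₁]; rw [st_one hδ (by linarith), one_smul]
      have hc1 : χ₂ x = 1 := st_one hδ (by linarith)
      unfold TT at h1
      rw [hb1, hc1] at h1
      simp only [hfs]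
      linarith
end core9


section core10
variable {V : Type*} [NormedAddCommGroup V] [InnerProductSpace ℝ V] [FiniteDimensional ℝ V]
  [MeasurableSpace V] [BorelSpace V]
variable {F : Type*} [NormedAddCommGroup F] [NormedSpace ℝ F] [FiniteDimensional ℝ F]

variable {n : ℕ} {e : OrthonormalBasis (Fin n) ℝ V}
variable {Ω : Set V} {u : V → V} {G : ℝ → ℝ} {P : V → ℝ}

lemma solve (h : Bar e Ω u G P) : ∃ φ : V → ℝ,
    (∀ x ∈ Ω, ContDiffAt ℝ 2 φ x ∧ -lap e φ x + fderiv ℝ φ x (u x) = G (φ x)) ∧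
    (∀ x, 0 ≤ φ x ∧ φ x ≤ P x) ∧ Continuous φ := by
  set d : ℕ → ℝ := fun k => 1 / ((k:ℝ) + 1) with hd
  have hd0 : ∀ k, 0 < d k := fun k => by simp only [hd]; positivity
  have hd1 : ∀ k, d k ≤ 1 := fun k => by
    simp only [hd]; rw [div_le_one (by positivity)]; linarith [(Nat.cast_nonneg k : (0:ℝ) ≤ k)]
  have hdl : Tendsto d atTop (𝓝 0) := tendsto_one_div_add_atTop_nhds_zero_nat
  choose φ hm h0 hP hR using fun k => delta_problem h (hd0 k)
  obtain ⟨D, hD1, hD⟩ : ∃ D, 1 ≤ D ∧ ∀ x, P x ≤ D := by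
    obtain ⟨C, hC⟩ := (h.bd.isCompact_closure).exists_bound_of_continuousOn h.cP.continuousOn
    refine ⟨max 1 C, le_max_left _ _, fun x => ?_⟩
    by_cases hx : x ∈ Ω
    · exact (le_abs_self _).trans ((hC x (subset_closure hx)).trans (le_max_right _ _))
    · rw [h.oP x hx]; exact zero_le_one.trans (le_max_left _ _)
  have hφD : ∀ k x, φ k x ≤ D := fun k x => (hP k x).trans (max_le ((hd1 k).trans hD1) (hD x))
  have hR' : ∀ ζ, Tst Ω u ζ → ∀ᶠ k in atTop, VRep e u ζ (φ k) (fun y => G (φ k y)) := by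
    intro ζ T
    obtain ⟨a, ha, haP⟩ := IsCompact.exists_forall_le' (a := (0:ℝ)) T.cs h.cP.continuousOn
      (fun x hx => h.pP x (T.sub hx))
    have : ∀ᶠ k in atTop, d k < a / 3 := hdl.eventually (gt_mem_nhds (by positivity))
    filter_upwards [this] with k hk
    exact hR k ζ T fun x hx => by have := haP x hx; linarith
  obtain ⟨M1, hM1⟩ := (isCompact_Icc (a := 0) (b := D)).exists_bound_of_continuousOn h.cG.continuous.continuousOn
  have hGm : ∀ k, AEStronglyMeasurable (fun y => G (φ k y)) volume := fun k =>
    h.cG.continuous.comp_aestronglyMeasurable (hm k)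
  have hG1 : ∀ k x, |G (φ k x)| ≤ max D M1 := fun k x =>
    (hM1 _ ⟨h0 k x, hφD k x⟩).trans (le_max_right _ _)
  have hφ1 : ∀ k x, |φ k x| ≤ max D M1 := fun k x => by
    rw [abs_of_nonneg (h0 k x)]; exact (hφD k x).trans (le_max_left _ _)
  -- extraction
  set q := TopologicalSpace.denseSeq V with hq
  have hcomp : IsCompact (Set.pi univ fun _ : ℕ => Icc (0:ℝ) D) := isCompact_univ_pi fun _ => isCompact_Icc
  obtain ⟨a, -, s, hs, hsl⟩ := hcomp.tendsto_subseq (x := fun k i => φ k (q i))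
    (fun k i _ => ⟨h0 k _, hφD k _⟩)
  have hql : ∀ i, Tendsto (fun k => φ (s k) (q i)) atTop (𝓝 (a i)) := fun i => (tendsto_pi_nhds.1 hsl) i
  have hlim : ∀ x ∈ Ω, ∃ l, Tendsto (fun k => φ (s k) x) atTop (𝓝 l) := by
    intro x hx
    obtain ⟨ζ, T, hζ, -⟩ := cutoff (isCompact_singleton (x := x)) h.op (singleton_subset_iff.2 hx) h.cu
    have hζx := hζ x rfl
    obtain ⟨c, hc⟩ := rep_hol e T (max D M1)
    have hH : ∀ᶠ k in atTop, Hol c (fun x => ζ x * φ (s k) x) := by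
      filter_upwards [hs.tendsto_atTop.eventually (hR' ζ T)] with k hk
      exact hc _ _ (hm _) (hGm _) (fun x _ => hφ1 _ x) (fun x _ => hG1 _ x) hk
    refine cauchySeq_tendsto_of_complete (Metric.cauchySeq_iff.2 fun ε hε => ?_)
    have hev : ∀ᶠ y in 𝓝 x, ζ y = 1 ∧ c * Real.sqrt ‖y - x‖ < ε / 4 := by
      refine hζx.and ?_
      have : ContinuousAt (fun y => c * Real.sqrt ‖y - x‖) x := by fun_prop
      refine this.eventually_lt continuousAt_const ?_
      simp; positivity
    obtain ⟨y, ⟨i, rfl⟩, hy1, hy2⟩ : ∃ y ∈ range q, ζ y = 1 ∧ c * Real.sqrt ‖y - x‖ < ε / 4 := by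
      obtain ⟨y, hy⟩ := (TopologicalSpace.denseRange_denseSeq V).inter_nhds_nonempty hev
      exact ⟨y, hy.1, hy.2⟩
    have hcq := Metric.cauchySeq_iff.1 (hql i).cauchySeq (ε / 4) (by positivity)
    obtain ⟨N1, hN1⟩ := hcq
    obtain ⟨N2, hN2⟩ := eventually_atTop.1 hH
    refine ⟨max N1 N2, fun k hk j hj => ?_⟩
    have e1 := hN1 k ((le_max_left _ _).trans hk) j ((le_max_left _ _).trans hj)
    have e2 := (hN2 k ((le_max_right _ _).trans hk)).2 (q i) x
    have e3 := (hN2 j ((le_max_right _ _).trans hj)).2 (q i) x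
    have hx1 : ζ x = 1 := hζx.self_of_nhds
    simp only [hx1, hy1, one_mul] at e2 e3
    rw [Real.dist_eq] at *
    rw [abs_lt] at *
    rw [abs_le] at e2 e3
    constructor <;> linarith [e1.1, e1.2, e2.1, e2.2, e3.1, e3.2]
  choose! L hL using hlim
  set ψ : V → ℝ := Ω.indicator L with hψ
  have hψt : ∀ x ∈ Ω, Tendsto (fun k => φ (s k) x) atTop (𝓝 (ψ x)) := fun x hx => by
    rw [hψ, indicator_of_mem hx]; exact hL x hx
  have hψm : AEStronglyMeasurable ψ volume := by
    refine aestronglyMeasurable_of_tendsto_ae atTop (f := fun k => Ω.indicator (φ (s k)))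
      (fun k => (hm _).indicator h.op.measurableSet) (Eventually.of_forall fun x => ?_)
    by_cases hx : x ∈ Ω
    · simpa [indicator_of_mem hx] using hψt x hx
    · simp [hψ, indicator_of_notMem hx]
  have hψb : ∀ x, 0 ≤ ψ x ∧ ψ x ≤ P x := by
    intro x
    by_cases hx : x ∈ Ω
    · refine ⟨ge_of_tendsto' (hψt x hx) fun k => h0 _ _, ?_⟩
      have t : Tendsto (fun k => max (d (s k)) (P x)) atTop (𝓝 (max 0 (P x))) :=
        (hdl.comp hs.tendsto_atTop).max tendsto_const_nhds
      rw [max_eq_right (h.nonneg x)] at t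
      exact le_of_tendsto_of_tendsto' (hψt x hx) t fun k => hP _ _
    · rw [h.oP x hx, hψ, indicator_of_notMem hx]; simp
  have key : ∀ x ∈ Ω, ContDiffAt ℝ 2 ψ x ∧ -lap e ψ x + fderiv ℝ ψ x (u x) = G (ψ x) := by
    refine bootstrap e h.op h.cu h.cG hψm (M := D) (fun x _ => ?_) fun ζ T => ?_
    · rw [abs_of_nonneg (hψb x).1]; exact (hψb x).2.trans (hD x)
    · refine rep_limit e T (M := max D M1) (vs := fun k => φ (s k)) (fs := fun k y => G (φ (s k) y))
        (fun j => hm _) (fun j => hGm _) (fun j x _ => hφ1 _ x) (fun j x _ => hG1 _ x)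
        (fun x hx => hψt x (T.sub hx)) (fun x hx => ?_) (hs.tendsto_atTop.eventually (hR' ζ T))
      exact (h.cG.continuous.tendsto _).comp (hψt x (T.sub hx))
  refine ⟨ψ, key, hψb, continuous_iff_continuousAt.2 fun x => ?_⟩
  by_cases hx : x ∈ Ω
  · exact (key x hx).1.continuousAt
  · have hx0 : ψ x = 0 := by rw [hψ, indicator_of_notMem hx]
    have t : Tendsto P (𝓝 x) (𝓝 0) := by have := h.cP.tendsto x; rwa [h.oP x hx] at this
    unfold ContinuousAt
    rw [hx0]
    exact squeeze_zero (fun y => (hψb y).1) (fun y => (hψb y).2) t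

end core10


section core11
variable {V : Type*} [NormedAddCommGroup V] [InnerProductSpace ℝ V] [FiniteDimensional ℝ V]
  [MeasurableSpace V] [BorelSpace V]
variable {F : Type*} [NormedAddCommGroup F] [NormedSpace ℝ F] [FiniteDimensional ℝ F]


lemma Phi_exists {g : ℝ → ℝ} (hg : ContDiff ℝ 2 g) (hg0 : 0 < g 0)
    (hgmono : StrictMonoOn g (Ici 0)) (hgconv : ConvexOn ℝ (Ici 0) g)
    (hgint : IntegrableOn (fun s => 1 / g s) (Ici 0)) {θ : ℝ} (hθ : θ ∈ Ioo (0:ℝ) 1) :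
    ∃ K > 0, ∃ Φ : ℝ → ℝ, ∀ s, 0 < s → 0 < Φ s ∧ Φ s ≤ s ∧ Φ s ≤ K ∧ ContDiffAt ℝ 2 Φ s ∧
      HasDerivAt Φ (θ * g (Φ s) / g s) s ∧
      ∃ q ≤ 0, HasDerivAt (fun t => θ * g (Φ t) / g t) q s := by
  obtain ⟨hθ0, hθ1⟩ := hθ
  have gpos : ∀ s, 0 ≤ s → 0 < g s := fun s hs =>
    hg0.trans_le (hgmono.monotoneOn (mem_Ici.2 le_rfl) (mem_Ici.2 hs) hs)
  set f : ℝ → ℝ := fun s => 1 / g (max s 0) with hf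
  have fpos : ∀ s, 0 < f s := fun s => one_div_pos.2 (gpos _ (le_max_right _ _))
  have fc : Continuous f := by
    refine continuous_const.div (hg.continuous.comp (continuous_id.max continuous_const)) fun s => ?_
    exact (gpos _ (le_max_right _ _)).ne'
  have feq : ∀ s, 0 ≤ s → f s = 1 / g s := fun s hs => by simp only [hf, max_eq_left hs]
  set h : ℝ → ℝ := fun s => ∫ t in (0:ℝ)..s, f t with hh
  have hder : ∀ s, HasDerivAt h (f s) s := fun s =>
    intervalIntegral.integral_hasDerivAt_right (fc.intervalIntegrable _ _)
      fc.aestronglyMeasurable.stronglyMeasurableAtFilter fc.continuousAt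
  have hdiff : Differentiable ℝ h := fun s => (hder s).differentiableAt
  have hderiv : deriv h = f := funext fun s => (hder s).deriv
  have hcont : Continuous h := hdiff.continuous
  have hmono : StrictMono h := strictMono_of_deriv_pos fun s => by rw [hderiv]; exact fpos s
  have h00 : h 0 = 0 := by simp [hh]
  have hC2 : ∀ s, 0 < s → ContDiffAt ℝ 2 h s := by
    have : ContDiffOn ℝ (1 + 1) h (Ioi 0) := by
      rw [contDiffOn_succ_iff_deriv_of_isOpen isOpen_Ioi]
      refine ⟨hdiff.differentiableOn, by simp, ?_⟩
      rw [hderiv]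
      have h1 : ContDiffOn ℝ 1 (fun s => 1 / g s) (Ioi 0) :=
        contDiffOn_const.div (hg.of_le (by norm_num)).contDiffOn fun s hs => (gpos s (le_of_lt hs)).ne'
      exact h1.congr fun s hs => feq s (le_of_lt hs)
    intro s hs
    exact this.contDiffAt (Ioi_mem_nhds hs)
  -- the limit
  have fint : IntegrableOn f (Ioi 0) := by
    refine (hgint.mono_set Ioi_subset_Ici_self).congr_fun (fun s hs => (feq s (le_of_lt hs)).symm) measurableSet_Ioi
  set H : ℝ := ∫ t in Ioi (0:ℝ), f t with hH
  have hlim : Tendsto h atTop (𝓝 H) := intervalIntegral_tendsto_integral_Ioi 0 fint tendsto_id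
  have hleH : ∀ s, h s ≤ H := fun s => hmono.monotone.ge_of_tendsto hlim s
  have Hpos : 0 < H := by
    have := hmono (zero_lt_one); rw [h00] at this; exact this.trans_le (hleH 1)
  obtain ⟨K, hK0, hK⟩ : ∃ K > 0, θ * H < h K := by
    have h1 : ∀ᶠ s in atTop, θ * H < h s := hlim.eventually (lt_mem_nhds (by nlinarith))
    obtain ⟨K, h1, h2⟩ := (h1.and (eventually_gt_atTop 0)).exists
    exact ⟨K, h2, h1⟩
  have hΦ : ∀ s, 0 < s → ∃ p, h p = θ * h s := by
    intro s hs
    have hsp : 0 < h s := by have := hmono hs; rwa [h00] at this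
    obtain ⟨p, -, hp⟩ := intermediate_value_Icc hs.le hcont.continuousOn
      (show θ * h s ∈ Icc (h 0) (h s) by rw [h00]; constructor <;> nlinarith)
    exact ⟨p, hp⟩
  choose! Φ hΦ using hΦ
  have hsp : ∀ s, 0 < s → 0 < h s := fun s hs => by have := hmono hs; rwa [h00] at this
  have Φpos : ∀ s, 0 < s → 0 < Φ s := fun s hs => by
    rw [← hmono.lt_iff_lt, h00, hΦ s hs]; exact mul_pos hθ0 (hsp s hs)
  have Φle : ∀ s, 0 < s → Φ s ≤ s := fun s hs => by
    rw [← hmono.le_iff_le, hΦ s hs]; nlinarith [hsp s hs]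
  have ΦK : ∀ s, 0 < s → Φ s ≤ K := fun s hs => by
    rw [← hmono.le_iff_le, hΦ s hs]; nlinarith [hleH s]
  have ΦC : ∀ s, 0 < s → ContDiffAt ℝ 2 Φ s := by
    intro s hs
    have hcd := hC2 _ (Φpos s hs)
    have hd : HasFDerivAt h ((ContinuousLinearEquiv.unitsEquivAut ℝ (Units.mk0 (f (Φ s)) (fpos _).ne') : ℝ ≃L[ℝ] ℝ) : ℝ →L[ℝ] ℝ) (Φ s) := by
      refine (hder (Φ s)).hasFDerivAt.congr_fderiv ?_
      ext; simp
    have hinv := hcd.to_localInverse hd (by norm_num)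
    set Ψ := hcd.localInverse hd (by norm_num) with hΨ
    have hst := hcd.hasStrictFDerivAt' hd (by norm_num)
    have hr : ∀ᶠ y in 𝓝 (h (Φ s)), h (Ψ y) = y := hst.eventually_right_inverse
    have hin : ContDiffAt ℝ 2 (fun t => θ * h t) s := contDiffAt_const.mul (hC2 s hs)
    have hval : (fun t => θ * h t) s = h (Φ s) := (hΦ s hs).symm
    have hcomp : ContDiffAt ℝ 2 (fun t => Ψ (θ * h t)) s := by
      refine ContDiffAt.comp s ?_ hin
      rw [show θ * h s = h (Φ s) from hval]; exact hinv
    refine hcomp.congr_of_eventuallyEq ?_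
    have hev : ∀ᶠ t in 𝓝 s, h (Ψ (θ * h t)) = θ * h t := by
      have := hin.continuousAt.tendsto
      rw [show θ * h s = h (Φ s) from hval] at this
      exact this.eventually hr
    filter_upwards [hev, lt_mem_nhds hs] with t ht ht0
    exact hmono.injective (by rw [ht, hΦ t ht0])
  have gd : ∀ s, HasDerivAt g (deriv g s) s := fun s => (hg.differentiable (by norm_num) s).hasDerivAt
  have ΦD : ∀ s, 0 < s → HasDerivAt Φ (θ * g (Φ s) / g s) s := by
    intro s hs
    have h1 := ((ΦC s hs).differentiableAt (by norm_num)).hasDerivAt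
    have h2 : HasDerivAt (fun t => h (Φ t)) (f (Φ s) * deriv Φ s) s := (hder (Φ s)).comp s h1
    have h3 : HasDerivAt (fun t => h (Φ t)) (θ * f s) s := by
      refine ((hder s).const_mul θ).congr_of_eventuallyEq ?_
      filter_upwards [lt_mem_nhds hs] with t ht
      exact hΦ t ht
    have h4 := h2.unique h3
    rw [feq _ hs.le, feq _ (Φpos s hs).le] at h4
    have g1 := (gpos _ hs.le).ne'
    have g2 := (gpos _ (Φpos s hs).le).ne'
    have h5 : θ * g (Φ s) / g s = deriv Φ s := by
      rw [div_eq_iff g1]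
      field_simp at h4
      linarith
    rw [h5]; exact h1
  refine ⟨K, hK0, Φ, fun s hs => ⟨Φpos s hs, Φle s hs, ΦK s hs, ΦC s hs, ΦD s hs, ?_⟩⟩
  have g1 := gpos _ hs.le
  have g2 := gpos _ (Φpos s hs).le
  have hD := (((gd (Φ s)).comp s (ΦD s hs)).const_mul θ).div (gd s) g1.ne'
  refine ⟨_, ?_, hD⟩
  have m1 : deriv g (Φ s) ≤ deriv g s :=
    hgconv.monotoneOn_deriv (fun x _ => (gd x).differentiableAt) (mem_Ici.2 (Φpos s hs).le)
      (mem_Ici.2 hs.le) (Φle s hs)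
  have m0 : 0 ≤ deriv g (Φ s) := by
    have := hgmono.monotoneOn.derivWithin_nonneg (x := Φ s)
    rwa [(gd (Φ s)).hasDerivWithinAt.derivWithin
      ((uniqueDiffOn_Ici 0) _ (mem_Ici.2 (Φpos s hs).le))] at this
  refine div_nonpos_of_nonpos_of_nonneg ?_ (by positivity)
  have : θ * (deriv g (Φ s) * (θ * g (Φ s) / g s)) * g s - θ * (g ∘ Φ) s * deriv g s
    = θ * g (Φ s) * (θ * deriv g (Φ s) - deriv g s) := by
    simp only [Function.comp]; field_simp
  rw [this]
  exact mul_nonpos_of_nonneg_of_nonpos (by positivity) (by nlinarith)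

variable {n : ℕ} (e : OrthonormalBasis (Fin n) ℝ V)

lemma lap_comp {φ : V → ℝ} {Φ Φ1 : ℝ → ℝ} {q : ℝ} {x : V} (hφ : ContDiffAt ℝ 2 φ x)
    (h1 : ∀ᶠ t in 𝓝 (φ x), HasDerivAt Φ (Φ1 t) t) (h2 : HasDerivAt Φ1 q (φ x)) :
    lap e (fun y => Φ (φ y)) x = Φ1 (φ x) * lap e φ x + q * ∑ i, (fderiv ℝ φ x (e i)) ^ 2 := by
  have hd : ∀ᶠ y in 𝓝 x, DifferentiableAt ℝ φ y := by
    filter_upwards [hφ.eventually (by simp)] with y hy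
    exact hy.differentiableAt (by norm_num)
  have hev : ∀ᶠ y in 𝓝 x, fderiv ℝ (fun y => Φ (φ y)) y = Φ1 (φ y) • fderiv ℝ φ y := by
    filter_upwards [hd, hφ.continuousAt.eventually h1] with y hy hy1
    exact (hy1.comp_hasFDerivAt y hy.hasFDerivAt).fderiv
  have hdx := hd.self_of_nhds
  unfold lap
  rw [Finset.mul_sum, Finset.mul_sum, ← Finset.sum_add_distrib]
  refine Finset.sum_congr rfl fun i _ => ?_
  have e1 : (fun y => fderiv ℝ (fun y => Φ (φ y)) y (e i)) =ᶠ[𝓝 x]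
      fun y => Φ1 (φ y) * fderiv ℝ φ y (e i) := by
    filter_upwards [hev] with y hy
    rw [hy]; rfl
  have d1 : HasFDerivAt (fun y => Φ1 (φ y)) (q • fderiv ℝ φ x) x :=
    h2.comp_hasFDerivAt x hdx.hasFDerivAt
  have d2 : DifferentiableAt ℝ (fun y => fderiv ℝ φ y (e i)) x := by
    have := (hφ.fderiv_right (m := 1) (by norm_num)).differentiableAt (by norm_num)
    exact this.clm_apply (differentiableAt_const _)
  rw [e1.fderiv_eq, (d1.fun_mul d2.hasFDerivAt).fderiv]
  simp
  ring

end core11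


section fin
variable {n : ℕ}

lemma lap_lapl (φ : EuclideanSpace ℝ (Fin n) → ℝ) (x : EuclideanSpace ℝ (Fin n)) :
    lap (EuclideanSpace.basisFun (Fin n) ℝ) φ x = lapl φ x := by
  simp [lap, lapl, EuclideanSpace.basisFun_apply]

lemma inner_grad (φ : EuclideanSpace ℝ (Fin n) → ℝ) (x w : EuclideanSpace ℝ (Fin n)) :
    ⟪w, gradient φ x⟫ = fderiv ℝ φ x w := by
  rw [real_inner_comm, gradient, InnerProductSpace.toDual_symm_apply]

end fin

end helpers

open Filter Topology

/-- For every `θ ∈ (0,1)` there is `K(θ) > 0`, depending only on `θ`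
and `g` (not on `Ω` or `u`), such that if a positive classical solution exists at some
`λ₁ > 0`, then for every `λ₀ ∈ (0, θ λ₁]` there is a nonnegative classical solution at
`λ₀` bounded above by `K(θ)`. -/
theorem uniform_bound_away_from_threshold (g : ℝ → ℝ)
    (hg : ContDiff ℝ 2 g) (hg0 : 0 < g 0)
    (hgmono : StrictMonoOn g (Ici 0)) (hgconv : ConvexOn ℝ (Ici 0) g)
    (hgint : IntegrableOn (fun s => 1 / g s) (Ici 0))
    (θ : ℝ) (hθ : θ ∈ Ioo (0 : ℝ) 1) :
    ∃ K : ℝ, 0 < K ∧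
      ∀ (n : ℕ) (Ω : Set (EuclideanSpace ℝ (Fin n))),
        IsOpen Ω → IsConnected Ω → Bornology.IsBounded Ω →
        ∀ u : EuclideanSpace ℝ (Fin n) → EuclideanSpace ℝ (Fin n),
          ContDiffOn ℝ 1 u (closure Ω) →
          ∀ lam₁ : ℝ, 0 < lam₁ →
            (∃ φ₁, IsClassicalSol Ω u g lam₁ φ₁ ∧ ∀ x ∈ Ω, 0 < φ₁ x) →
            ∀ lam₀ : ℝ, 0 < lam₀ → lam₀ ≤ θ * lam₁ →
              ∃ φ₀, IsNonnegSol Ω u g lam₀ φ₀ ∧ ∀ x ∈ Ω, φ₀ x ≤ K := by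
  obtain ⟨K, hK0, Φ, hΦ⟩ := Phi_exists hg hg0 hgmono hgconv hgint hθ
  refine ⟨K, hK0, fun n Ω hop _ hbd u hu lam₁ hl1 ⟨φ₁, ⟨hC2, hcl, hpde, hfr⟩, hpos⟩ lam₀ hl0 hle => ?_⟩
  set e := EuclideanSpace.basisFun (Fin n) ℝ with he
  set P : EuclideanSpace ℝ (Fin n) → ℝ := Ω.indicator (fun x => Φ (φ₁ x)) with hP
  have hPin : ∀ x ∈ Ω, P x = Φ (φ₁ x) := fun x hx => by rw [hP, indicator_of_mem hx]
  have hPout : ∀ x, x ∉ Ω → P x = 0 := fun x hx => by rw [hP, indicator_of_notMem hx]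
  have hPev : ∀ x ∈ Ω, P =ᶠ[𝓝 x] fun x => Φ (φ₁ x) := fun x hx => by
    filter_upwards [hop.mem_nhds hx] with y hy using hPin y hy
  have gpos : ∀ s, 0 ≤ s → 0 < g s := fun s hs =>
    hg0.trans_le (hgmono.monotoneOn (mem_Ici.2 le_rfl) (mem_Ici.2 hs) hs)
  have hPC2 : ∀ x ∈ Ω, ContDiffAt ℝ 2 P x := fun x hx =>
    ((hΦ _ (hpos x hx)).2.2.2.1.comp x (hC2 x hx)).congr_of_eventuallyEq (hPev x hx)
  have hPc : Continuous P := by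
    refine continuous_iff_continuousAt.2 fun x => ?_
    by_cases hx : x ∈ Ω
    · exact (hPC2 x hx).continuousAt
    · unfold ContinuousAt
      rw [hPout x hx]
      have t : Tendsto (Ω.indicator φ₁) (𝓝 x) (𝓝 0) := by
        by_cases hxc : x ∈ closure Ω
        · have hxf : x ∈ frontier Ω := by rw [hop.frontier_eq]; exact ⟨hxc, hx⟩
          have h1 : Tendsto φ₁ (𝓝[closure Ω] x) (𝓝 0) := by
            have := hcl x hxc
            unfold ContinuousWithinAt at this
            rwa [hfr x hxf] at this
          have h2 : Tendsto φ₁ (𝓝[Ω] x) (𝓝 0) := h1.mono_left (nhdsWithin_mono _ subset_closure)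
          refine Metric.tendsto_nhds.2 fun ε hε => ?_
          have h3 := eventually_nhdsWithin_iff.1 (Metric.tendsto_nhds.1 h2 ε hε)
          filter_upwards [h3] with y hy
          by_cases hyΩ : y ∈ Ω
          · rw [indicator_of_mem hyΩ]; exact hy hyΩ
          · rw [indicator_of_notMem hyΩ]; simpa using hε
        · have : Ω.indicator φ₁ =ᶠ[𝓝 x] fun _ => 0 := by
            filter_upwards [isClosed_closure.isOpen_compl.mem_nhds hxc] with y hy
            exact indicator_of_notMem (fun h => hy (subset_closure h)) _
          exact tendsto_const_nhds.congr' this.symm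
      refine squeeze_zero (fun y => ?_) (fun y => ?_) t
      · by_cases hy : y ∈ Ω
        · rw [hPin y hy]; exact (hΦ _ (hpos y hy)).1.le
        · rw [hPout y hy]
      · by_cases hy : y ∈ Ω
        · rw [hPin y hy, indicator_of_mem hy]; exact (hΦ _ (hpos y hy)).2.1
        · rw [hPout y hy, indicator_of_notMem hy]
  have hB : Bar e Ω u (fun s => lam₀ * g s) P := by
    refine ⟨hop, hbd, fun x hx => ?_, ?_, ?_, ?_, hPc, hPout, fun x hx => ?_, hPC2, fun x hx => ?_⟩
    · exact hu.contDiffAt (mem_of_superset (hop.mem_nhds hx) subset_closure)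
    · exact contDiff_const.mul (hg.of_le (by norm_num))
    · exact fun a ha b hb hab => mul_le_mul_of_nonneg_left (hgmono.monotoneOn ha hb hab) hl0.le
    · exact (mul_pos hl0 hg0).le
    · rw [hPin x hx]; exact (hΦ _ (hpos x hx)).1
    · have hp := hpos x hx
      obtain ⟨h1, h2, h3, h4, h5, q, hq, h6⟩ := hΦ _ hp
      have ev : ∀ᶠ t in 𝓝 (φ₁ x), HasDerivAt Φ (θ * g (Φ t) / g t) t := by
        filter_upwards [lt_mem_nhds hp] with t ht using (hΦ t ht).2.2.2.2.1
      have hl := lap_comp e (hC2 x hx) ev h6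
      have hfd : fderiv ℝ P x = (θ * g (Φ (φ₁ x)) / g (φ₁ x)) • fderiv ℝ φ₁ x := by
        rw [(hPev x hx).fderiv_eq]
        exact (h5.comp_hasFDerivAt x ((hC2 x hx).differentiableAt (by norm_num)).hasFDerivAt).fderiv
      have hpd := hpde x hx
      rw [inner_grad, ← lap_lapl] at hpd
      change -lap e φ₁ x + _ = _ at hpd
      rw [lap_congr e (hPev x hx), hl, hfd, hPin x hx]
      have hS : 0 ≤ ∑ i, (fderiv ℝ φ₁ x (e i)) ^ 2 := Finset.sum_nonneg fun i _ => sq_nonneg _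
      have hg1 := gpos _ hp.le
      have hg2 := gpos _ h1.le
      have hqS := mul_nonpos_of_nonpos_of_nonneg hq hS
      have hc : θ * g (Φ (φ₁ x)) / g (φ₁ x) * (lam₁ * g (φ₁ x)) = θ * lam₁ * g (Φ (φ₁ x)) := by
        field_simp
      rw [← hpd] at hc
      have hfin : lam₀ * g (Φ (φ₁ x)) ≤ θ * lam₁ * g (Φ (φ₁ x)) := mul_le_mul_of_nonneg_right hle hg2.le
      simp only [ContinuousLinearMap.smul_apply, smul_eq_mul]
      linarith
  obtain ⟨φ, hφ, hφb, hφc⟩ := solve hB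
  refine ⟨φ, ⟨⟨fun x hx => (hφ x hx).1, hφc.continuousOn, fun x hx => ?_, fun x hx => ?_⟩,
    fun x _ => (hφb x).1⟩, fun x hx => ?_⟩
  · rw [inner_grad, ← lap_lapl]; exact (hφ x hx).2
  · rw [hop.frontier_eq] at hx
    have := hφb x
    rw [hPout x hx.2] at this
    exact le_antisymm this.2 this.1
  · refine (hφb x).2.trans ?_
    rw [hPin x hx]; exact (hΦ _ (hpos x hx)).2.2.1
end
end

section
/- Let 0 < λ₀ < λ₁, set ρ = λ₀/λ₁, let h(s) = ∫₀^s ds'/g(s') and Φ(s) = h⁻¹(ρ h(s)), and let φ₁ be a positive classical solution of the explosion problem at parameter λ₁. Then φ̄ = Φ ∘ φ₁ satisfies −Δφ̄(x) + ⟨u(x), ∇φ̄(x)⟩ ≥ λ₀ g(φ̄(x)) for every x ∈ Ω and φ̄ = 0 on ∂Ω; that is, φ̄ is a supersolution of the explosion problem at parameter λ₀. -/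
open Set MeasureTheory
open scoped RealInnerProductSpace

noncomputable section

theorem lapl_comp_aux {n : ℕ} (φ : EuclideanSpace ℝ (Fin n) → ℝ) (x : EuclideanSpace ℝ (Fin n))
    (hφ : ContDiffAt ℝ 2 φ x) (Φ F : ℝ → ℝ) (F' : ℝ)
    (hΦ : ∀ᶠ s in nhds (φ x), HasDerivAt Φ (F s) s) (hF : HasDerivAt F F' (φ x)) :
    lapl (Φ ∘ φ) x = F (φ x) * lapl φ x
      + F' * ∑ i : Fin n, (fderiv ℝ φ x (EuclideanSpace.single i 1)) ^ 2 := by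
  have hd : ∀ᶠ y in nhds x, DifferentiableAt ℝ φ y := by
    have := hφ.eventually (by simp)
    filter_upwards [this] with y hy
    exact hy.differentiableAt (by norm_num)
  have hφx : DifferentiableAt ℝ φ x := hφ.differentiableAt (by norm_num)
  have h1 : ∀ᶠ y in nhds x, fderiv ℝ (Φ ∘ φ) y = F (φ y) • fderiv ℝ φ y := by
    filter_upwards [hd, hφx.continuousAt.eventually hΦ] with y hy1 hy2
    exact (hy2.comp_hasFDerivAt y hy1.hasFDerivAt).fderiv
  have h2 : DifferentiableAt ℝ (fderiv ℝ φ) x :=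
    (hφ.fderiv_right (m := 1) (by norm_num)).differentiableAt (by norm_num)
  unfold lapl
  rw [Finset.mul_sum, Finset.mul_sum, ← Finset.sum_add_distrib]
  refine Finset.sum_congr rfl fun i _ => ?_
  set e : EuclideanSpace ℝ (Fin n) := EuclideanSpace.single i 1
  have h3 : (fun y => fderiv ℝ (Φ ∘ φ) y e) =ᶠ[nhds x] fun y => F (φ y) * fderiv ℝ φ y e := by
    filter_upwards [h1] with y hy
    rw [hy]; simp
  have h4 : DifferentiableAt ℝ (fun y => fderiv ℝ φ y e) x := h2.clm_apply (by fun_prop)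
  have h5 := (hF.comp_hasFDerivAt x hφx.hasFDerivAt).mul h4.hasFDerivAt
  have h6 : fderiv ℝ (fun y => F (φ y) * fderiv ℝ φ y e) x = _ := h5.fderiv
  rw [h3.fderiv_eq, h6]
  simp
  ring

theorem Phi_aux (g : ℝ → ℝ) (hg : ContDiff ℝ 2 g) (hpos : ∀ s, 0 ≤ s → 0 < g s)
    (hgint : IntegrableOn (fun s => 1 / g s) (Ici 0))
    (ρ : ℝ) (hρ0 : 0 < ρ) (hρ1 : ρ < 1)
    (h : ℝ → ℝ) (hdef : ∀ s, h s = ∫ t in (0:ℝ)..s, 1 / g t)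
    (hinv : ℝ → ℝ)
    (hinv_left : ∀ s : ℝ, 0 ≤ s → hinv (h s) = s)
    (hinv_right : ∀ t : ℝ, 0 ≤ t → t < ∫ s in Ici (0:ℝ), 1 / g s →
      h (hinv t) = t ∧ 0 ≤ hinv t)
    (Φ : ℝ → ℝ) (hΦ : ∀ s, Φ s = hinv (ρ * h s)) (s : ℝ) (hs : 0 < s) :
    0 < Φ s ∧ Φ s ≤ s ∧ HasDerivAt Φ (ρ * g (Φ s) / g s) s := by
  have hcont : ContinuousOn (fun t => 1 / g t) (Ici 0) :=
    continuousOn_const.div hg.continuous.continuousOn fun t ht => (hpos t ht).ne'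
  have hint : ∀ a b, 0 ≤ a → 0 ≤ b → IntervalIntegrable (fun t => 1 / g t) volume a b := by
    intro a b ha hb
    apply ContinuousOn.intervalIntegrable
    exact hcont.mono fun t ht => le_trans (le_min ha hb) ht.1
  have hsd : ∀ p, 0 < p → HasStrictDerivAt h (1 / g p) p := by
    intro p hp
    have hfun : h = fun s => ∫ t in (0:ℝ)..s, 1 / g t := funext hdef
    rw [hfun]
    apply intervalIntegral.integral_hasStrictDerivAt_right (hint 0 p le_rfl hp.le)
    · apply StronglyMeasurable.stronglyMeasurableAtFilter
      exact (measurable_const.div hg.continuous.measurable).stronglyMeasurable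
    · exact hcont.continuousAt (Ici_mem_nhds hp)
  have h0 : h 0 = 0 := by rw [hdef]; simp
  have hmono : ∀ a b, 0 ≤ a → a < b → h a < h b := by
    intro a b ha hab
    have : h b - h a = ∫ t in a..b, 1 / g t := by
      rw [hdef, hdef]
      exact intervalIntegral.integral_interval_sub_left (hint _ _ le_rfl (ha.trans hab.le))
        (hint _ _ le_rfl ha)
    have h2 : 0 < ∫ t in a..b, 1 / g t := by
      apply intervalIntegral.intervalIntegral_pos_of_pos_on (hint _ _ ha (ha.trans hab.le)) _ hab
      intro t ht
      exact one_div_pos.2 (hpos t (ha.trans ht.1.le))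
    linarith
  have hle : h s ≤ ∫ t in Ici (0:ℝ), 1 / g t := by
    rw [hdef, intervalIntegral.integral_of_le hs.le]
    apply setIntegral_mono_set hgint
    · filter_upwards [ae_restrict_mem measurableSet_Ici] with t ht
      exact (one_div_pos.2 (hpos t ht)).le
    · exact (show Ioc 0 s ⊆ Ici 0 from fun t ht => ht.1.le).eventuallyLE
  have hs0 : 0 < h s := by rw [← h0]; exact hmono 0 s le_rfl hs
  have hlt : ρ * h s < h s := by nlinarith
  obtain ⟨e1, e2⟩ := hinv_right (ρ * h s) (by positivity) (hlt.trans_le hle)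
  rw [← hΦ] at e1 e2
  have p1 : 0 < Φ s := by
    rcases e2.lt_or_eq with h' | h'
    · exact h'
    · rw [← h', h0] at e1
      have := mul_pos hρ0 hs0
      linarith
  refine ⟨p1, ?_, ?_⟩
  · by_contra! hc
    have := hmono _ _ hs.le hc
    linarith
  · have hi : HasStrictDerivAt hinv (1 / g (Φ s))⁻¹ (h (Φ s)) := by
      apply (hsd _ p1).to_local_left_inverse (one_div_pos.2 (hpos _ e2)).ne'
      filter_upwards [Ici_mem_nhds p1] with t ht using hinv_left t ht
    rw [e1] at hi
    have h3 := hi.hasDerivAt.comp s ((hsd s hs).hasDerivAt.const_mul ρ)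
    have hfun : Φ = hinv ∘ fun s => ρ * h s := funext hΦ
    have h4 : HasDerivAt Φ ((1 / g (Φ s))⁻¹ * (ρ * (1 / g s))) s := by
      rw [← hfun] at h3; exact h3
    convert h4 using 1
    simp; ring

/-- If `φ₁` is a positive classical solution at parameter `λ₁` and
`Φ(s) = h⁻¹((λ₀/λ₁) h(s))` with `h(s) = ∫₀^s ds'/g(s')`, then `φ̄ = Φ ∘ φ₁` is a
supersolution of the explosion problem at parameter `λ₀ < λ₁`:
`-Δφ̄ + ⟨u, ∇φ̄⟩ ≥ λ₀ g(φ̄)` in `Ω` and `φ̄ = 0` on `∂Ω`. -/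
theorem composed_supersolution {n : ℕ} (Ω : Set (EuclideanSpace ℝ (Fin n)))
    (hΩo : IsOpen Ω) (hΩc : IsConnected Ω) (hΩb : Bornology.IsBounded Ω)
    (u : EuclideanSpace ℝ (Fin n) → EuclideanSpace ℝ (Fin n))
    (hu : ContDiffOn ℝ 1 u (closure Ω))
    (g : ℝ → ℝ) (hg : ContDiff ℝ 2 g) (hg0 : 0 < g 0)
    (hgmono : StrictMonoOn g (Ici 0)) (hgconv : ConvexOn ℝ (Ici 0) g)
    (hgint : IntegrableOn (fun s => 1 / g s) (Ici 0))
    (lam₀ lam₁ : ℝ) (hlam₀ : 0 < lam₀) (hlam : lam₀ < lam₁)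
    (h : ℝ → ℝ) (hdef : ∀ s, h s = ∫ t in (0:ℝ)..s, 1 / g t)
    (hinv : ℝ → ℝ)
    (hinv_left : ∀ s : ℝ, 0 ≤ s → hinv (h s) = s)
    (hinv_right : ∀ t : ℝ, 0 ≤ t → t < ∫ s in Ici (0:ℝ), 1 / g s →
      h (hinv t) = t ∧ 0 ≤ hinv t)
    (Φ : ℝ → ℝ) (hΦ : ∀ s, Φ s = hinv (lam₀ / lam₁ * h s))
    (φ₁ : EuclideanSpace ℝ (Fin n) → ℝ)
    (hφ₁ : IsClassicalSol Ω u g lam₁ φ₁) (hφ₁pos : ∀ x ∈ Ω, 0 < φ₁ x) :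
    (∀ x ∈ Ω,
      lam₀ * g ((Φ ∘ φ₁) x) ≤ -lapl (Φ ∘ φ₁) x + ⟪u x, gradient (Φ ∘ φ₁) x⟫) ∧
    (∀ x ∈ frontier Ω, (Φ ∘ φ₁) x = 0) := by
  obtain ⟨hC, -, hE, hB⟩ := hφ₁
  have hl1 : 0 < lam₁ := hlam₀.trans hlam
  have hpos : ∀ s, 0 ≤ s → 0 < g s := fun s hs =>
    hg0.trans_le (hgmono.monotoneOn (mem_Ici.2 le_rfl) hs hs)
  have hρ0 : 0 < lam₀ / lam₁ := div_pos hlam₀ hl1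
  have hρ1 : lam₀ / lam₁ < 1 := (div_lt_one hl1).2 hlam
  set ρ := lam₀ / lam₁ with hρ
  have key := Phi_aux g hg hpos hgint ρ hρ0 hρ1 h hdef hinv hinv_left hinv_right Φ hΦ
  constructor
  · intro x hx
    have hs := hφ₁pos x hx
    obtain ⟨k1, k2, k3⟩ := key _ hs
    have hgd : Differentiable ℝ g := hg.differentiable (by norm_num)
    set s := φ₁ x with hsdef
    have gs := hpos s hs.le
    have gP := hpos (Φ s) k1.le
    have hF : HasDerivAt (fun s => ρ * g (Φ s) / g s)
        ((ρ * (deriv g (Φ s) * (ρ * g (Φ s) / g s)) * g s - ρ * g (Φ s) * deriv g s) / g s ^ 2) s :=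
      (((hgd (Φ s)).hasDerivAt.comp s k3).const_mul ρ).div (hgd s).hasDerivAt gs.ne'
    have hev : ∀ᶠ s in nhds (φ₁ x), HasDerivAt Φ (ρ * g (Φ s) / g s) s := by
      filter_upwards [Ioi_mem_nhds hs] with t ht using (key t ht).2.2
    have hL := lapl_comp_aux φ₁ x (hC x hx) Φ _ _ hev hF
    have hd : DifferentiableAt ℝ φ₁ x := (hC x hx).differentiableAt (by norm_num)
    have hG : ⟪u x, gradient (Φ ∘ φ₁) x⟫ = (ρ * g (Φ s) / g s) * ⟪u x, gradient φ₁ x⟫ := by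
      have : fderiv ℝ (Φ ∘ φ₁) x = (ρ * g (Φ s) / g s) • fderiv ℝ φ₁ x :=
        (k3.comp_hasFDerivAt x hd.hasFDerivAt).fderiv
      unfold gradient
      rw [this, map_smul, inner_smul_right]
    have hdm : deriv g (Φ s) ≤ deriv g s :=
      hgconv.monotoneOn_deriv (fun y _ => hgd y) (mem_Ici.2 k1.le) (mem_Ici.2 hs.le) k2
    have hd0 : 0 ≤ deriv g (Φ s) := by
      have h1 : derivWithin g (Ici 0) (Φ s) = deriv g (Φ s) :=
        derivWithin_of_mem_nhds (Ici_mem_nhds k1)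
      rw [← h1]
      exact hgmono.monotoneOn.derivWithin_nonneg
    have hF' : (ρ * (deriv g (Φ s) * (ρ * g (Φ s) / g s)) * g s - ρ * g (Φ s) * deriv g s) / g s ^ 2
        ≤ 0 := by
      apply div_nonpos_of_nonpos_of_nonneg _ (by positivity)
      have : ρ * (deriv g (Φ s) * (ρ * g (Φ s) / g s)) * g s - ρ * g (Φ s) * deriv g s
          = ρ * g (Φ s) * (ρ * deriv g (Φ s) - deriv g s) := by field_simp
      rw [this]
      apply mul_nonpos_of_nonneg_of_nonpos (by positivity)
      nlinarith
    have hS : 0 ≤ ∑ i : Fin n, (fderiv ℝ φ₁ x (EuclideanSpace.single i 1)) ^ 2 :=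
      Finset.sum_nonneg fun i _ => sq_nonneg _
    have hm := mul_nonpos_of_nonpos_of_nonneg hF' hS
    have hEx := hE x hx
    have hfin : (ρ * g (Φ s) / g s) * (-lapl φ₁ x + ⟪u x, gradient φ₁ x⟫) = lam₀ * g (Φ s) := by
      rw [hEx, ← hsdef, hρ]; field_simp
    rw [hL, hG]
    change lam₀ * g (Φ s) ≤ _
    rw [← hfin]
    simp only [← hsdef]
    linarith
  · intro x hx
    have h0 : h 0 = 0 := by rw [hdef]; simp
    have h1 := hinv_left 0 le_rfl
    rw [h0] at h1
    simp only [Function.comp, hB x hx, hΦ, h0, mul_zero, h1]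
end
end
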